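/- arXiv:1207.0705 — 4 statements merged into one kernel-verified Lean document; each statement's English description precedes it below -/
import Mathlib

section
/- For every finite Erdős–Szekeres set 𝚽 of one-dimensional semialgebraic predicates there exists a constant C > 0 such that for every n ≥ 1, every sequence of real numbers of length at least 2^(2^(C·n)) contains an n-term subsequence on which at least one predicate of 𝚽 holds everywhere. -/
/-- A `k`-ary predicate `Φ` holds everywhere on a sequence `a` of reals if it holds
on every increasing `k`-tuple of terms of `a`. -/
def HoldsEverywhere {k n : ℕ} (Φ : (Fin k → ℝ) → Prop) (a : Fin n → ℝ) : Prop :=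
  ∀ i : Fin k → Fin n, StrictMono i → Φ (fun j => a (i j))

/-- A `k`-ary predicate on ℝ is semialgebraic if it is determined by the sign vector of
finitely many real polynomials. -/
def IsSemialgebraic {k : ℕ} (Φ : (Fin k → ℝ) → Prop) : Prop :=
  ∃ (m : ℕ) (p : Fin m → MvPolynomial (Fin k) ℝ) (S : Set (Fin m → SignType)),
    ∀ x : Fin k → ℝ, Φ x ↔ (fun i => SignType.sign (MvPolynomial.eval x (p i))) ∈ S

/-- A finite family of predicates (of varying arities) is Erdős–Szekeres if every long
sequence contains a long subsequence on which some member holds everywhere. -/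
def IsErdosSzekeres {r : ℕ} (k : Fin r → ℕ) (Φ : ∀ i, (Fin (k i) → ℝ) → Prop) : Prop :=
  ∀ n : ℕ, ∃ N : ℕ, ∀ a : Fin N → ℝ, ∃ φ : Fin n → Fin N, StrictMono φ ∧
    ∃ i, HoldsEverywhere (Φ i) (fun j => a (φ j))

/-!
By pigeonhole we may assume that the terms of the sequence are distinct. Among exponentially many
points on a line one finds a centre `a c` and indices along which the distances to `a c` grow or
decay geometrically: repeatedly keep a tight cluster of the points together with one far extreme
point. Applying this to `a`, and then to the well separated numbers `log |a i - a c|`, costs two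
exponentials and writes the terms that remain as `c ± exp s * exp (u i)`, where the `|u i|` are
large and grow or decay geometrically.

In these coordinates a polynomial is a sum of monomials `exp` of linear forms in the `u i`, with
integer coefficients from a finite set that depends only on the degree. For a tuple from a lacunary
set such a form is governed by its largest variable or by its constant term, so after a finite
colouring one monomial dominates uniformly and the sign of the polynomial is constant. Hence every
predicate is homogeneous on the subsequence. The Erdős–Szekeres property is only needed at one
length, the maximal arity: it yields a predicate that holds at one tuple, hence at all of them.
-/

theorem sign_add_eq_of_abs_lt {x y : ℝ} (h : |y| < |x|) :
    SignType.sign (x + y) = SignType.sign x := by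
  obtain ⟨hy₁, hy₂⟩ := abs_lt.1 h
  rcases abs_cases x with ⟨hx, -⟩ | ⟨hx, hx₀⟩
  · rw [sign_pos (show 0 < x by linarith [abs_nonneg y]), sign_pos (by linarith)]
  · rw [sign_neg hx₀, sign_neg (by linarith)]

theorem sign_sum_eq_of_dominant {ι : Type*} {E : Finset ι} {f : ι → ℝ} {a : ι}
    (ha : a ∈ E) (h0 : f a ≠ 0) (h : ∀ b ∈ E, b ≠ a → E.card * |f b| ≤ |f a|) :
    SignType.sign (∑ b ∈ E, f b) = SignType.sign (f a) := by
  classical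
  have hcard : (0 : ℝ) < E.card := by exact_mod_cast Finset.card_pos.2 ⟨a, ha⟩
  have hrest : |∑ b ∈ E.erase a, f b| < |f a| := by
    refine lt_of_mul_lt_mul_left ?_ hcard.le
    calc E.card * |∑ b ∈ E.erase a, f b|
        ≤ ∑ b ∈ E.erase a, E.card * |f b| := by
          rw [← Finset.mul_sum]
          gcongr
          exact Finset.abs_sum_le_sum_abs _ _
      _ ≤ (E.erase a).card • |f a| := Finset.sum_le_card_nsmul _ _ _ fun b hb =>
          h b (Finset.mem_of_mem_erase hb) (Finset.ne_of_mem_erase hb)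
      _ < E.card * |f a| := by
          rw [nsmul_eq_mul]
          gcongr
          exact Finset.erase_ssubset ha
  rw [← Finset.add_sum_erase E f ha, sign_add_eq_of_abs_lt hrest]

theorem exists_uniformly_dominant {ι X : Type*} {E : Finset ι} (hE : E.Nonempty) {s : Set X}
    (hs : s.Nonempty) {v : ι → X → ℝ} {κ : ℝ} (hκ : 0 < κ)
    (h : (E : Set ι).Pairwise fun a b =>
      (∀ x ∈ s, v b x + κ ≤ v a x) ∨ ∀ x ∈ s, v a x + κ ≤ v b x) :
    ∃ a ∈ E, ∀ b ∈ E, b ≠ a → ∀ x ∈ s, v b x + κ ≤ v a x := by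
  obtain ⟨x₀, hx₀⟩ := hs
  obtain ⟨a, ha, hmax⟩ := E.exists_max_image (v · x₀) hE
  refine ⟨a, ha, fun b hb hba => (h ha hb hba.symm).resolve_right fun hlt => ?_⟩
  linarith [hlt x₀ hx₀, hmax b hb]

theorem forall_le_or_forall_le_neg_of_sign_eq {X : Type*} {s : Set X} {m e : X → ℝ} {κ : ℝ}
    {ε : SignType} (hsign : ∀ x ∈ s, SignType.sign (m x) = ε) (h : ∀ x ∈ s, κ + |e x| ≤ |m x|) :
    (∀ x ∈ s, κ ≤ m x + e x) ∨ ∀ x ∈ s, m x + e x ≤ -κ := by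
  rcases le_total 0 ε with hε | hε
  · refine Or.inl fun x hx => ?_
    have hm : 0 ≤ m x := sign_nonneg_iff.1 (hε.trans_eq (hsign x hx).symm)
    linarith [h x hx, abs_of_nonneg hm, neg_abs_le (e x)]
  · refine Or.inr fun x hx => ?_
    have hm : m x ≤ 0 := sign_nonpos_iff.1 ((hsign x hx).trans_le hε)
    linarith [h x hx, abs_of_nonpos hm, le_abs_self (e x)]

section Lacunary

/-- A set of reals is lacunary with ratio `A` if its elements have absolute value at least `A` and
the absolute values of any two of them differ at least by the factor `A`. -/
structure IsLacunary (A : ℝ) (U : Set ℝ) : Prop where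
  le_abs : ∀ u ∈ U, A ≤ |u|
  ratio : U.Pairwise fun u v => A * |u| ≤ |v| ∨ A * |v| ≤ |u|

/-- The tuples of elements of `U`, indexed by `σ`, whose absolute values increase. -/
def growingTuples (σ : Type*) [Preorder σ] (U : Set ℝ) : Set (σ → ℝ) :=
  {y | (∀ l, y l ∈ U) ∧ StrictMono fun l => |y l|}

theorem IsLacunary.mul_abs_le_abs {A : ℝ} {U : Set ℝ} (hU : IsLacunary A U) (hA : 1 ≤ A) {u v : ℝ}
    (hu : u ∈ U) (hv : v ∈ U) (huv : |u| < |v|) : A * |u| ≤ |v| := by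
  refine (hU.ratio hu hv (by rintro rfl; exact huv.false)).resolve_right fun h => ?_
  nlinarith [abs_nonneg v]

theorem IsLacunary.mono {A B : ℝ} {U : Set ℝ} (hU : IsLacunary B U) (hAB : A ≤ B) :
    IsLacunary A U where
  le_abs u hu := hAB.trans (hU.le_abs u hu)
  ratio _ hu _ hv huv := (hU.ratio hu hv huv).imp
    (mul_le_mul_of_nonneg_right hAB (abs_nonneg _)).trans
    (mul_le_mul_of_nonneg_right hAB (abs_nonneg _)).trans

theorem subsingleton_growingTuples {σ : Type*} [Preorder σ] {U : Set ℝ} (hU : U.Subsingleton) :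
    (growingTuples σ U).Subsingleton := fun _ hy _ hz => funext fun l => hU (hy.1 l) (hz.1 l)

theorem exists_last_ne_zero {σ M : Type*} [Finite σ] [LinearOrder σ] [Zero M] {δ : σ → M}
    (hδ : δ ≠ 0) : ∃ j, δ j ≠ 0 ∧ ∀ l, j < l → δ l = 0 := by
  obtain ⟨j, hj⟩ := (Set.toFinite (Function.support δ)).exists_maximal
    (Function.support_nonempty_iff.2 hδ)
  exact ⟨j, hj.prop, fun l hl => of_not_not fun h => hj.not_gt h hl⟩

variable {σ : Type*} [Fintype σ] [LinearOrder σ]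

theorem mul_abs_sum_mul_sub_le {A d : ℝ} {δ y : σ → ℝ} {j : σ} (hA : 0 ≤ A)
    (hδ : ∀ l, |δ l| ≤ d) (hlast : ∀ l, j < l → δ l = 0) (hy : ∀ l < j, A * |y l| ≤ |y j|) :
    A * |∑ l, δ l * y l - δ j * y j| ≤ Fintype.card σ * d * |y j| := by
  have hd : 0 ≤ d := (abs_nonneg _).trans (hδ j)
  have hterm : ∀ l ∈ Finset.univ.erase j, A * |δ l * y l| ≤ d * |y j| := by
    intro l hl
    rcases (Finset.ne_of_mem_erase hl).lt_or_gt with hlj | hjl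
    · calc A * |δ l * y l| = |δ l| * (A * |y l|) := by rw [abs_mul]; ring
        _ ≤ d * |y j| := by gcongr; exacts [hδ l, hy l hlj]
    · rw [hlast l hjl, zero_mul, abs_zero, mul_zero]
      positivity
  rw [← Finset.add_sum_erase Finset.univ _ (Finset.mem_univ j), add_sub_cancel_left]
  calc A * |∑ l ∈ Finset.univ.erase j, δ l * y l|
      ≤ ∑ l ∈ Finset.univ.erase j, A * |δ l * y l| := by
        rw [← Finset.mul_sum]
        gcongr
        exact Finset.abs_sum_le_sum_abs _ _
    _ ≤ (Finset.univ.erase j).card • (d * |y j|) := Finset.sum_le_card_nsmul _ _ _ hterm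
    _ ≤ Fintype.card σ * d * |y j| := by
        rw [nsmul_eq_mul, ← mul_assoc]
        gcongr
        exact Finset.card_le_univ _

/-- The colour that records the sign of `u` and how `|u|` compares with `|R|`. At the growing tuples
of a lacunary set of one colour, a nonzero linear form with integer coefficients bounded by `d`,
plus the constant `R`, stays `κ`-far from `0` on one side. -/
noncomputable def magnitudeColor (d κ R u : ℝ) : SignType × Prop × Prop :=
  (SignType.sign u, 2 * (|R| + κ) < |u|, (d + 1) * |u| + κ < |R|)

theorem IsLacunary.magnitude_dichotomy {A d κ R : ℝ} {U : Set ℝ} (hU : IsLacunary A U)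
    (hnt : U.Nontrivial) (hA : 2 * d + 4 ≤ A) (hκ : 2 * κ < A)
    (hcol : ∀ u ∈ U, ∀ v ∈ U, magnitudeColor d κ R u = magnitudeColor d κ R v) :
    (∀ u ∈ U, 2 * (|R| + κ) < |u|) ∨ ∀ u ∈ U, (d + 1) * |u| + κ < |R| := by
  simp only [magnitudeColor, Prod.mk.injEq, eq_iff_iff] at hcol
  by_contra! ⟨⟨u, hu, hlarge⟩, ⟨v, hv, hsmall⟩⟩
  have hupper : ∀ w ∈ U, |w| ≤ 2 * (|R| + κ) := fun w hw =>
    not_lt.1 fun h => hlarge.not_gt ((hcol w hw u hu).2.1.1 h)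
  have hlower : ∀ w ∈ U, |R| ≤ (d + 1) * |w| + κ := fun w hw =>
    not_lt.1 fun h => hsmall.not_gt ((hcol w hw v hv).2.2.1 h)
  have hclose : ∀ w ∈ U, ∀ z ∈ U, |z| < A * |w| := by
    intro w hw z hz
    have := mul_le_mul_of_nonneg_right hA (abs_nonneg w)
    linarith [hupper z hz, hlower w hw, hU.le_abs w hw]
  obtain ⟨w, hw, z, hz, hwz⟩ := hnt
  exact (hU.ratio hw hz hwz).elim (hclose w hw z hz).not_ge (hclose z hz w hw).not_ge

theorem IsLacunary.linearForm_dichotomy {A d κ R : ℝ} {U : Set ℝ} (hU : IsLacunary A U)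
    (hnt : U.Nontrivial) {δ : σ → ℤ} (hδ : δ ≠ 0) (hδd : ∀ l, |(δ l : ℝ)| ≤ d) (hκ : 0 < κ)
    (hA : 2 * Fintype.card σ * d + 2 * d + 2 * κ + 4 ≤ A)
    (hcol : ∀ u ∈ U, ∀ v ∈ U, magnitudeColor d κ R u = magnitudeColor d κ R v) :
    (∀ y ∈ growingTuples σ U, κ ≤ R + ∑ l, δ l * y l) ∨
      ∀ y ∈ growingTuples σ U, R + ∑ l, δ l * y l ≤ -κ := by
  obtain ⟨j, hj, hlast⟩ := exists_last_ne_zero hδ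
  have hd : 0 ≤ d := (abs_nonneg _).trans (hδd j)
  have hkd : 0 ≤ Fintype.card σ * d := by positivity
  have hone : 1 ≤ |(δ j : ℝ)| := by exact_mod_cast Int.one_le_abs hj
  have hrest : ∀ y ∈ growingTuples σ U, |∑ l, δ l * y l - δ j * y j| ≤ |y j| / 2 := by
    intro y hy
    have := mul_abs_sum_mul_sub_le (by linarith) hδd (fun l hl => by simp [hlast l hl])
      fun l hl => hU.mul_abs_le_abs (by linarith) (hy.1 l) (hy.1 j) (hy.2 hl)
    have hbig : Fintype.card σ * d * |y j| ≤ A * (|y j| / 2) := by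
      nlinarith [abs_nonneg (y j)]
    exact le_of_mul_le_mul_left (this.trans hbig) (by linarith)
  have hlead : ∀ y : σ → ℝ, |y j| ≤ |δ j * y j| ∧ |δ j * y j| ≤ d * |y j| := fun y => by
    rw [abs_mul]
    exact ⟨le_mul_of_one_le_left (abs_nonneg _) hone, by gcongr; exact hδd j⟩
  obtain ⟨u₀, hu₀⟩ := hnt.nonempty
  rcases hU.magnitude_dichotomy hnt (by linarith) (by linarith) hcol with hlarge | hsmall
  · have hsign : ∀ y ∈ growingTuples σ U,
        SignType.sign (δ j * y j) = SignType.sign (δ j : ℝ) * SignType.sign u₀ := fun y hy => by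
      have : SignType.sign (y j) = SignType.sign u₀ :=
        congrArg Prod.fst (hcol (y j) (hy.1 j) u₀ hu₀)
      rw [sign_mul, this]
    have := forall_le_or_forall_le_neg_of_sign_eq (κ := κ)
      (e := fun y : σ → ℝ => R + (∑ l, (δ l : ℝ) * y l - δ j * y j)) hsign
      fun y hy => by
        linarith [hrest y hy, (hlead y).1, hlarge _ (hy.1 j),
          abs_add_le R (∑ l, δ l * y l - δ j * y j)]
    simpa only [add_left_comm _ R, add_sub_cancel] using this
  · refine forall_le_or_forall_le_neg_of_sign_eq (m := fun _ => R) (fun _ _ => rfl)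
      fun y hy => ?_
    have := abs_add_le (∑ l, δ l * y l - δ j * y j) (δ j * y j)
    rw [sub_add_cancel] at this
    linarith [hrest y hy, (hlead y).2, hsmall _ (hy.1 j), abs_nonneg (y j)]

end Lacunary

section Polynomial

open MvPolynomial

universe u

variable {σ : Type u}

theorem totalDegree_bind₁_le {τ R : Type*} [CommSemiring R] {f : σ → MvPolynomial τ R}
    (hf : ∀ i, (f i).totalDegree ≤ 1) (p : MvPolynomial σ R) :
    (bind₁ f p).totalDegree ≤ p.totalDegree := by
  rw [bind₁, aeval_def, eval₂_eq]
  refine totalDegree_finsetSum_le fun m hm => ?_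
  calc (algebraMap R _ (p.coeff m) * ∏ i ∈ m.support, f i ^ m i).totalDegree
      ≤ 0 + ∑ i ∈ m.support, (f i ^ m i).totalDegree :=
        (totalDegree_mul _ _).trans
          (add_le_add (totalDegree_C _).le (totalDegree_finsetProd _ _))
    _ ≤ ∑ i ∈ m.support, m i := by
        rw [zero_add]
        gcongr with i
        exact (totalDegree_pow _ _).trans (mul_le_of_le_one_right' (hf i))
    _ ≤ p.totalDegree := le_totalDegree hm

theorem eval_exp_eq_sum [Fintype σ] (p : MvPolynomial σ ℝ) (y : σ → ℝ) :
    eval (fun l => Real.exp (y l)) p =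
      ∑ m ∈ p.support, p.coeff m * Real.exp (∑ l, m l * y l) := by
  simp only [eval_eq', ← Real.exp_nat_mul, Real.exp_sum]

/-- The logarithm of the absolute value of the monomial `m` of `p` at the point `exp y`. When
`p.coeff m = 0` it is a junk value. -/
noncomputable def logTerm [Fintype σ] (p : MvPolynomial σ ℝ) (m : σ →₀ ℕ) (y : σ → ℝ) : ℝ :=
  Real.log |p.coeff m| + ∑ l, m l * y l

theorem exp_logTerm [Fintype σ] {p : MvPolynomial σ ℝ} {m : σ →₀ ℕ} (hm : m ∈ p.support)
    (y : σ → ℝ) :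
    Real.exp (logTerm p m y) = |p.coeff m * Real.exp (∑ l, m l * y l)| := by
  rw [logTerm, Real.exp_add, Real.exp_log (abs_pos.2 (mem_support_iff.1 hm)), abs_mul,
    Real.abs_exp]

theorem logTerm_sub_logTerm [Fintype σ] (p : MvPolynomial σ ℝ) (m m' : σ →₀ ℕ) (y : σ → ℝ) :
    logTerm p m y - logTerm p m' y =
      Real.log |p.coeff m| - Real.log |p.coeff m'| + ∑ l, ((m l - m' l : ℤ) : ℝ) * y l := by
  simp only [logTerm, Int.cast_sub, Int.cast_natCast, sub_mul, Finset.sum_sub_distrib]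
  ring

theorem exists_sign_eval_exp_eq [Fintype σ] {p : MvPolynomial σ ℝ} {κ : ℝ}
    {s : Set (σ → ℝ)} (hκ : p.support.card < κ)
    (h : (p.support : Set (σ →₀ ℕ)).Pairwise fun m m' =>
      (∀ y ∈ s, logTerm p m' y + κ ≤ logTerm p m y) ∨
        ∀ y ∈ s, logTerm p m y + κ ≤ logTerm p m' y) :
    ∃ ε, ∀ y ∈ s, SignType.sign (eval (fun l => Real.exp (y l)) p) = ε := by
  rcases p.support.eq_empty_or_nonempty with hp | hp
  · exact ⟨0, fun y _ => by rw [eval_exp_eq_sum, hp, Finset.sum_empty, sign_zero]⟩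
  rcases s.eq_empty_or_nonempty with rfl | hs
  · exact ⟨0, by simp⟩
  obtain ⟨m, hm, hdom⟩ := exists_uniformly_dominant hp hs ((Nat.cast_nonneg _).trans_lt hκ) h
  refine ⟨SignType.sign (p.coeff m), fun y hy => ?_⟩
  have hterm : ∀ m' ∈ p.support, m' ≠ m → p.support.card *
      |p.coeff m' * Real.exp (∑ l, m' l * y l)| ≤ |p.coeff m * Real.exp (∑ l, m l * y l)| := by
    intro m' hm' hne
    calc _ ≤ Real.exp κ * |p.coeff m' * Real.exp (∑ l, m' l * y l)| := by
          gcongr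
          linarith [Real.add_one_le_exp κ]
      _ = Real.exp (logTerm p m' y + κ) := by
          rw [Real.exp_add, exp_logTerm hm', mul_comm]
      _ ≤ Real.exp (logTerm p m y) := Real.exp_le_exp.2 (hdom m' hm' hne y hy)
      _ = _ := exp_logTerm hm y
  rw [eval_exp_eq_sum, sign_sum_eq_of_dominant hm
    (mul_ne_zero (mem_support_iff.1 hm) (Real.exp_ne_zero _)) hterm, sign_mul,
    sign_pos (Real.exp_pos _), mul_one]

theorem exists_coloring_sign_eval_exp [Finite σ] [LinearOrder σ] (E : Finset (σ →₀ ℕ)) :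
    ∃ A : ℝ, ∀ p : MvPolynomial σ ℝ, p.support ⊆ E →
      ∃ χ : ℝ → E × E → SignType × Prop × Prop, ∀ U, IsLacunary A U →
        (∀ u ∈ U, ∀ v ∈ U, χ u = χ v) →
        ∃ ε, ∀ y ∈ growingTuples σ U,
          SignType.sign (eval (fun l => Real.exp (y l)) p) = ε := by
  cases nonempty_fintype σ
  let κ : ℝ := E.card + 1
  let D : ℕ := E.sup fun m => m.degree
  let d : ℝ := D
  refine ⟨2 * Fintype.card σ * d + 2 * d + 2 * κ + 4, fun p hpE => ?_⟩
  let R (m m' : σ →₀ ℕ) : ℝ := Real.log |p.coeff m| - Real.log |p.coeff m'|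
  refine ⟨fun u e => magnitudeColor d κ (R e.1 e.2) u, fun U hU hχ => ?_⟩
  rcases U.subsingleton_or_nontrivial with hsub | hnt
  · rcases (subsingleton_growingTuples (σ := σ) hsub).eq_empty_or_singleton with h | ⟨y, h⟩ <;>
      simp [h]
  have hcard : (p.support.card : ℝ) < κ :=
    (Nat.cast_le.2 (Finset.card_le_card hpE)).trans_lt (lt_add_one _)
  refine exists_sign_eval_exp_eq hcard fun m hm m' hm' hne => ?_
  have hle : ∀ n ∈ p.support, ∀ l, n l ≤ D := fun n hn l =>
    (Finsupp.le_degree l n).trans (Finset.le_sup (f := fun m : σ →₀ ℕ => m.degree) (hpE hn))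
  have hδ : (fun l => (m l - m' l : ℤ)) ≠ 0 := fun h => hne <| Finsupp.ext fun l => by
    simpa [sub_eq_zero] using congrFun h l
  have hδd : ∀ l, |((m l - m' l : ℤ) : ℝ)| ≤ d := fun l => by
    have h₁ := hle m hm l
    have h₂ := hle m' hm' l
    have : |(m l - m' l : ℤ)| ≤ D := abs_le.2 ⟨by omega, by omega⟩
    simpa only [d, ← Int.cast_abs, Int.cast_natCast] using (Int.cast_le (R := ℝ)).2 this
  have := hU.linearForm_dichotomy hnt hδ hδd (by positivity) le_rfl
    fun u hu v hv => congrFun (hχ u hu v hv) (⟨m, hpE hm⟩, ⟨m', hpE hm'⟩)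
  simp only [R, ← logTerm_sub_logTerm] at this
  exact this.imp (fun h y hy => by linarith [h y hy]) (fun h y hy => by linarith [h y hy])

theorem exists_coloring_sign_eval_affine_exp [Finite σ] [LinearOrder σ] (p : MvPolynomial σ ℝ) :
    ∃ (A : ℝ) (Γ : Type u) (_ : Finite Γ), ∀ c μ : ℝ, ∃ χ : ℝ → Γ, ∀ U, IsLacunary A U →
      (∀ u ∈ U, ∀ v ∈ U, χ u = χ v) →
      ∃ ε, ∀ y ∈ growingTuples σ U,
        SignType.sign (eval (fun l => c + μ * Real.exp (y l)) p) = ε := by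
  let E : Finset (σ →₀ ℕ) := (Finsupp.finite_of_degree_le (σ := σ) p.totalDegree).toFinset
  obtain ⟨A, hA⟩ := exists_coloring_sign_eval_exp E
  refine ⟨A, E × E → SignType × Prop × Prop, inferInstance, fun c μ => ?_⟩
  let f : σ → MvPolynomial σ ℝ := fun l => C c + C μ * X l
  have hf : ∀ l, (f l).totalDegree ≤ 1 := fun l =>
    (totalDegree_add _ _).trans (max_le (by simp) ((totalDegree_mul _ _).trans (by simp)))
  have hsupp : (bind₁ f p).support ⊆ E := fun m hm =>
    (Set.Finite.mem_toFinset _).2 <|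
      (le_totalDegree hm).trans (totalDegree_bind₁_le hf p)
  obtain ⟨χ, hχ⟩ := hA (bind₁ f p) hsupp
  have heval (z : σ → ℝ) : eval z (bind₁ f p) = eval (fun l => c + μ * z l) p := by
    rw [eval, eval₂Hom_bind₁]
    simp [f]
  exact ⟨χ, fun U hU hmono => by simpa only [heval] using hχ U hU hmono⟩

end Polynomial

section Pigeonhole

variable {ι : Type*}

theorem exists_monochromatic_subset {Γ : Type*} [Finite Γ] {T : Finset ι} {n : ℕ} (f : ι → Γ)
    (hn : Nat.card Γ * n < T.card) :
    ∃ Q ⊆ T, n < Q.card ∧ ∀ i ∈ Q, ∀ j ∈ Q, f i = f j := by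
  classical
  cases nonempty_fintype Γ
  obtain ⟨γ, -, hγ⟩ := Finset.exists_lt_card_fiber_of_mul_lt_card_of_maps_to (s := T) (f := f)
    (fun i _ => Finset.mem_univ (f i)) (by rwa [Finset.card_univ, ← Nat.card_eq_fintype_card])
  exact ⟨_, Finset.filter_subset _ _, hγ, fun i hi j hj =>
    (Finset.mem_filter.1 hi).2.trans (Finset.mem_filter.1 hj).2.symm⟩

theorem exists_subset_constant_or_injOn {α : Type*} (a : ι → α) {n M : ℕ} (hn : 1 ≤ n)
    {S : Finset ι} (hS : n * M ≤ S.card) :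
    (∃ v, ∃ T ⊆ S, n ≤ T.card ∧ ∀ i ∈ T, a i = v) ∨
      ∃ T ⊆ S, M ≤ T.card ∧ Set.InjOn a T := by
  classical
  by_cases! h : ∃ v, n ≤ (S.filter (a · = v)).card
  · obtain ⟨v, hv⟩ := h
    exact Or.inl ⟨v, _, Finset.filter_subset _ _, hv, fun i hi => (Finset.mem_filter.1 hi).2⟩
  · obtain ⟨T, hTS, hinj, himage⟩ := Finset.exists_subset_injOn_image_eq_of_surjOn S (S.image a)
      (f := a) (by simp [Set.SurjOn])
    refine Or.inr ⟨T, hTS, ?_, hinj⟩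
    rw [← Finset.card_image_of_injOn hinj, himage]
    exact le_of_mul_le_mul_left
      (hS.trans (Finset.card_le_mul_card_image S n fun v _ => (h v).le)) hn

end Pigeonhole

section Chain

universe u

variable {ι : Type*}

/-- The function `t` grows by a factor of at least `A` between any two indices of `T` related by
`r`; the relations of interest are `<` (growth) and `>` (decay). -/
def GeometricOn (r : ι → ι → Prop) (A : ℝ) (t : ι → ℝ) (T : Set ι) : Prop :=
  ∀ i ∈ T, ∀ j ∈ T, r i j → A * t i ≤ t j

theorem GeometricOn.insert {r : ι → ι → Prop} {A : ℝ} {t : ι → ℝ} {T : Set ι} {x : ι}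
    (hT : GeometricOn r A t T) (hle : ∀ i ∈ T, A * t i ≤ t x) (hx : ¬ r x x)
    (hr : ∀ i ∈ T, ¬ r x i) : GeometricOn r A t (insert x T) := by
  rintro i (rfl | hi) j (rfl | hj) hij
  exacts [(hx hij).elim, (hr j hj hij).elim, hle i hi, hT i hi j hj hij]

theorem GeometricOn.lt {r : ι → ι → Prop} {A : ℝ} {t : ι → ℝ} {T : Set ι}
    (hT : GeometricOn r A t T) (hA : 1 < A) (ht : ∀ i ∈ T, 0 < t i) {i j : ι} (hi : i ∈ T)
    (hj : j ∈ T) (hij : r i j) : t i < t j :=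
  (lt_mul_of_one_lt_left (ht i hi) hA).trans_le (hT i hi j hj hij)

theorem exists_subset_abs_sub_le {S : Finset ι} {t : ι → ℝ} {v δ : ℝ} {W n : ℕ} (hδ : 0 < δ)
    (ht : ∀ i ∈ S, t i ∈ Set.Icc v (v + W * δ)) (hn : (W + 1) * n ≤ S.card) :
    ∃ Q ⊆ S, n ≤ Q.card ∧ ∀ i ∈ Q, ∀ j ∈ Q, |t i - t j| ≤ δ := by
  have hbin : ∀ i ∈ S, ⌊(t i - v) / δ⌋ ∈ Finset.Icc (0 : ℤ) W := fun i hi => by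
    rw [Finset.mem_Icc, Int.floor_nonneg, Int.floor_le_iff, div_lt_iff₀ hδ]
    have := ht i hi
    exact ⟨div_nonneg (sub_nonneg.2 this.1) hδ.le, by push_cast; linarith [this.2]⟩
  obtain ⟨b, -, hb⟩ := Finset.exists_le_card_fiber_of_mul_le_card_of_maps_to (n := n) hbin
    ⟨0, by simp⟩ (by simpa using hn)
  refine ⟨_, Finset.filter_subset _ _, hb, fun i hi j hj => ?_⟩
  have := Int.abs_sub_lt_one_of_floor_eq_floor
    ((Finset.mem_filter.1 hi).2.trans (Finset.mem_filter.1 hj).2.symm)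
  rw [← sub_div, sub_sub_sub_cancel_right, abs_div, abs_of_pos hδ, div_lt_one hδ] at this
  exact this.le

theorem exists_far_point_and_cluster (A : ℝ) :
    ∃ K : ℕ, ∀ {ι : Type u} (S : Finset ι) (t : ι → ℝ) (n : ℕ), Set.InjOn t S → 1 < S.card →
      K * n ≤ S.card → ∃ x ∈ S, ∃ Q ⊆ S, x ∉ Q ∧ n ≤ Q.card ∧
        ∀ c ∈ Q, ∀ q ∈ Q, A * |t q - t c| ≤ |t x - t c| := by
  obtain ⟨W, hW⟩ := exists_nat_gt (2 * |A| + 2)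
  refine ⟨W + 1, fun {ι} S t n ht hS hn => ?_⟩
  have hne : S.Nonempty := Finset.card_pos.1 (by omega)
  obtain ⟨lo, hlo, hmin⟩ := S.exists_min_image t hne
  obtain ⟨hi, hhi, hmax⟩ := S.exists_max_image t hne
  have hlt : t lo < t hi := by
    obtain ⟨i, hi', j, hj, hij⟩ := Finset.one_lt_card.1 hS
    by_contra! h
    exact hij (ht hi' hj (by linarith [hmin i hi', hmin j hj, hmax i hi', hmax j hj]))
  have hWpos : (0 : ℝ) < W := by linarith [abs_nonneg A]
  set δ : ℝ := (t hi - t lo) / W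
  have hδ : 0 < δ := div_pos (sub_pos.2 hlt) hWpos
  have hWδ : t hi = t lo + W * δ := by rw [mul_div_cancel₀ _ hWpos.ne']; ring
  obtain ⟨Q, hQS, hQn, hQ⟩ := exists_subset_abs_sub_le hδ
    (fun i hi => ⟨hmin i hi, hWδ ▸ hmax i hi⟩) hn
  obtain ⟨x, hx, hfar⟩ : ∃ x ∈ S, ∀ c ∈ Q, (|A| + 1) * δ - δ < |t x - t c| := by
    rcases Q.eq_empty_or_nonempty with rfl | ⟨q, hq⟩
    · exact ⟨lo, hlo, by simp⟩
    have hspread : (|A| + 1) * δ < |t hi - t q| ∨ (|A| + 1) * δ < |t lo - t q| := by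
      by_contra! h
      nlinarith [le_abs_self (t hi - t q), neg_abs_le (t lo - t q)]
    exact hspread.elim
      (fun h => ⟨hi, hhi, fun c hc => by linarith [abs_sub_le (t hi) (t c) (t q), hQ c hc q hq]⟩)
      (fun h => ⟨lo, hlo, fun c hc => by linarith [abs_sub_le (t lo) (t c) (t q), hQ c hc q hq]⟩)
  refine ⟨x, hx, Q, hQS, fun hxQ => ?_, hQn, fun c hc q hq => ?_⟩
  · have := hfar x hxQ
    rw [sub_self, abs_zero] at this
    nlinarith [abs_nonneg A]
  · calc A * |t q - t c| ≤ |A| * δ := by gcongr; exacts [le_abs_self A, hQ q hq c hc]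
      _ = (|A| + 1) * δ - δ := by ring
      _ ≤ |t x - t c| := (hfar c hc).le

variable [LinearOrder ι]

theorem exists_subset_one_sided {Q : Finset ι} {x : ι} {n : ℕ} (hx : x ∉ Q)
    (hn : 2 * n ≤ Q.card) :
    ∃ Q' ⊆ Q, n ≤ Q'.card ∧ ((∀ q ∈ Q', x < q) ∨ ∀ q ∈ Q', q < x) := by
  have hcard := Q.card_filter_add_card_filter_not (x < ·)
  rcases le_or_gt n (Q.filter (x < ·)).card with h | h
  · exact ⟨_, Q.filter_subset _, h, Or.inl fun q hq => (Finset.mem_filter.1 hq).2⟩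
  · refine ⟨Q.filter (¬ x < ·), Q.filter_subset _, by omega, Or.inr fun q hq => ?_⟩
    obtain ⟨hqQ, hxq⟩ := Finset.mem_filter.1 hq
    exact (not_lt.1 hxq).lt_of_ne fun h => hx (h ▸ hqQ)

/-- `S` contains an index `c` and two sets of indices, of total size at least `M`, along which the
distances to `t c` grow, respectively decay, geometrically with ratio `A`. -/
def HasGeometricPair (A : ℝ) (t : ι → ℝ) (S : Finset ι) (M : ℕ) : Prop :=
  ∃ c ∈ S, ∃ T₁ ⊆ S, ∃ T₂ ⊆ S, c ∉ T₁ ∧ c ∉ T₂ ∧ M ≤ T₁.card + T₂.card ∧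
    GeometricOn (· < ·) A (fun i => |t i - t c|) T₁ ∧
    GeometricOn (· > ·) A (fun i => |t i - t c|) T₂

theorem HasGeometricPair.extend {A : ℝ} {t : ι → ℝ} {S Q : Finset ι} {M : ℕ} {x : ι}
    (hQ : HasGeometricPair A t Q M) (hQS : Q ⊆ S) (hxS : x ∈ S) (hxQ : x ∉ Q)
    (hfar : ∀ c ∈ Q, ∀ q ∈ Q, A * |t q - t c| ≤ |t x - t c|)
    (hside : (∀ q ∈ Q, x < q) ∨ ∀ q ∈ Q, q < x) : HasGeometricPair A t S (M + 1) := by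
  obtain ⟨c, hc, T₁, hT₁, T₂, hT₂, hcT₁, hcT₂, hcard, h₁, h₂⟩ := hQ
  have hcx : c ≠ x := fun h => hxQ (h ▸ hc)
  rcases hside with hlt | hgt
  · refine ⟨c, hQS hc, T₁, hT₁.trans hQS, insert x T₂, Finset.insert_subset hxS (hT₂.trans hQS),
      hcT₁, by simp [hcx, hcT₂], ?_, h₁, ?_⟩
    · rw [Finset.card_insert_of_notMem fun h => hxQ (hT₂ h)]
      omega
    · rw [Finset.coe_insert]
      exact h₂.insert (fun q hq => hfar c hc q (hT₂ hq)) (lt_irrefl x)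
        fun q hq => (hlt q (hT₂ hq)).not_gt
  · refine ⟨c, hQS hc, insert x T₁, Finset.insert_subset hxS (hT₁.trans hQS), T₂, hT₂.trans hQS,
      by simp [hcx, hcT₁], hcT₂, ?_, ?_, h₂⟩
    · rw [Finset.card_insert_of_notMem fun h => hxQ (hT₁ h)]
      omega
    · rw [Finset.coe_insert]
      exact h₁.insert (fun q hq => hfar c hc q (hT₁ hq)) (lt_irrefl x)
        fun q hq => (hgt q (hT₁ hq)).not_gt

theorem exists_hasGeometricPair (A : ℝ) :
    ∃ w : ℕ, ∀ {ι : Type u} [LinearOrder ι] (M : ℕ) (S : Finset ι) (t : ι → ℝ),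
      Set.InjOn t S → 2 ^ (w * M) ≤ S.card → HasGeometricPair A t S M := by
  obtain ⟨K, hK⟩ := exists_far_point_and_cluster.{u} A
  refine ⟨K + 2, fun {ι} _ M => ?_⟩
  induction M with
  | zero =>
    intro S t _ hS
    obtain ⟨c, hc⟩ := Finset.card_pos.1 (Nat.one_le_two_pow.trans hS)
    exact ⟨c, hc, ∅, by simp, ∅, by simp, by simp [GeometricOn]⟩
  | succ M ih =>
    intro S t ht hS
    have hcard : (K + 1) * (2 * 2 ^ ((K + 2) * M)) ≤ S.card :=
      calc (K + 1) * (2 * 2 ^ ((K + 2) * M)) ≤ 2 ^ (K + 1) * (2 * 2 ^ ((K + 2) * M)) := by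
            gcongr
            exact Nat.lt_two_pow_self.le
        _ = 2 ^ ((K + 2) * (M + 1)) := by ring
        _ ≤ S.card := hS
    have hpos : 0 < 2 ^ ((K + 2) * M) := by positivity
    obtain ⟨x, hx, Q, hQS, hxQ, hQ, hfar⟩ := hK S t (2 * 2 ^ ((K + 2) * M)) ht
      (by nlinarith) (by nlinarith)
    obtain ⟨Q', hQ'Q, hQ', hside⟩ := exists_subset_one_sided hxQ hQ
    have hQ'S := hQ'Q.trans hQS
    exact (ih Q' t (ht.mono hQ'S) hQ').extend hQ'S hx (fun h => hxQ (hQ'Q h))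
      (fun c hc q hq => hfar c (hQ'Q hc) q (hQ'Q hq)) hside

/-- The nonnegative function `t` is geometric on `T` with ratio `A`, in one of the two directions
of the index order. -/
def IsGeometric (A : ℝ) (t : ι → ℝ) (T : Set ι) : Prop :=
  GeometricOn (· < ·) A t T ∨ GeometricOn (· > ·) A t T

theorem IsGeometric.mono {A B : ℝ} {t : ι → ℝ} {T : Set ι} (hT : IsGeometric B t T) (hAB : A ≤ B)
    (ht : ∀ i ∈ T, 0 ≤ t i) : IsGeometric A t T :=
  hT.imp
    (fun h i hi j hj hij => (mul_le_mul_of_nonneg_right hAB (ht i hi)).trans (h i hi j hj hij))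
    (fun h i hi j hj hij => (mul_le_mul_of_nonneg_right hAB (ht i hi)).trans (h i hi j hj hij))

theorem IsGeometric.subset {A : ℝ} {t : ι → ℝ} {T Q : Set ι} (hT : IsGeometric A t T)
    (hQ : Q ⊆ T) : IsGeometric A t Q :=
  hT.imp (fun h i hi j hj => h i (hQ hi) j (hQ hj)) fun h i hi j hj => h i (hQ hi) j (hQ hj)

theorem IsGeometric.ratio {A : ℝ} {t : ι → ℝ} {T : Set ι} (hT : IsGeometric A t T) :
    T.Pairwise fun i j => A * t i ≤ t j ∨ A * t j ≤ t i := fun i hi j hj hij =>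
  hT.elim
    (fun h => hij.lt_or_gt.imp (h i hi j hj) (h j hj i hi))
    (fun h => hij.lt_or_gt.symm.imp (h i hi j hj) (h j hj i hi))

theorem IsGeometric.isLacunary_image {A : ℝ} {u : ι → ℝ} {T : Set ι}
    (hT : IsGeometric A (fun i => |u i|) T) (hA : ∀ i ∈ T, A ≤ |u i|) : IsLacunary A (u '' T) where
  le_abs := Set.forall_mem_image.2 hA
  ratio := by
    rintro _ ⟨i, hi, rfl⟩ _ ⟨j, hj, rfl⟩ hij
    exact hT.ratio hi hj (by rintro rfl; exact hij rfl)

theorem exists_center_isGeometric (A : ℝ) :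
    ∃ w : ℕ, ∀ {ι : Type u} [LinearOrder ι] (m : ℕ) (S : Finset ι) (t : ι → ℝ),
      Set.InjOn t S → 2 ^ (w * m) ≤ S.card →
      ∃ c ∈ S, ∃ T ⊆ S, c ∉ T ∧ m ≤ T.card ∧ IsGeometric A (fun i => |t i - t c|) T := by
  obtain ⟨w, hw⟩ := exists_hasGeometricPair.{u} A
  refine ⟨w * 2, fun {ι} _ m S t ht hS => ?_⟩
  obtain ⟨c, hc, T₁, hT₁, T₂, hT₂, hcT₁, hcT₂, hcard, h₁, h₂⟩ :=
    hw (2 * m) S t ht (by rwa [← mul_assoc])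
  rcases le_or_gt m T₁.card with hm | hm
  · exact ⟨c, hc, T₁, hT₁, hcT₁, hm, Or.inl h₁⟩
  · exact ⟨c, hc, T₂, hT₂, hcT₂, by omega, Or.inr h₂⟩

end Chain

section SignConstant

open MvPolynomial

universe u v w

variable {ι : Type w} [LinearOrder ι] {σ : Type u}

/-- The sign of `p` is the same at all increasing tuples of terms of `a` with indices in `T`. -/
def SignConstantOn [Preorder σ] (p : MvPolynomial σ ℝ) (a : ι → ℝ) (T : Set ι) : Prop :=
  ∃ ε, ∀ x : σ → ι, StrictMono x → (∀ l, x l ∈ T) →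
    SignType.sign (eval (fun l => a (x l)) p) = ε

theorem SignConstantOn.congr [Preorder σ] {p : MvPolynomial σ ℝ} {a b : ι → ℝ} {T : Set ι}
    (h : SignConstantOn p a T) (hab : Set.EqOn a b T) : SignConstantOn p b T := by
  obtain ⟨ε, hε⟩ := h
  exact ⟨ε, fun x hx hxT => by simpa only [hab (hxT _)] using hε x hx hxT⟩

theorem signConstantOn_const [Preorder σ] {p : MvPolynomial σ ℝ} {v : ℝ} {T : Set ι} :
    SignConstantOn p (fun _ => v) T :=
  ⟨_, fun _ _ _ => rfl⟩

theorem exists_coloring_signConstantOn [Finite σ] [LinearOrder σ] (p : MvPolynomial σ ℝ) :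
    ∃ (A : ℝ) (Γ : Type u) (_ : Finite Γ), ∀ c μ : ℝ, ∃ χ : ℝ → Γ,
      ∀ {ι : Type w} [LinearOrder ι] (u : ι → ℝ) (T : Set ι),
        (∀ i ∈ T, A ≤ |u i|) → IsGeometric A (fun i => |u i|) T →
        (∀ i ∈ T, ∀ j ∈ T, χ (u i) = χ (u j)) →
        SignConstantOn p (fun i => c + μ * Real.exp (u i)) T := by
  obtain ⟨A, Γ, _, h⟩ := exists_coloring_sign_eval_affine_exp p
  obtain ⟨A', Γ', _, h'⟩ := exists_coloring_sign_eval_affine_exp (rename OrderDual.toDual p)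
  refine ⟨max 2 (max A A'), Γ × Γ', inferInstance, fun c μ => ?_⟩
  obtain ⟨χ, hχ⟩ := h c μ
  obtain ⟨χ', hχ'⟩ := h' c μ
  refine ⟨fun x => (χ x, χ' x), fun {ι} _ u T hA hT hmono => ?_⟩
  simp only [Prod.mk.injEq] at hmono
  have hlac := hT.isLacunary_image hA
  have hpos : ∀ i ∈ T, 0 < |u i| := fun i hi =>
    (zero_lt_two.trans_le (le_max_left _ _)).trans_le (hA i hi)
  have hone : 1 < max 2 (max A A') := one_lt_two.trans_le (le_max_left _ _)
  rcases hT with hT | hT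
  · obtain ⟨ε, hε⟩ := hχ (u '' T) (hlac.mono ((le_max_left _ _).trans (le_max_right _ _)))
      (Set.forall_mem_image.2 fun i hi => Set.forall_mem_image.2 fun j hj => (hmono i hi j hj).1)
    exact ⟨ε, fun x hx hxT => hε (fun l => u (x l)) ⟨fun l => Set.mem_image_of_mem u (hxT l),
      fun _ _ hl => hT.lt hone hpos (hxT _) (hxT _) (hx hl)⟩⟩
  · obtain ⟨ε, hε⟩ := hχ' (u '' T) (hlac.mono ((le_max_right _ _).trans (le_max_right _ _)))
      (Set.forall_mem_image.2 fun i hi => Set.forall_mem_image.2 fun j hj => (hmono i hi j hj).2)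
    refine ⟨ε, fun x hx hxT => ?_⟩
    have := hε (fun l => u (x (OrderDual.ofDual l))) ⟨fun l => Set.mem_image_of_mem u (hxT _),
      fun _ _ hl => hT.lt hone hpos (hxT _) (hxT _) (hx hl)⟩
    rwa [eval_rename] at this

theorem exists_coloring_forall_signConstantOn {I : Type v} [Finite I] {σ : I → Type u}
    [∀ i, Finite (σ i)] [∀ i, LinearOrder (σ i)] (p : ∀ i, MvPolynomial (σ i) ℝ) :
    ∃ (A : ℝ) (Γ : Type max u v) (_ : Finite Γ), 0 < A ∧
      ∀ c μ : ℝ, ∃ χ : ℝ → Γ, ∀ {ι : Type w} [LinearOrder ι] (u : ι → ℝ) (T : Set ι),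
        (∀ i ∈ T, A ≤ |u i|) → IsGeometric A (fun i => |u i|) T →
        (∀ i ∈ T, ∀ j ∈ T, χ (u i) = χ (u j)) →
        ∀ i, SignConstantOn (p i) (fun j => c + μ * Real.exp (u j)) T := by
  choose A Γ hΓ h using fun i => exists_coloring_signConstantOn.{u, w} (p i)
  obtain ⟨B, hB⟩ := Finite.exists_le A
  refine ⟨max B 1, ∀ i, Γ i, inferInstance, by positivity, fun c μ => ?_⟩
  choose χ hχ using fun i => h i c μ
  refine ⟨fun x i => χ i x, fun {ι} _ u T hA hT hmono i => ?_⟩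
  have hAB : A i ≤ max B 1 := (hB i).trans (le_max_left _ _)
  exact hχ i u T (fun j hj => hAB.trans (hA j hj)) (hT.mono hAB fun _ _ => abs_nonneg _)
    fun j hj l hl => congrFun (hmono j hj l hl) i

theorem exists_log_coordinates {A : ℝ} (hA : 0 < A) :
    ∃ w₁ w₂ : ℕ, ∀ {ι : Type w} [LinearOrder ι] (m : ℕ) (S : Finset ι) (a : ι → ℝ),
      Set.InjOn a S → 2 ^ (w₁ * 2 ^ (w₂ * m)) ≤ S.card →
      ∃ (c s : ℝ) (u : ι → ℝ), ∃ T ⊆ S, m ≤ T.card ∧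
        (∀ i ∈ T, |a i - c| = Real.exp s * Real.exp (u i)) ∧ (∀ i ∈ T, A ≤ |u i|) ∧
        IsGeometric A (fun i => |u i|) T := by
  obtain ⟨w₁, h₁⟩ := exists_center_isGeometric.{w} (Real.exp A)
  obtain ⟨w₂, h₂⟩ := exists_center_isGeometric.{w} A
  refine ⟨w₁, w₂, fun {ι} _ m S a ha hS => ?_⟩
  obtain ⟨c, hc, T, hTS, hcT, hT, hgeom⟩ := h₁ _ S a ha hS
  let s : ι → ℝ := fun i => Real.log |a i - a c|
  have hexp : ∀ i ∈ T, Real.exp (s i) = |a i - a c| := fun i hi => Real.exp_log <|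
    abs_pos.2 <| sub_ne_zero.2 fun h => hcT (ha (hTS hi) hc h ▸ hi)
  have hgap : ∀ i ∈ T, ∀ j ∈ T, i ≠ j → A ≤ |s i - s j| := fun i hi j hj hij => by
    have hratio := hgeom.ratio hi hj hij
    simp only [← hexp i hi, ← hexp j hj, ← Real.exp_add, Real.exp_le_exp] at hratio
    rcases hratio with h | h
    · linarith [neg_abs_le (s i - s j)]
    · linarith [le_abs_self (s i - s j)]
  have hs : Set.InjOn s T := fun i hi j hj hij => by
    by_contra hne
    simpa [hij, hA.not_ge] using hgap i hi j hj hne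
  obtain ⟨L, hL, T', hT'T, hLT', hT', hgeom'⟩ := h₂ m T s hs hT
  refine ⟨a c, s L, fun i => s i - s L, T', hT'T.trans hTS, hT', fun i hi => ?_, fun i hi =>
    hgap i (hT'T hi) L hL (by rintro rfl; exact hLT' hi), hgeom'⟩
  rw [← Real.exp_add, add_sub_cancel, hexp i (hT'T hi)]

theorem exists_subset_signConstantOn_of_injOn {I : Type v} [Finite I] {σ : I → Type u}
    [∀ i, Finite (σ i)] [∀ i, LinearOrder (σ i)] (p : ∀ i, MvPolynomial (σ i) ℝ) :
    ∃ w₁ w₂ : ℕ, ∀ {ι : Type w} [LinearOrder ι] (n : ℕ) (S : Finset ι) (a : ι → ℝ),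
      Set.InjOn a S → 1 ≤ n → 2 ^ (w₁ * 2 ^ (w₂ * n)) ≤ S.card →
      ∃ T ⊆ S, n ≤ T.card ∧ ∀ i, SignConstantOn (p i) a T := by
  obtain ⟨A, Γ, _, hA, hχ⟩ := exists_coloring_forall_signConstantOn.{u, v, w} p
  obtain ⟨w₁, w₂, h⟩ := exists_log_coordinates.{w} hA
  let G := Nat.card (SignType × (SignType → Γ))
  refine ⟨w₁, w₂ * (G + 1), fun {ι} _ n S a ha hn hS => ?_⟩
  obtain ⟨c, s, u, T, hTS, hT, hexp, hlarge, hgeom⟩ :=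
    h ((G + 1) * n) S a ha (by rwa [← mul_assoc])
  choose χ hχ using fun ε : SignType => hχ c (ε * Real.exp s)
  obtain ⟨Q, hQT, hQ, hmono⟩ := exists_monochromatic_subset (T := T) (n := n)
    (fun i => (SignType.sign (a i - c), fun ε => χ ε (u i))) (by lia)
  simp only [Prod.mk.injEq] at hmono
  obtain ⟨q, hq⟩ := Finset.card_pos.1 (Nat.zero_lt_of_lt hQ)
  refine ⟨Q, hQT.trans hTS, hQ.le, fun i => ?_⟩
  let ε := SignType.sign (a q - c)
  have ha : Set.EqOn (fun j => c + ε * Real.exp s * Real.exp (u j)) a Q := fun j hj => by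
    calc c + ε * Real.exp s * Real.exp (u j)
        = c + SignType.sign (a j - c) * |a j - c| := by
          rw [hexp j (hQT hj), (hmono j hj q hq).1, mul_assoc]
      _ = a j := by rw [sign_mul_abs, add_sub_cancel]
  exact (hχ ε u Q (fun j hj => hlarge j (hQT hj)) (hgeom.subset hQT)
    (fun j hj l hl => congrFun (hmono j hj l hl).2 ε) i).congr ha

theorem exists_subset_signConstantOn {I : Type v} [Finite I] {σ : I → Type u}
    [∀ i, Finite (σ i)] [∀ i, LinearOrder (σ i)] (p : ∀ i, MvPolynomial (σ i) ℝ) :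
    ∃ w₁ w₂ : ℕ, ∀ {ι : Type w} [LinearOrder ι] (n : ℕ) (S : Finset ι) (a : ι → ℝ),
      1 ≤ n → n * 2 ^ (w₁ * 2 ^ (w₂ * n)) ≤ S.card →
      ∃ T ⊆ S, n ≤ T.card ∧ ∀ i, SignConstantOn (p i) a T := by
  obtain ⟨w₁, w₂, h⟩ := exists_subset_signConstantOn_of_injOn.{u, v, w} p
  refine ⟨w₁, w₂, fun {ι} _ n S a hn hS => ?_⟩
  rcases exists_subset_constant_or_injOn a hn hS with ⟨v, T, hTS, hT, hv⟩ | ⟨T, hTS, hT, ha⟩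
  · exact ⟨T, hTS, hT, fun i => signConstantOn_const.congr fun j hj => (hv j hj).symm⟩
  · obtain ⟨Q, hQT, hQ⟩ := h n T a ha hn hT
    exact ⟨Q, hQT.trans hTS, hQ⟩

end SignConstant

section Homogeneous

/-- The truth value of `Φ` is the same at all increasing tuples of terms of `b`. -/
def IsHomogeneous {k : ℕ} {ι : Type*} [Preorder ι] (Φ : (Fin k → ℝ) → Prop) (b : ι → ℝ) : Prop :=
  ∀ x y : Fin k → ι, StrictMono x → StrictMono y → (Φ (b ∘ x) ↔ Φ (b ∘ y))

theorem mul_two_pow_le_two_pow_two_pow {w₁ w₂ n : ℕ} (hn : 1 ≤ n) :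
    n * 2 ^ (w₁ * 2 ^ (w₂ * n)) ≤ 2 ^ 2 ^ ((1 + w₁ + w₂) * n) :=
  calc n * 2 ^ (w₁ * 2 ^ (w₂ * n)) ≤ 2 ^ (n * 2 ^ (w₂ * n)) * 2 ^ (w₁ * 2 ^ (w₂ * n)) := by
        gcongr
        exact Nat.lt_two_pow_self.le.trans
          (Nat.pow_le_pow_right two_pos (Nat.le_mul_of_pos_right n (by positivity)))
    _ = 2 ^ ((n + w₁) * 2 ^ (w₂ * n)) := by rw [← pow_add, add_mul]
    _ ≤ 2 ^ (2 ^ ((1 + w₁) * n) * 2 ^ (w₂ * n)) := by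
        gcongr
        · norm_num
        · exact Nat.lt_two_pow_self.le.trans (Nat.pow_le_pow_right two_pos (by nlinarith))
    _ = 2 ^ 2 ^ ((1 + w₁ + w₂) * n) := by rw [← pow_add, ← add_mul]

theorem exists_isHomogeneous_comp {I : Type*} [Finite I] {k : I → ℕ}
    {Φ : ∀ i, (Fin (k i) → ℝ) → Prop} (hsa : ∀ i, IsSemialgebraic (Φ i)) :
    ∃ C : ℕ, 0 < C ∧ ∀ n N : ℕ, 1 ≤ n → 2 ^ 2 ^ (C * n) ≤ N → ∀ a : Fin N → ℝ,
      ∃ φ : Fin n → Fin N, StrictMono φ ∧ ∀ i, IsHomogeneous (Φ i) (a ∘ φ) := by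
  choose m p S hS using hsa
  obtain ⟨w₁, w₂, h⟩ := exists_subset_signConstantOn (I := Σ i, Fin (m i))
    (σ := fun e => Fin (k e.1)) fun e => p e.1 e.2
  refine ⟨1 + w₁ + w₂, by omega, fun n N hn hN a => ?_⟩
  obtain ⟨T, -, hT, hsign⟩ := h n Finset.univ a hn
    (by simpa using (mul_two_pow_le_two_pow_two_pow hn).trans hN)
  obtain ⟨Q, hQT, hQ⟩ := Finset.exists_subset_card_eq hT
  refine ⟨Q.orderEmbOfFin hQ, (Q.orderEmbOfFin hQ).strictMono, fun i x y hx hy => ?_⟩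
  rw [hS, hS]
  suffices h : ∀ j, SignType.sign (MvPolynomial.eval (a ∘ Q.orderEmbOfFin hQ ∘ x) (p i j)) =
      SignType.sign (MvPolynomial.eval (a ∘ Q.orderEmbOfFin hQ ∘ y) (p i j)) by
    simp only [Function.comp_assoc, h]
  intro j
  obtain ⟨ε, hε⟩ := hsign ⟨i, j⟩
  have hmem (z : Fin (k i) → Fin n) (l) : Q.orderEmbOfFin hQ (z l) ∈ T :=
    hQT (Q.orderEmbOfFin_mem hQ (z l))
  exact (hε _ ((Q.orderEmbOfFin hQ).strictMono.comp hx) (hmem x)).trans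
    (hε _ ((Q.orderEmbOfFin hQ).strictMono.comp hy) (hmem y)).symm

theorem IsErdosSzekeres.exists_holdsEverywhere_of_isHomogeneous {r : ℕ} {k : Fin r → ℕ}
    {Φ : ∀ i, (Fin (k i) → ℝ) → Prop} (hES : IsErdosSzekeres k Φ) :
    ∃ n₀ : ℕ, ∀ n, n₀ ≤ n → ∀ b : Fin n → ℝ, (∀ i, IsHomogeneous (Φ i) b) →
      ∃ i, HoldsEverywhere (Φ i) b := by
  obtain ⟨K, hK⟩ := Finite.exists_le k
  obtain ⟨n₀, hn₀⟩ := hES K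
  refine ⟨n₀, fun n hn b hb => ?_⟩
  obtain ⟨φ, hφ, i, hi⟩ := hn₀ (b ∘ Fin.castLE hn)
  have hx : StrictMono (Fin.castLE hn ∘ φ ∘ Fin.castLE (hK i)) :=
    (Fin.strictMono_castLE hn).comp (hφ.comp (Fin.strictMono_castLE (hK i)))
  exact ⟨i, fun y hy => (hb i _ y hx hy).1 (hi _ (Fin.strictMono_castLE (hK i)))⟩

theorem HoldsEverywhere.comp {k n m : ℕ} {Φ : (Fin k → ℝ) → Prop} {b : Fin n → ℝ}
    (hb : HoldsEverywhere Φ b) {φ : Fin m → Fin n} (hφ : StrictMono φ) :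
    HoldsEverywhere Φ (b ∘ φ) :=
  fun x hx => hb (φ ∘ x) (hφ.comp hx)

end Homogeneous

/-- for every finite Erdős–Szekeres set of one-dimensional semialgebraic
predicates there is `C > 0` such that every sequence of length at least `2^(2^(C·n))`
has an `n`-term subsequence on which some member of the family holds everywhere. -/
theorem stmt0 {r : ℕ} (k : Fin r → ℕ) (Φ : ∀ i, (Fin (k i) → ℝ) → Prop)
    (hsa : ∀ i, IsSemialgebraic (Φ i)) (hES : IsErdosSzekeres k Φ) :
    ∃ C : ℝ, 0 < C ∧ ∀ n : ℕ, 1 ≤ n → ∀ N : ℕ,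
      (2 : ℝ) ^ ((2 : ℝ) ^ (C * (n : ℝ))) ≤ (N : ℝ) →
      ∀ a : Fin N → ℝ, ∃ φ : Fin n → Fin N, StrictMono φ ∧
        ∃ i, HoldsEverywhere (Φ i) (fun j => a (φ j)) := by
  obtain ⟨n₀, hn₀⟩ := hES.exists_holdsEverywhere_of_isHomogeneous
  obtain ⟨C, hC, hhom⟩ := exists_isHomogeneous_comp hsa
  refine ⟨(C * (n₀ + 1) : ℕ), by positivity, fun n hn N hN a => ?_⟩
  have hN' : 2 ^ 2 ^ (C * ((n₀ + 1) * n)) ≤ N := by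
    rw [← mul_assoc]
    exact_mod_cast hN
  obtain ⟨φ, hφ, hΦ⟩ := hhom ((n₀ + 1) * n) N (by nlinarith) hN' a
  obtain ⟨i, hi⟩ := hn₀ _ (by nlinarith) (a ∘ φ) hΦ
  have hle : n ≤ (n₀ + 1) * n := Nat.le_mul_of_pos_left n n₀.succ_pos
  exact ⟨φ ∘ Fin.castLE hle, hφ.comp (Fin.strictMono_castLE hle), i,
    hi.comp (Fin.strictMono_castLE hle)⟩
end

section
/- For every finite set 𝚽 of one-dimensional semialgebraic predicates there exists a constant C > 0 such that for every n ≥ 1, every sequence of real numbers of length at least 2^(2^(C·n)) contains an n-term subsequence b such that each predicate Φ ∈ 𝚽 holds either everywhere on b or nowhere on b (i.e., for each Φ ∈ 𝚽, either Φ holds on every increasing k_Φ-tuple of terms of b, or Φ fails on every increasing k_Φ-tuple of terms of b). -/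
/-!
By Erdős–Szekeres the sequence may be assumed strictly monotone or constant, and constant sequences
are trivial. A set of `4 ^ n` reals contains a point `p` and points `p ± t i`, all on the same side
of `p`, with `t` at least doubling at each step: halve the range repeatedly, keeping the extreme
point on the side of the poorer half. Doing this for the given set and then for the logarithms of
the distances found costs two exponentials and yields terms `p + c * exp (ε * t i)` with `t`
doubling.

In such terms a polynomial is a sum of monomials `C α * exp (ε * ∑ j, α j * t (i j))`. Once `t`
grows fast enough and stays far from the finitely many thresholds `log |C α| - log |C β|`, of any
two monomials the same one dominates on all increasing tuples, so the sign of the polynomial is that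
of one dominating monomial. Among `K + 1` consecutive blocks of a fast growing sequence, each of `K`
thresholds is close to at most one block.
-/

open Finset

-- The theorem of Mirsky: the height function is a rank function if there is no long chain.
theorem exists_chain_or_exists_rank {α : Type*} (r : α → α → Prop) [IsStrictOrder α r] (m : ℕ) :
    (∃ x : Fin m → α, ∀ ⦃i j⦄, i < j → r (x i) (x j)) ∨
      ∃ f : α → Fin m, ∀ ⦃x y⦄, r x y → f x < f y := by
  let := partialOrderOfSO r
  by_cases! hlong : ∃ s : LTSeries α, m ≤ s.length + 1
  · obtain ⟨s, hs⟩ := hlong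
    exact .inl ⟨s ∘ Fin.castLE hs, s.strictMono.comp (Fin.strictMono_castLE hs)⟩
  · have hheight (x : α) : Order.height x < m := by
      have hm : 1 < m := by simpa using hlong (RelSeries.singleton _ x)
      have hle : Order.height x ≤ (m - 1 : ℕ) := Order.height_le_iff.2 fun s _ => by
        exact_mod_cast Nat.le_sub_one_of_lt ((Nat.lt_succ_self _).trans (hlong s))
      exact hle.trans_lt (by exact_mod_cast Nat.sub_one_lt_of_lt hm)
    choose f hf using fun x => ENat.ne_top_iff_exists.1 (hheight x).ne_top
    refine .inr ⟨fun x => ⟨f x, by exact_mod_cast (hf x).trans_lt (hheight x)⟩, fun x y hxy => ?_⟩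
    have hlt := Order.height_strictMono (show x < y from hxy) (hheight x).lt_top
    rw [← hf, ← hf] at hlt
    exact_mod_cast hlt

theorem exists_strictMono_comp_or_exists_rank {α β : Type*} [LinearOrder α] [LinearOrder β]
    (a : α → β) (m : ℕ) :
    (∃ φ : Fin m ↪o α, StrictMono (a ∘ φ)) ∨
      ∃ f : α → Fin m, ∀ ⦃i j⦄, i < j → a i < a j → f i < f j := by
  have : IsStrictOrder α fun i j => i < j ∧ a i < a j :=
    { irrefl := fun i h => h.1.false
      trans := fun i j l hij hjl => ⟨hij.1.trans hjl.1, hij.2.trans hjl.2⟩ }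
  rcases exists_chain_or_exists_rank (fun i j => i < j ∧ a i < a j) m with ⟨x, hx⟩ | ⟨f, hf⟩
  · exact .inl ⟨.ofStrictMono x fun i j hij => (hx hij).1, fun i j hij => (hx hij).2⟩
  · exact .inr ⟨f, fun i j hij haij => hf ⟨hij, haij⟩⟩

theorem exists_strictMono_or_strictAnti_or_const {α β : Type*} [LinearOrder α] [Fintype α]
    [LinearOrder β] (a : α → β) {m n : ℕ} (h : m * m * n < Fintype.card α) :
    (∃ φ : Fin m ↪o α, StrictMono (a ∘ φ)) ∨ (∃ φ : Fin m ↪o α, StrictAnti (a ∘ φ)) ∨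
      ∃ (φ : Fin n ↪o α) (v : β), ∀ i, a (φ i) = v := by
  rcases exists_strictMono_comp_or_exists_rank a m with hφ | ⟨f, hf⟩
  · exact .inl hφ
  rcases exists_strictMono_comp_or_exists_rank (OrderDual.toDual ∘ a) m with ⟨φ, hφ⟩ | ⟨g, hg⟩
  · exact .inr (.inl ⟨φ, hφ⟩)
  refine .inr (.inr ?_)
  obtain ⟨y, hy⟩ := Fintype.exists_lt_card_fiber_of_mul_lt_card (fun i => (f i, g i))
    (by simpa using h)
  obtain ⟨i₀, hi₀⟩ := card_pos.1 (hy.trans_le' n.zero_le)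
  have hconst : ∀ i ∈ univ.filter fun i => (f i, g i) = y, a i = a i₀ := by
    intro i hi
    have hlabel := (mem_filter.1 hi).2.trans (mem_filter.1 hi₀).2.symm
    obtain ⟨hfi, hgi⟩ := Prod.ext_iff.1 hlabel
    wlog hlt : i < i₀ generalizing i i₀
    · rcases (not_lt.1 hlt).eq_or_lt with rfl | hgt
      exacts [rfl, (this i hi i₀ hi₀ hlabel.symm hfi.symm hgi.symm hgt).symm]
    · exact le_antisymm (not_lt.1 fun h => (hg hlt h).ne hgi) (not_lt.1 fun h => (hf hlt h).ne hfi)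
  exact ⟨orderEmbOfCardLe _ hy.le, a i₀, fun i => hconst _ (orderEmbOfCardLe_mem _ hy.le i)⟩

/-- A sequence of positive reals, each of whose terms is at least `q` times every earlier one:
lacunary with ratio `q`, in the sense of Hadamard. It is the growth condition under which a linear
combination of terms is governed by the last one. -/
def IsLacunary_s1 (q : ℝ) {n : ℕ} (t : Fin n → ℝ) : Prop :=
  (∀ i, 0 < t i) ∧ ∀ ⦃i j⦄, i < j → q * t i ≤ t j

namespace IsLacunary_s1

variable {q : ℝ} {m n : ℕ} {t : Fin n → ℝ}

theorem of_le {q' : ℝ} (ht : IsLacunary_s1 q t) (hq : q' ≤ q) : IsLacunary_s1 q' t :=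
  ⟨ht.1, fun i _ hij => (mul_le_mul_of_nonneg_right hq (ht.1 i).le).trans (ht.2 hij)⟩

theorem comp (ht : IsLacunary_s1 q t) (φ : Fin m ↪o Fin n) : IsLacunary_s1 q (t ∘ φ) :=
  ⟨fun _ => ht.1 _, fun _ _ hij => ht.2 (φ.strictMono hij)⟩

theorem snoc (ht : IsLacunary_s1 q t) {x : ℝ} (hx : 0 < x) (htx : ∀ i, q * t i ≤ x) :
    IsLacunary_s1 q (Fin.snoc t x : Fin (n + 1) → ℝ) := by
  refine ⟨fun i => ?_, fun i j hij => ?_⟩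
  · induction i using Fin.lastCases with
    | last => simpa only [Fin.snoc_last] using hx
    | cast i => simpa only [Fin.snoc_castSucc] using ht.1 i
  · obtain ⟨i, rfl⟩ := Fin.exists_castSucc_eq.2 (Fin.ne_last_of_lt hij)
    induction j using Fin.lastCases with
    | last => simpa only [Fin.snoc_last, Fin.snoc_castSucc] using htx i
    | cast j => simpa only [Fin.snoc_castSucc] using ht.2 hij

theorem strictMono (ht : IsLacunary_s1 q t) (hq : 1 < q) : StrictMono t := fun i _ hij =>
  (lt_mul_of_one_lt_left (ht.1 i) hq).trans_le (ht.2 hij)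

theorem pow_mul_le (ht : IsLacunary_s1 q t) (hq : 1 < q) {d : ℕ} {i j : Fin n}
    (hij : i + d ≤ (j : ℕ)) :
    q ^ d * t i ≤ t j := by
  induction d generalizing j with
  | zero => simpa only [pow_zero, one_mul] using (ht.strictMono hq).monotone hij
  | succ d ih =>
    let l : Fin n := ⟨i + d, by omega⟩
    calc q ^ (d + 1) * t i = q * (q ^ d * t i) := by ring
      _ ≤ q * t l := by gcongr; exact ih le_rfl
      _ ≤ t j := ht.2 (Fin.lt_def.2 (by simp only [l]; omega))

theorem log_le_abs_log_sub_log (ht : IsLacunary_s1 q t) (hq : 1 < q) {i j : Fin n} (hij : i ≠ j) :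
    Real.log q ≤ |Real.log (t i) - Real.log (t j)| := by
  wlog hlt : i < j generalizing i j
  · rw [abs_sub_comm]
    exact this hij.symm (hij.lt_or_gt.resolve_left hlt)
  have hlog := Real.log_le_log (mul_pos (by positivity) (ht.1 i)) (ht.2 hlt)
  rw [Real.log_mul (by positivity) (ht.1 i).ne'] at hlog
  rw [abs_sub_comm]
  exact (le_sub_iff_add_le.2 hlog).trans (le_abs_self _)

theorem exists_comp_pow (r : ℕ) {t : Fin (r * (n + 1)) → ℝ} (ht : IsLacunary_s1 q t) (hq : 1 < q)
    (hr : 0 < r) {x : ℝ} (hx : ∀ i, x ≤ t i) :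
    ∃ φ : Fin n ↪o Fin (r * (n + 1)), IsLacunary_s1 (q ^ r) (t ∘ φ) ∧ ∀ i, q ^ r * x ≤ t (φ i) := by
  have hgap {i j : ℕ} (hij : i < j) : r * i + r ≤ r * j := Nat.mul_le_mul_left r hij
  let φ : Fin n ↪o Fin (r * (n + 1)) := .ofStrictMono
    (fun i => ⟨r * (i + 1), Nat.mul_lt_mul_of_pos_left (by omega) hr⟩)
    fun i j hij => Fin.lt_def.2 (Nat.mul_lt_mul_of_pos_left (Nat.succ_lt_succ hij) hr)
  refine ⟨φ, ⟨fun i => ht.1 _, fun i j hij => ht.pow_mul_le hq (hgap (Nat.succ_lt_succ hij))⟩,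
    fun i => ?_⟩
  have hzero : 0 < r * (n + 1) := by positivity
  calc q ^ r * x ≤ q ^ r * t ⟨0, hzero⟩ := by gcongr; exact hx _
    _ ≤ t (φ i) := ht.pow_mul_le hq (by
        rw [zero_add]
        exact Nat.le_mul_of_pos_right r (i : ℕ).succ_pos)

end IsLacunary_s1

theorem exists_half_far_from_min_or_max {S : Finset ℝ} (hS : 1 < #S) {m : ℕ} (hm : 2 * m ≤ #S) :
    ∃ S' ⊆ S, m ≤ #S' ∧
      ((∃ x ∈ S, ∀ p ∈ S', x < p ∧ ∀ y ∈ S', 2 * (p - y) ≤ p - x) ∨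
        ∃ x ∈ S, ∀ p ∈ S', p < x ∧ ∀ y ∈ S', 2 * (y - p) ≤ x - p) := by
  have hne : S.Nonempty := card_pos.1 (by omega)
  have hlt : S.min' hne < S.max' hne := min'_lt_max'_of_card S hS
  set c := (S.min' hne + S.max' hne) / 2 with hc
  have hcover : S = {y ∈ S | c ≤ y} ∪ {y ∈ S | y ≤ c} := by
    rw [← filter_or, filter_true_of_mem fun y _ => le_total c y]
  have hcard := (congrArg card hcover).trans_le (card_union_le _ _)
  rcases le_total #{y ∈ S | y ≤ c} #{y ∈ S | c ≤ y} with hhalf | hhalf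
  · refine ⟨{y ∈ S | c ≤ y}, filter_subset _ _, by omega,
      .inl ⟨S.min' hne, S.min'_mem hne, fun p hp => ⟨?_, fun y hy => ?_⟩⟩⟩
    · linarith [(mem_filter.1 hp).2]
    · linarith [S.le_max' p (mem_filter.1 hp).1, (mem_filter.1 hy).2]
  · refine ⟨{y ∈ S | y ≤ c}, filter_subset _ _, by omega,
      .inr ⟨S.max' hne, S.max'_mem hne, fun p hp => ⟨?_, fun y hy => ?_⟩⟩⟩
    · linarith [(mem_filter.1 hp).2]
    · linarith [S.min'_le p (mem_filter.1 hp).1, (mem_filter.1 hy).2]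

theorem exists_isLacunary_add_mem_or_sub_mem (m n : ℕ) {S : Finset ℝ} (hS : 2 ^ (m + n) ≤ #S) :
    (∃ p ∈ S, ∃ t : Fin m → ℝ, IsLacunary_s1 2 t ∧ ∀ i, p + t i ∈ S) ∨
      ∃ p ∈ S, ∃ t : Fin n → ℝ, IsLacunary_s1 2 t ∧ ∀ i, p - t i ∈ S := by
  induction m generalizing n S with
  | zero =>
    obtain ⟨p, hp⟩ := card_pos.1 (hS.trans_lt' (by positivity))
    exact .inl ⟨p, hp, Fin.elim0, ⟨isEmptyElim, isEmptyElim⟩, isEmptyElim⟩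
  | succ m ihm =>
    induction n generalizing S with
    | zero =>
      obtain ⟨p, hp⟩ := card_pos.1 (hS.trans_lt' (by positivity))
      exact .inr ⟨p, hp, Fin.elim0, ⟨isEmptyElim, isEmptyElim⟩, isEmptyElim⟩
    | succ n ihn =>
      have hpow : 2 ^ (m + 1 + (n + 1)) = 2 * 2 ^ (m + 1 + n) := by ring
      have hone : 1 ≤ 2 ^ (m + 1 + n) := Nat.one_le_two_pow
      obtain ⟨S', hS', hcard, ⟨x, hx, hfar⟩ | ⟨x, hx, hfar⟩⟩ :=
        exists_half_far_from_min_or_max (by omega) (hpow ▸ hS)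
      · rcases ihn hcard with ⟨p, hp, t, ht, hmem⟩ | ⟨p, hp, t, ht, hmem⟩
        · exact .inl ⟨p, hS' hp, t, ht, fun i => hS' (hmem i)⟩
        · refine .inr ⟨p, hS' hp, Fin.snoc t (p - x), ht.snoc (sub_pos.2 (hfar p hp).1) fun i => ?_,
            Fin.forall_fin_succ'.2 ⟨fun i => ?_, ?_⟩⟩
          · simpa only [sub_sub_cancel] using (hfar p hp).2 _ (hmem i)
          · simpa only [Fin.snoc_castSucc] using hS' (hmem i)
          · simpa only [Fin.snoc_last, sub_sub_cancel] using hx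
      · rcases ihm (n + 1) (by rwa [← add_assoc, add_right_comm]) with
          ⟨p, hp, t, ht, hmem⟩ | ⟨p, hp, t, ht, hmem⟩
        · refine .inl ⟨p, hS' hp, Fin.snoc t (x - p), ht.snoc (sub_pos.2 (hfar p hp).1) fun i => ?_,
            Fin.forall_fin_succ'.2 ⟨fun i => ?_, ?_⟩⟩
          · simpa only [add_sub_cancel_left] using (hfar p hp).2 _ (hmem i)
          · simpa only [Fin.snoc_castSucc] using hS' (hmem i)
          · simpa only [Fin.snoc_last, add_sub_cancel] using hx
        · exact .inr ⟨p, hS' hp, t, ht, fun i => hS' (hmem i)⟩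

theorem exists_isLacunary_affine_mem (n : ℕ) {S : Finset ℝ} (hS : 4 ^ n ≤ #S) :
    ∃ p ∈ S, ∃ (σ : ℝ) (t : Fin n → ℝ), |σ| = 1 ∧ IsLacunary_s1 2 t ∧ ∀ i, p + σ * t i ∈ S := by
  have hpow : 4 ^ n = 2 ^ (n + n) := by rw [← two_mul, pow_mul]; norm_num
  rcases exists_isLacunary_add_mem_or_sub_mem n n (hpow ▸ hS) with
    ⟨p, hp, t, ht, hmem⟩ | ⟨p, hp, t, ht, hmem⟩
  · exact ⟨p, hp, 1, t, abs_one, ht, fun i => by simpa only [one_mul] using hmem i⟩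
  · exact ⟨p, hp, -1, t, by simp only [abs_neg, abs_one], ht,
      fun i => by simpa only [neg_one_mul, ← sub_eq_add_neg] using hmem i⟩

theorem exists_isLacunary_exp_mem (n : ℕ) {S : Finset ℝ} (hS : 4 ^ 4 ^ n ≤ #S) :
    ∃ (p c ε : ℝ) (t : Fin n → ℝ), c ≠ 0 ∧ |ε| = 1 ∧ IsLacunary_s1 2 t ∧ (∀ i, Real.log 2 ≤ t i) ∧
      ∀ i, p + c * Real.exp (ε * t i) ∈ S := by
  obtain ⟨p, -, σ, u, hσ, hu, hmem⟩ := exists_isLacunary_affine_mem _ hS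
  have hinj : Function.Injective fun i => Real.log (u i) := fun i j hij =>
    (hu.strictMono one_lt_two).injective (Real.log_injOn_pos (hu.1 i) (hu.1 j) hij)
  obtain ⟨_, hi₀, ε, t, hε, ht, hlog⟩ := exists_isLacunary_affine_mem n
    (S := univ.image fun i => Real.log (u i)) (by
      rw [card_image_of_injective _ hinj, card_univ, Fintype.card_fin])
  obtain ⟨i₀, -, rfl⟩ := mem_image.1 hi₀
  simp only [mem_image, mem_univ, true_and] at hlog
  choose ψ hψ using hlog
  have hdist (i : Fin n) : |Real.log (u (ψ i)) - Real.log (u i₀)| = t i := by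
    rw [hψ, add_sub_cancel_left, abs_mul, hε, one_mul, abs_of_pos (ht.1 i)]
  have hne (i : Fin n) : ψ i ≠ i₀ := by
    intro hi
    have := hdist i
    rw [hi, sub_self, abs_zero] at this
    exact (ht.1 i).ne this
  refine ⟨p, σ * u i₀, ε, t, ?_, hε, ht, fun i => ?_, fun i => ?_⟩
  · exact mul_ne_zero (abs_ne_zero.1 (hσ ▸ one_ne_zero)) (hu.1 i₀).ne'
  · exact hdist i ▸ hu.log_le_abs_log_sub_log one_lt_two (hne i)
  · convert hmem (ψ i) using 2
    rw [← Real.exp_log (hu.1 (ψ i)), hψ, Real.exp_add, Real.exp_log (hu.1 i₀), mul_assoc]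

/-- The number `c` is at a multiplicative distance at least `H` from the sequence `t`: in absolute
value it exceeds all the terms, or is exceeded by all of them, by a factor `H`. For lacunary `t`
this makes the sign of `c + ∑ j, δ j * t (i j)` the same for all increasing tuples of indices `i`,
provided the coefficients are integers, small compared with `H`. -/
def IsFarFrom (H c : ℝ) {n : ℕ} (t : Fin n → ℝ) : Prop :=
  (∀ i, H * t i ≤ |c|) ∨ ∀ i, H * |c| ≤ t i

theorem IsLacunary_s1.isFarFrom_or_isFarFrom {H : ℝ} {m n l : ℕ} {t : Fin l → ℝ}
    (ht : IsLacunary_s1 (H ^ 2) t) (hH : 0 < H) {φ : Fin m → Fin l} {ψ : Fin n → Fin l}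
    (hφψ : ∀ i j, φ i < ψ j) (c : ℝ) : IsFarFrom H c (t ∘ φ) ∨ IsFarFrom H c (t ∘ ψ) := by
  by_contra! hcon
  simp only [IsFarFrom, not_or, not_forall, not_le] at hcon
  obtain ⟨⟨⟨i, hi⟩, -⟩, -, j, hj⟩ := hcon
  have hlt : H * |c| < H ^ 2 * t (φ i) := by
    rw [sq, mul_assoc]
    exact mul_lt_mul_of_pos_left hi hH
  exact ((hj.trans hlt).trans_le (ht.2 (hφψ i j))).false

theorem IsLacunary_s1.exists_comp_isFarFrom {H : ℝ} {K n : ℕ} {t : Fin ((K + 1) * n) → ℝ}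
    (ht : IsLacunary_s1 (H ^ 2) t) (hH : 0 < H) {cs : Finset ℝ} (hcs : #cs ≤ K) :
    ∃ φ : Fin n ↪o Fin ((K + 1) * n), ∀ c ∈ cs, IsFarFrom H c (t ∘ φ) := by
  have hblock {b b' : Fin (K + 1)} {i i' : Fin n} (h : b < b' ∨ b = b' ∧ i < i') :
      finProdFinEquiv (b, i) < finProdFinEquiv (b', i') := by
    rw [Fin.lt_def, finProdFinEquiv_apply_val, finProdFinEquiv_apply_val]
    rcases h with hb | ⟨rfl, hi⟩
    · have hmul : n * (b + 1) ≤ n * b' := Nat.mul_le_mul_left n hb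
      have hin := i.isLt
      dsimp only
      lia
    · exact Nat.add_lt_add_right hi _
  let φ (b : Fin (K + 1)) : Fin n ↪o Fin ((K + 1) * n) :=
    .ofStrictMono (fun i => finProdFinEquiv (b, i)) fun _ _ hij => hblock (.inr ⟨rfl, hij⟩)
  by_contra! hcon
  choose c hc hnear using fun b => hcon (φ b)
  have hne {b b' : Fin (K + 1)} (hb : b < b') : c b ≠ c b' := fun heq =>
    (ht.isFarFrom_or_isFarFrom hH (fun i i' => hblock (.inl hb)) (c b)).elim (hnear b)
      (heq ▸ hnear b')
  have hinj : Function.Injective c := fun b b' heq => by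
    by_contra hb
    exact lt_or_gt_of_ne hb |>.elim (fun hlt => hne hlt heq) fun hgt => hne hgt heq.symm
  have hcard : K + 1 ≤ #cs := by
    simpa using card_le_card_of_injOn c (s := univ) (fun b _ => hc b) hinj.injOn
  omega

theorem forall_le_or_forall_le_of_abs_add_le {X : Type*} {u v : X → ℝ} {L : ℝ}
    (hu : (∀ x, 0 ≤ u x) ∨ ∀ x, u x ≤ 0) (huv : ∀ x, |v x| + L ≤ |u x|) :
    (∀ x, L ≤ u x + v x) ∨ ∀ x, u x + v x ≤ -L := by
  refine hu.imp (fun hu x => ?_) fun hu x => ?_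
  · linarith [abs_of_nonneg (hu x), neg_abs_le (v x), huv x]
  · linarith [abs_of_nonpos (hu x), le_abs_self (v x), huv x]

section Dichotomy

variable {κ : Type*} [Fintype κ] {δ : κ → ℝ} {H B L c : ℝ}

theorem two_mul_abs_add_sum_mul_le {J : Finset κ} {y : κ → ℝ} {b : ℝ}
    (hH : 2 * (Fintype.card κ * B + 1) ≤ H) (hB : 0 ≤ B) (hδB : ∀ j, |δ j| ≤ B)
    (hc : H * |c| ≤ b) (hy : ∀ j ∈ J, δ j ≠ 0 → H * |y j| ≤ b) :
    2 * |c + ∑ j ∈ J, δ j * y j| ≤ b := by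
  have hw : 0 < Fintype.card κ * B + 1 := by positivity
  have hH0 : 0 ≤ H := by linarith
  have hb : 0 ≤ b := (by positivity : 0 ≤ H * |c|).trans hc
  have hterm : ∀ j ∈ J, H * |δ j * y j| ≤ B * b := by
    intro j hj
    rcases eq_or_ne (δ j) 0 with hδ | hδ
    · simp only [hδ, zero_mul, abs_zero, mul_zero]
      positivity
    · rw [abs_mul, mul_left_comm]
      exact mul_le_mul (hδB j) (hy j hj hδ) (by positivity) hB
  have hsum : H * |c + ∑ j ∈ J, δ j * y j| ≤ (Fintype.card κ * B + 1) * b := by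
    calc H * |c + ∑ j ∈ J, δ j * y j| ≤ H * (|c| + ∑ j ∈ J, |δ j * y j|) := by
          gcongr
          exact (abs_add_le _ _).trans (by gcongr; exact abs_sum_le_sum_abs _ _)
      _ = H * |c| + ∑ j ∈ J, H * |δ j * y j| := by rw [mul_add, mul_sum]
      _ ≤ b + ∑ _j ∈ J, B * b := add_le_add hc (sum_le_sum hterm)
      _ ≤ b + Fintype.card κ * (B * b) := by
          rw [sum_const, nsmul_eq_mul]
          gcongr
          exact card_le_univ J
      _ = (Fintype.card κ * B + 1) * b := by ring
  refine le_of_mul_le_mul_left ?_ hw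
  calc (Fintype.card κ * B + 1) * (2 * |c + ∑ j ∈ J, δ j * y j|)
      = 2 * (Fintype.card κ * B + 1) * |c + ∑ j ∈ J, δ j * y j| := by ring
    _ ≤ H * |c + ∑ j ∈ J, δ j * y j| := by gcongr
    _ ≤ (Fintype.card κ * B + 1) * b := hsum

variable [LinearOrder κ] {n : ℕ} {t : Fin n → ℝ}

theorem IsLacunary_s1.le_add_sum_or_add_sum_le (ht : IsLacunary_s1 H t) (hLt : ∀ i, 2 * L ≤ t i)
    (hH : 2 * (Fintype.card κ * B + 1) ≤ H) (hB : 0 ≤ B) (hδ : ∃ j, δ j ≠ 0)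
    (hδ1 : ∀ j, δ j ≠ 0 → 1 ≤ |δ j|) (hδB : ∀ j, |δ j| ≤ B) (hc : IsFarFrom H c t) :
    (∀ e : κ ↪o Fin n, L ≤ c + ∑ j, δ j * t (e j)) ∨
      ∀ e : κ ↪o Fin n, c + ∑ j, δ j * t (e j) ≤ -L := by
  have hH1 : 1 ≤ H := by linarith [mul_nonneg (Fintype.card κ).cast_nonneg hB]
  have habs (i : Fin n) : |t i| = t i := abs_of_pos (ht.1 i)
  -- If `c` is the larger side it governs the sign, and otherwise the last nonzero term does.
  obtain ⟨j₀, hj₀, hmax⟩ := exists_max_image {j | δ j ≠ 0} id (by simpa [Finset.Nonempty] using hδ)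
  simp only [mem_filter, mem_univ, true_and, id_eq] at hj₀ hmax
  rcases hc with hc | hc
  · refine forall_le_or_forall_le_of_abs_add_le
      ((le_total 0 c).imp (fun h _ => h) fun h _ => h) fun e => ?_
    have hsum : 2 * |∑ j, δ j * t (e j)| ≤ |c| := by
      simpa only [zero_add] using two_mul_abs_add_sum_mul_le (c := 0) (J := univ) hH hB hδB
        (by simp only [abs_zero, mul_zero, abs_nonneg]) fun j _ _ => (habs (e j)).symm ▸ hc (e j)
    have htc : t (e j₀) ≤ |c| :=
      (le_mul_of_one_le_left (ht.1 _).le hH1).trans (hc (e j₀))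
    linarith [hLt (e j₀)]
  · have hsplit (e : κ ↪o Fin n) : c + ∑ j, δ j * t (e j) =
        δ j₀ * t (e j₀) + (c + ∑ j ∈ univ.erase j₀, δ j * t (e j)) := by
      rw [← add_sum_erase univ _ (mem_univ j₀), add_left_comm]
    simp only [hsplit]
    refine forall_le_or_forall_le_of_abs_add_le ((le_total 0 (δ j₀)).imp
      (fun h e => mul_nonneg h (ht.1 _).le)
      fun h e => mul_nonpos_of_nonpos_of_nonneg h (ht.1 _).le) fun e => ?_
    have hrest : 2 * |c + ∑ j ∈ univ.erase j₀, δ j * t (e j)| ≤ t (e j₀) :=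
      two_mul_abs_add_sum_mul_le hH hB hδB (hc _) fun j hj hδj => by
        rw [habs]
        exact ht.2 (e.strictMono (lt_of_le_of_ne (hmax j hδj) (ne_of_mem_erase hj)))
    have hlead : t (e j₀) ≤ |δ j₀ * t (e j₀)| := by
      rw [abs_mul, habs]
      exact le_mul_of_one_le_left (ht.1 _).le (hδ1 j₀ hj₀)
    linarith [hLt (e j₀)]

end Dichotomy

theorem sign_add_eq_sign_of_abs_lt {u v : ℝ} (h : |v| < |u|) :
    SignType.sign (u + v) = SignType.sign u := by
  rcases lt_trichotomy u 0 with hu | rfl | hu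
  · rw [sign_neg hu, sign_neg]
    linarith [le_abs_self v, abs_of_neg hu]
  · exact absurd h (by simp only [abs_zero, abs_nonneg, not_lt])
  · rw [sign_pos hu, sign_pos]
    linarith [neg_abs_le v, abs_of_pos hu]

theorem abs_sum_lt_of_card_mul_le {ι : Type*} {s : Finset ι} {K : ℕ} {F : ι → ℝ} {b : ℝ}
    (hK : #s < K) (hb : 0 < b) (hF : ∀ i ∈ s, K * |F i| ≤ b) : |∑ i ∈ s, F i| < b := by
  have hK0 : (0 : ℝ) < K := by exact_mod_cast hK.trans_le' (Nat.zero_le _)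
  refine lt_of_mul_lt_mul_left ?_ hK0.le
  calc K * |∑ i ∈ s, F i| ≤ K * ∑ i ∈ s, |F i| := by gcongr; exact abs_sum_le_sum_abs _ _
    _ ≤ ∑ _i ∈ s, b := by rw [mul_sum]; exact sum_le_sum hF
    _ = #s * b := by rw [sum_const, nsmul_eq_mul]
    _ < K * b := by gcongr

theorem exists_sign_sum_eq_of_dominance {ι X : Type*} (A : Finset ι) {F : ι → X → ℝ}
    (hsign : ∀ α ∈ A, ∃ s : SignType, ∀ x, SignType.sign (F α x) = s)
    (hdom : ∀ α ∈ A, ∀ β ∈ A, α ≠ β →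
      (∀ x, #A * |F β x| ≤ |F α x|) ∨ ∀ x, #A * |F α x| ≤ |F β x|) :
    ∃ s : SignType, ∀ x, SignType.sign (∑ α ∈ A, F α x) = s := by
  classical
  rcases isEmpty_or_nonempty X with _ | ⟨⟨x₀⟩⟩
  · exact ⟨0, isEmptyElim⟩
  rcases A.eq_empty_or_nonempty with rfl | hA
  · exact ⟨0, fun x => by rw [sum_empty, sign_zero]⟩
  have hzero {α : ι} (hα : α ∈ A) {x y : X} (h : F α x = 0) : F α y = 0 := by
    obtain ⟨s, hs⟩ := hsign α hα
    rw [← sign_eq_zero_iff, hs y, ← hs x, h, sign_zero]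
  obtain ⟨α, hα, hmax⟩ := exists_max_image A (fun α => |F α x₀|) hA
  obtain ⟨s, hs⟩ := hsign α hα
  by_cases h0 : F α x₀ = 0
  · refine ⟨0, fun x => ?_⟩
    have hx₀ : ∀ β ∈ A, F β x₀ = 0 := fun β hβ =>
      abs_nonpos_iff.1 ((hmax β hβ).trans_eq (by rw [h0, abs_zero]))
    rw [sum_eq_zero fun β hβ => hzero hβ (hx₀ β hβ), sign_zero]
  · refine ⟨s, fun x => ?_⟩
    have hrest : ∀ β ∈ A.erase α, #A * |F β x| ≤ |F α x| := by
      intro β hβ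
      obtain ⟨hne, hβA⟩ := mem_erase.1 hβ
      refine (hdom α hα β hβA hne.symm).elim (fun h => h x) fun h => absurd (h x₀) (not_le.2 ?_)
      refine (hmax β hβA).trans_lt (lt_mul_of_one_lt_left (abs_pos.2 h0) ?_)
      exact_mod_cast one_lt_card.2 ⟨α, hα, β, hβA, hne.symm⟩
    rw [← add_sum_erase A _ hα, sign_add_eq_sign_of_abs_lt, hs]
    exact abs_sum_lt_of_card_mul_le (card_erase_lt_of_mem hα)
      (abs_pos.2 fun hx => h0 (hzero hα hx)) hrest

theorem exists_eval_affine_eq_sum {κ : Type*} [Fintype κ] (f : MvPolynomial κ ℝ) :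
    ∃ A : Finset (κ →₀ ℕ), ∀ p c : ℝ, ∃ C : (κ →₀ ℕ) → ℝ, ∀ y : κ → ℝ,
      MvPolynomial.eval (fun j => p + c * y j) f = ∑ α ∈ A, C α * ∏ j, y j ^ α j := by
  -- Expanding with `p` and `c` as indeterminates shows that the exponents do not depend on them.
  let F : MvPolynomial κ (MvPolynomial (Fin 2) ℝ) :=
    MvPolynomial.aeval (fun j => MvPolynomial.C (MvPolynomial.X 0) +
      MvPolynomial.C (MvPolynomial.X 1) * MvPolynomial.X j) f
  refine ⟨F.support, fun p c =>
    ⟨fun α => MvPolynomial.eval ![p, c] (F.coeff α), fun y => ?_⟩⟩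
  rw [← MvPolynomial.eval₂_eq']
  simp only [F]
  induction f using MvPolynomial.induction_on with
  | C r =>
    rw [MvPolynomial.aeval_C, IsScalarTower.algebraMap_apply ℝ (MvPolynomial (Fin 2) ℝ)]
    simp [MvPolynomial.algebraMap_eq]
  | add f g hf hg => simp [hf, hg, MvPolynomial.eval₂_add]
  | mul_X f j hf => simp [hf, MvPolynomial.eval₂_mul, MvPolynomial.eval₂_add]

theorem mul_abs_mul_exp_le {K C D x y : ℝ} (hK : 0 < K) (hC : C ≠ 0) (hD : D ≠ 0)
    (h : Real.log K ≤ Real.log |C| - Real.log |D| + (x - y)) :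
    K * |D * Real.exp y| ≤ |C * Real.exp x| := by
  have hlog {a z : ℝ} (ha : a ≠ 0) : Real.log |a * Real.exp z| = Real.log |a| + z := by
    rw [Real.log_abs, Real.log_abs, Real.log_mul ha (Real.exp_ne_zero z), Real.log_exp]
  rw [← Real.log_le_log_iff (by positivity) (by positivity),
    Real.log_mul hK.ne' (by positivity), hlog hC, hlog hD]
  linarith

/-- The polynomial `f` has the same sign on all increasing tuples of terms of `b`, the tuples being
given by order embeddings of the index sets. -/
def HasConstantSign {k n : ℕ} (f : MvPolynomial (Fin k) ℝ) (b : Fin n → ℝ) : Prop :=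
  ∃ s : SignType, ∀ e : Fin k ↪o Fin n, SignType.sign (MvPolynomial.eval (b ∘ e) f) = s

theorem one_le_abs_natCast_sub {a b : ℕ} (h : a ≠ b) : (1 : ℝ) ≤ |(a : ℝ) - b| :=
  Nat.pairwise_one_le_dist h

theorem IsLacunary_s1.monomial_le_or_monomial_le {κ : Type*} [Fintype κ] [LinearOrder κ]
    {n B K : ℕ} {H C D ε : ℝ} {t : Fin n → ℝ} {α β : κ →₀ ℕ} (ht : IsLacunary_s1 H t) (hK : K ≠ 0)
    (hε : |ε| = 1) (hαβ : α ≠ β) (hα : α.degree ≤ B) (hβ : β.degree ≤ B)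
    (hKt : ∀ i, 2 * Real.log K ≤ t i) (hH : 2 * (Fintype.card κ * B + 1) ≤ H)
    (hfar : IsFarFrom H (Real.log |C| - Real.log |D|) t) :
    (∀ e : κ ↪o Fin n, K * |D * Real.exp (∑ j, ε * β j * t (e j))| ≤
        |C * Real.exp (∑ j, ε * α j * t (e j))|) ∨
      ∀ e : κ ↪o Fin n, K * |C * Real.exp (∑ j, ε * α j * t (e j))| ≤
        |D * Real.exp (∑ j, ε * β j * t (e j))| := by
  have hK0 : (0 : ℝ) < K := by positivity
  rcases eq_or_ne C 0 with rfl | hC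
  · exact .inr fun e => by simp only [zero_mul, abs_zero, mul_zero, abs_nonneg]
  rcases eq_or_ne D 0 with rfl | hD
  · exact .inl fun e => by simp only [zero_mul, abs_zero, mul_zero, abs_nonneg]
  have habs (j : κ) : |ε * ((α j : ℝ) - β j)| = |(α j : ℝ) - β j| := by rw [abs_mul, hε, one_mul]
  have hle {γ : κ →₀ ℕ} (hγ : γ.degree ≤ B) (j : κ) : (γ j : ℝ) ≤ B := by
    exact_mod_cast (Finsupp.le_degree j γ).trans hγ
  have hdiff (e : κ ↪o Fin n) : ∑ j, ε * α j * t (e j) - ∑ j, ε * β j * t (e j) =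
      ∑ j, ε * ((α j : ℝ) - β j) * t (e j) := by
    rw [← sum_sub_distrib]
    exact sum_congr rfl fun j _ => by ring
  obtain ⟨j₁, hj₁⟩ := DFunLike.ne_iff.1 hαβ
  have hε0 : ε ≠ 0 := abs_ne_zero.1 (hε ▸ one_ne_zero)
  refine (ht.le_add_sum_or_add_sum_le (δ := fun j => ε * ((α j : ℝ) - β j)) hKt hH
    (Nat.cast_nonneg B) ⟨j₁, ?_⟩ (fun j hj => ?_) (fun j => ?_) hfar).imp
    (fun h e => mul_abs_mul_exp_le hK0 hC hD ?_) fun h e => mul_abs_mul_exp_le hK0 hD hC ?_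
  · exact mul_ne_zero hε0 (sub_ne_zero.2 (Nat.cast_injective.ne hj₁))
  · rw [habs]
    exact one_le_abs_natCast_sub fun heq => hj (by rw [heq, sub_self, mul_zero])
  · rw [habs]
    exact abs_sub_le_of_nonneg_of_le (Nat.cast_nonneg _) (hle hα j) (Nat.cast_nonneg _) (hle hβ j)
  · rw [hdiff]
    exact h e
  · linarith [h e, hdiff e]

theorem exists_hasConstantSign_of_isFarFrom {k : ℕ} (f : MvPolynomial (Fin k) ℝ) :
    ∃ (H₀ : ℝ) (K : ℕ), ∀ p c ε : ℝ, |ε| = 1 → ∃ cs : Finset ℝ, #cs ≤ K ∧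
      ∀ H, H₀ ≤ H → ∀ (n : ℕ) (t : Fin n → ℝ), IsLacunary_s1 H t → (∀ i, H ≤ t i) →
        (∀ d ∈ cs, IsFarFrom H d t) → HasConstantSign f fun i => p + c * Real.exp (ε * t i) := by
  obtain ⟨A, hA⟩ := exists_eval_affine_eq_sum f
  refine ⟨max (2 * (Fintype.card (Fin k) * (A.sup Finsupp.degree : ℕ) + 1)) (2 * Real.log #A),
    #(A ×ˢ A), fun p c ε hε => ?_⟩
  obtain ⟨C, hC⟩ := hA p c
  refine ⟨(A ×ˢ A).image fun x => Real.log |C x.1| - Real.log |C x.2|, card_image_le,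
    fun H hH n t ht hHt hfar => ?_⟩
  obtain ⟨hdegree, hcard⟩ := max_le_iff.1 hH
  obtain ⟨s, hs⟩ := exists_sign_sum_eq_of_dominance (X := Fin k ↪o Fin n) A
    (F := fun α e => C α * Real.exp (∑ j, ε * α j * t (e j)))
    (fun α _ => ⟨SignType.sign (C α), fun e => by
      rw [sign_mul, sign_pos (Real.exp_pos _), mul_one]⟩)
    fun α hα β hβ hne => ht.monomial_le_or_monomial_le (card_ne_zero_of_mem hα) hε hne
      (le_sup (f := Finsupp.degree) hα) (le_sup (f := Finsupp.degree) hβ)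
      (fun i => hcard.trans (hHt i)) hdegree (hfar _ (mem_image_of_mem _ (mk_mem_product hα hβ)))
  refine ⟨s, fun e => ?_⟩
  have hmonomial (α : Fin k →₀ ℕ) :
      ∏ j, Real.exp (ε * t (e j)) ^ α j = Real.exp (∑ j, ε * α j * t (e j)) := by
    rw [Real.exp_sum]
    exact prod_congr rfl fun j _ => by rw [← Real.exp_nat_mul, mul_left_comm, mul_assoc]
  rw [← hs e, Function.comp_def, hC]
  simp only [hmonomial]

theorem exists_forall_hasConstantSign_of_isFarFrom {ι : Type*} [Finite ι] {k : ι → ℕ}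
    (f : ∀ x, MvPolynomial (Fin (k x)) ℝ) :
    ∃ (H₀ : ℝ) (K : ℕ), ∀ p c ε : ℝ, |ε| = 1 → ∃ cs : Finset ℝ, #cs ≤ K ∧
      ∀ H, H₀ ≤ H → ∀ (n : ℕ) (t : Fin n → ℝ), IsLacunary_s1 H t → (∀ i, H ≤ t i) →
        (∀ d ∈ cs, IsFarFrom H d t) →
          ∀ x, HasConstantSign (f x) fun i => p + c * Real.exp (ε * t i) := by
  classical
  have := Fintype.ofFinite ι
  choose H₀ K h using fun x => exists_hasConstantSign_of_isFarFrom (f x)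
  obtain ⟨H₁, hH₁⟩ := (Set.finite_range H₀).bddAbove
  refine ⟨H₁, ∑ x, K x, fun p c ε hε => ?_⟩
  choose cs hcs hsign using fun x => h x p c ε hε
  refine ⟨univ.biUnion cs, card_biUnion_le.trans (sum_le_sum fun x _ => hcs x), ?_⟩
  exact fun H hH n t ht hHt hfar x => hsign x H ((hH₁ (Set.mem_range_self x)).trans hH) n t ht hHt
    fun d hd => hfar d (mem_biUnion.2 ⟨x, mem_univ x, hd⟩)

theorem strictMono_or_strictAnti_add_mul_exp {n : ℕ} {p c ε : ℝ} (hc : c ≠ 0) (hε : ε ≠ 0)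
    {t : Fin n → ℝ} (ht : StrictMono t) :
    StrictMono (fun i => p + c * Real.exp (ε * t i)) ∨
      StrictAnti fun i => p + c * Real.exp (ε * t i) := by
  have hexp : StrictMono (fun i => Real.exp (ε * t i)) ∨
      StrictAnti fun i => Real.exp (ε * t i) :=
    hε.lt_or_gt.symm.imp (fun h => Real.exp_strictMono.comp (ht.const_mul h))
      fun h => Real.exp_strictMono.comp_strictAnti fun _ _ hij => mul_lt_mul_of_neg_left (ht hij) h
  rcases hc.lt_or_gt with hc | hc <;> rcases hexp with h | h
  · exact .inr fun _ _ hij => add_lt_add_right (mul_lt_mul_of_neg_left (h hij) hc) p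
  · exact .inl fun _ _ hij => add_lt_add_right (mul_lt_mul_of_neg_left (h hij) hc) p
  · exact .inl fun _ _ hij => add_lt_add_right (mul_lt_mul_of_pos_left (h hij) hc) p
  · exact .inr fun _ _ hij => add_lt_add_right (mul_lt_mul_of_pos_left (h hij) hc) p

theorem exists_hasConstantSign_mem_of_card {ι : Type*} [Finite ι] {k : ι → ℕ}
    (f : ∀ x, MvPolynomial (Fin (k x)) ℝ) :
    ∃ D : ℕ, ∀ n, 1 ≤ n → ∀ S : Finset ℝ, 4 ^ 4 ^ (D * n) ≤ #S →
      ∃ b : Fin n → ℝ, (StrictMono b ∨ StrictAnti b) ∧ (∀ i, b i ∈ S) ∧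
        ∀ x, HasConstantSign (f x) b := by
  obtain ⟨H₀, K, hsign⟩ := exists_forall_hasConstantSign_of_isFarFrom f
  obtain ⟨g, hg⟩ := pow_unbounded_of_one_lt (max H₀ 1) one_lt_two
  obtain ⟨hH₀, hH1⟩ := max_lt_iff.1 hg
  have hg0 : 0 < g := Nat.pos_of_ne_zero fun h => by simp [h] at hH1
  have hH2 : (2 : ℝ) ≤ 2 ^ g := le_self_pow₀ one_le_two hg0.ne'
  have hpow : (2 : ℝ) ^ (2 * g) = (2 ^ g) ^ 2 := by rw [mul_comm, pow_mul]
  refine ⟨2 * g * (K + 2), fun n hn S hS => ?_⟩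
  have hlen : 2 * g * ((K + 1) * n + 1) ≤ 2 * g * (K + 2) * n := by
    rw [mul_assoc _ (K + 2)]
    gcongr
    lia
  obtain ⟨p, c, ε, u, hc, hε, hu, hlog, hmem⟩ := exists_isLacunary_exp_mem
    (2 * g * ((K + 1) * n + 1)) (hS.trans' (by gcongr <;> norm_num))
  obtain ⟨φ, hφ, hlow⟩ := hu.exists_comp_pow (2 * g) one_lt_two (by positivity) hlog
  rw [hpow] at hφ hlow
  obtain ⟨cs, hcs, hfar⟩ := hsign p c ε hε
  obtain ⟨ψ, hψ⟩ := hφ.exists_comp_isFarFrom (by positivity) hcs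
  have hlarge (i) : 2 ^ g ≤ u (φ i) := by nlinarith [hlow i, Real.log_two_gt_d9]
  have ht : IsLacunary_s1 (2 ^ g) (u ∘ φ ∘ ψ) := (hφ.comp ψ).of_le (by nlinarith)
  exact ⟨fun i => p + c * Real.exp (ε * (u ∘ φ ∘ ψ) i),
    strictMono_or_strictAnti_add_mul_exp hc (abs_ne_zero.1 (hε ▸ one_ne_zero)) (ht.strictMono hH1),
    fun i => hmem _, hfar _ hH₀.le n _ ht (fun i => hlarge _) hψ⟩

namespace HasConstantSign

variable {k n : ℕ} {f : MvPolynomial (Fin k) ℝ} {b : Fin n → ℝ}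

theorem of_const {v : ℝ} (hb : ∀ i, b i = v) : HasConstantSign f b :=
  ⟨SignType.sign (MvPolynomial.eval (fun _ => v) f), fun e => by
    simp only [Function.comp_def, hb]⟩

theorem comp_rev (h : HasConstantSign (MvPolynomial.rename Fin.rev f) b) :
    HasConstantSign f (b ∘ Fin.rev) := by
  obtain ⟨s, hs⟩ := h
  refine ⟨s, fun e => ?_⟩
  let e' : Fin k ↪o Fin n := .ofStrictMono (fun j => (e j.rev).rev)
    fun i j hij => Fin.rev_lt_rev.2 (e.strictMono (Fin.rev_lt_rev.2 hij))
  have he' : e' ∘ Fin.rev = Fin.rev ∘ e := funext fun j => congrArg (Fin.rev ∘ e) j.rev_rev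
  rw [← hs e', MvPolynomial.eval_rename, Function.comp_assoc, Function.comp_assoc, he']

end HasConstantSign

theorem exists_strictMono_hasConstantSign_mem_of_card {ι : Type*} [Finite ι] {k : ι → ℕ}
    (f : ∀ x, MvPolynomial (Fin (k x)) ℝ) :
    ∃ D : ℕ, ∀ n, 1 ≤ n → ∀ S : Finset ℝ, 4 ^ 4 ^ (D * n) ≤ #S →
      ∃ b : Fin n → ℝ, StrictMono b ∧ (∀ i, b i ∈ S) ∧
        ∀ x, HasConstantSign (f x) b ∧ HasConstantSign (f x) (b ∘ Fin.rev) := by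
  -- Reading `b` backwards amounts to reversing the variables, so both families are handled at once.
  obtain ⟨D, hD⟩ := exists_hasConstantSign_mem_of_card fun x : ι × Bool =>
    cond x.2 (f x.1) (MvPolynomial.rename Fin.rev (f x.1))
  refine ⟨D, fun n hn S hS => ?_⟩
  obtain ⟨b, hb | hb, hmem, hsign⟩ := hD n hn S hS
  · exact ⟨b, hb, hmem, fun x => ⟨hsign (x, true), (hsign (x, false)).comp_rev⟩⟩
  · refine ⟨b ∘ Fin.rev, fun i j hij => hb (Fin.rev_lt_rev.2 hij), fun i => hmem _,
      fun x => ⟨(hsign (x, false)).comp_rev, ?_⟩⟩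
    simpa only [Function.comp_def, Fin.rev_rev] using! hsign (x, true)

theorem sq_four_pow_four_pow_mul_lt (D : ℕ) {n : ℕ} (hn : 1 ≤ n) :
    4 ^ 4 ^ (D * n) * 4 ^ 4 ^ (D * n) * n < 2 ^ 2 ^ ((2 * D + 3) * n) := by
  have h4 (m : ℕ) : 4 ^ m = 2 ^ (2 * m) := by rw [pow_mul]; norm_num
  have hn' : n ≤ 2 ^ (2 * (D * n) + n + 1) :=
    Nat.lt_two_pow_self.le.trans (Nat.pow_le_pow_right two_pos (by lia))
  have hD : 2 * (2 * 2 ^ (2 * (D * n))) ≤ 2 ^ (2 * (D * n) + n + 1) := by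
    rw [← pow_succ', ← pow_succ']
    exact Nat.pow_le_pow_right two_pos (by lia)
  calc 4 ^ 4 ^ (D * n) * 4 ^ 4 ^ (D * n) * n = 2 ^ (2 * (2 * 2 ^ (2 * (D * n)))) * n := by
        rw [← sq, ← pow_mul', h4, h4]
    _ < 2 ^ (2 * (2 * 2 ^ (2 * (D * n)))) * 2 ^ n := by gcongr; exact Nat.lt_two_pow_self
    _ = 2 ^ (2 * (2 * 2 ^ (2 * (D * n))) + n) := (pow_add _ _ _).symm
    _ ≤ 2 ^ 2 ^ ((2 * D + 3) * n) := by
        refine Nat.pow_le_pow_right two_pos ?_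
        calc 2 * (2 * 2 ^ (2 * (D * n))) + n ≤ 2 ^ (2 * (D * n) + n + 2) := by
              rw [pow_succ 2 (2 * (D * n) + n + 1)]; lia
          _ ≤ 2 ^ ((2 * D + 3) * n) := Nat.pow_le_pow_right two_pos (by lia)

theorem exists_hasConstantSign_comp {ι : Type*} [Finite ι] {k : ι → ℕ}
    (f : ∀ x, MvPolynomial (Fin (k x)) ℝ) :
    ∃ D : ℕ, 0 < D ∧ ∀ n, 1 ≤ n → ∀ N, 2 ^ 2 ^ (D * n) ≤ N → ∀ a : Fin N → ℝ,
      ∃ φ : Fin n ↪o Fin N, ∀ x, HasConstantSign (f x) (a ∘ φ) := by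
  obtain ⟨D, hD⟩ := exists_strictMono_hasConstantSign_mem_of_card f
  refine ⟨2 * D + 3, by positivity, fun n hn N hN a => ?_⟩
  have hmem {φ : Fin (4 ^ 4 ^ (D * n)) ↪o Fin N} (hφ : Function.Injective (a ∘ φ)) :
      ∃ b : Fin n → ℝ, StrictMono b ∧ (∃ ψ : Fin n → Fin _, a ∘ φ ∘ ψ = b) ∧
        ∀ x, HasConstantSign (f x) b ∧ HasConstantSign (f x) (b ∘ Fin.rev) := by
    obtain ⟨b, hb, hS, hsign⟩ := hD n hn (univ.image (a ∘ φ)) (by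
      rw [card_image_of_injective _ hφ, card_univ, Fintype.card_fin])
    simp only [mem_image, mem_univ, true_and] at hS
    choose ψ hψ using hS
    exact ⟨b, hb, ⟨ψ, funext hψ⟩, hsign⟩
  rcases exists_strictMono_or_strictAnti_or_const a
      ((sq_four_pow_four_pow_mul_lt D hn).trans_le (by rwa [Fintype.card_fin])) with
    ⟨φ, hφ⟩ | ⟨φ, hφ⟩ | ⟨φ, v, hv⟩
  · obtain ⟨_, hψ, ⟨ψ, rfl⟩, hsign⟩ := hmem hφ.injective
    exact ⟨.ofStrictMono (φ ∘ ψ) fun i j hij => φ.strictMono (hφ.lt_iff_lt.1 (hψ hij)),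
      fun x => (hsign x).1⟩
  · obtain ⟨_, hψ, ⟨ψ, rfl⟩, hsign⟩ := hmem hφ.injective
    exact ⟨.ofStrictMono (φ ∘ ψ ∘ Fin.rev) fun i j hij =>
      φ.strictMono (hφ.lt_iff_gt.1 (hψ (Fin.rev_lt_rev.2 hij))), fun x => (hsign x).2⟩
  · exact ⟨φ, fun x => .of_const hv⟩

theorem holdsEverywhere_or_holdsEverywhere_not_of_hasConstantSign {k m n : ℕ}
    {Φ : (Fin k → ℝ) → Prop} {p : Fin m → MvPolynomial (Fin k) ℝ} {S : Set (Fin m → SignType)}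
    (hΦ : ∀ x, Φ x ↔ (fun i => SignType.sign (MvPolynomial.eval x (p i))) ∈ S) {b : Fin n → ℝ}
    (hb : ∀ i, HasConstantSign (p i) b) :
    HoldsEverywhere Φ b ∨ HoldsEverywhere (fun x => ¬ Φ x) b := by
  choose s hs using hb
  have hiff (e : Fin k → Fin n) (he : StrictMono e) : Φ (fun j => b (e j)) ↔ s ∈ S := by
    rw [hΦ, ← funext fun i => hs i (.ofStrictMono e he)]
    rfl
  exact (em (s ∈ S)).imp (fun h e he => (hiff e he).2 h) fun h e he => mt (hiff e he).1 h

/-- for every finite set of one-dimensional semialgebraic predicates there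
is `C > 0` such that every sequence of length at least `2^(2^(C·n))` has an `n`-term
subsequence on which each predicate holds either everywhere or nowhere. -/
theorem stmt1 {r : ℕ} (k : Fin r → ℕ) (Φ : ∀ i, (Fin (k i) → ℝ) → Prop)
    (hsa : ∀ i, IsSemialgebraic (Φ i)) :
    ∃ C : ℝ, 0 < C ∧ ∀ n : ℕ, 1 ≤ n → ∀ N : ℕ,
      (2 : ℝ) ^ ((2 : ℝ) ^ (C * (n : ℝ))) ≤ (N : ℝ) →
      ∀ a : Fin N → ℝ, ∃ φ : Fin n → Fin N, StrictMono φ ∧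
        ∀ i, HoldsEverywhere (Φ i) (fun j => a (φ j)) ∨
          HoldsEverywhere (fun x => ¬ Φ i x) (fun j => a (φ j)) := by
  choose m p S hS using hsa
  obtain ⟨D, hD, hsub⟩ := exists_hasConstantSign_comp fun x : Σ i, Fin (m i) => p x.1 x.2
  refine ⟨D, by exact_mod_cast hD, fun n hn N hN a => ?_⟩
  have hN' : 2 ^ 2 ^ (D * n) ≤ N := by
    have hcast : (2 : ℝ) ^ ((D : ℝ) * n) = (2 ^ (D * n) : ℕ) := by
      rw [← Nat.cast_mul, Real.rpow_natCast, Nat.cast_pow, Nat.cast_ofNat]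
    rw [hcast, Real.rpow_natCast] at hN
    exact_mod_cast hN
  obtain ⟨φ, hφ⟩ := hsub n hn N hN' a
  exact ⟨φ, φ.strictMono, fun i =>
    holdsEverywhere_or_holdsEverywhere_not_of_hasConstantSign (hS i) fun l => hφ ⟨i, l⟩⟩
end

section
/- Effective compactness for the multipartite setting: for all positive integers d, D, k there exists N such that for all finite sets P and Q of real polynomials in the d·k coordinates of k points of ℝ^d, each polynomial of total degree at most D, the following are equivalent for the predicate Φ(x₁,…,x_k) := (∀p ∈ P, p(x₁,…,x_k) = 0) ∧ (∀q ∈ Q, q(x₁,…,x_k) > 0): (i) there exist sets A₁,…,A_k ⊆ ℝ^d, each of cardinality N, such that Φ(a₁,…,a_k) holds for every choice of a₁ ∈ A₁, …, a_k ∈ A_k; (ii) there exist infinite sets X₁,…,X_k ⊆ ℝ^d such that Φ(x₁,…,x_k) holds for every choice of x₁ ∈ X₁, …, x_k ∈ X_k. -/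
/-!
Freezing all points but one turns `P` into a set of polynomials of degree at most `D` on `ℝ^κ`, so
everything rests on a uniform bound for the number of isolated points of the zero set of such a
system. Over the reals the system can be replaced by a single polynomial of degree at most `2 * D`,
a sum of squares, and the zero sets in question are then fibers of one family over the space of
coefficients. The fibers of any algebraic family have a bounded number of isolated points, by
Noetherian induction. For a prime ideal `I`, either each coordinate is algebraic over the
parameters, which bounds the number of points of a fiber unless a coefficient vanishes there, or
some derivation over the parameters preserves `I` without mapping all coordinates into `I`. In the
latter case the flow of this vector field stays inside the fiber, so that no point at which the
field is nonzero is isolated.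

Given finite sets `A i` with more elements than this bound, replace them in turn by the zero sets
of the frozen systems. Each of the new sets accumulates at a point `a i ∈ A i`, and the strict
inequalities persist near `a`.
-/

open Filter hiding map
open MvPolynomial
open scoped Topology Matrix

universe u

theorem eventuallyEq_zero_of_hasDerivAt_linear {E : Type*} [NormedAddCommGroup E]
    [NormedSpace ℝ E] {L : ℝ → E →L[ℝ] E} {u : ℝ → E} {t₀ : ℝ} (hL : ContinuousAt L t₀)
    (hu : ∀ᶠ t in 𝓝 t₀, HasDerivAt u (L t (u t)) t) (h₀ : u t₀ = 0) : u =ᶠ[𝓝 t₀] 0 := by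
  have hbound : ∀ᶠ t in 𝓝 t₀, ‖L t‖₊ < ‖L t₀‖₊ + 1 :=
    hL.nnnorm.eventually_lt_const (lt_add_one _)
  refine ODE_solution_unique_of_eventually (v := fun t => L t) (s := fun _ => Set.univ)
    (hbound.mono fun t ht => ((L t).lipschitz.weaken ht.le).lipschitzOnWith)
    (hu.mono fun t ht => ⟨ht, trivial⟩) (Eventually.of_forall fun t => ⟨?_, trivial⟩) h₀
  simp

theorem eventuallyEq_zero_of_hasDerivAt_mulVec {ι : Type*} [Fintype ι]
    {M : ℝ → Matrix ι ι ℝ} {u : ℝ → ι → ℝ} {t₀ : ℝ} (hM : ContinuousAt M t₀)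
    (hu : ∀ᶠ t in 𝓝 t₀, HasDerivAt u (M t *ᵥ u t) t) (h₀ : u t₀ = 0) : u =ᶠ[𝓝 t₀] 0 := by
  classical
  have hL : Continuous (Matrix.toLin' ≪≫ₗ LinearMap.toContinuousLinearMap :
      Matrix ι ι ℝ ≃ₗ[ℝ] (ι → ℝ) →L[ℝ] (ι → ℝ)) :=
    LinearMap.continuous_of_finiteDimensional (LinearEquiv.toLinearMap _)
  exact eventuallyEq_zero_of_hasDerivAt_linear (hL.continuousAt.comp hM) hu h₀

section Flow

variable {σ : Type*}

/-- The vector field on `ℝ^σ` corresponding to a derivation `θ` of the real polynomial ring: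
`θ` is `∑ i, θ (X i) • ∂/∂X i`, so the `i`-th component of the field is the function `θ (X i)`. -/
noncomputable def derivationField (θ : Derivation ℝ (MvPolynomial σ ℝ) (MvPolynomial σ ℝ))
    (x : σ → ℝ) : σ → ℝ :=
  fun i => aeval x (θ (X i))

variable {θ : Derivation ℝ (MvPolynomial σ ℝ) (MvPolynomial σ ℝ)}
  {I : Ideal (MvPolynomial σ ℝ)} {γ : ℝ → σ → ℝ} {t₀ : ℝ}

theorem hasDerivAt_aeval_of_derivationField {t : ℝ}
    (hγ : HasDerivAt γ (derivationField θ (γ t)) t) (g : MvPolynomial σ ℝ) :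
    HasDerivAt (fun s => aeval (γ s) g) (aeval (γ t) (θ g)) t := by
  induction g using MvPolynomial.induction_on with
  | C a => simpa using hasDerivAt_const t a
  | add p q hp hq => simpa using hp.fun_add hq
  | mul_X p i hp =>
    have hprod := hp.fun_mul (hasDerivAt_pi.1 hγ i)
    simp only [map_mul, aeval_X, Derivation.leibniz, smul_eq_mul, map_add]
    exact hprod.congr_deriv (by rw [derivationField]; ring)

theorem contDiff_aeval [Fintype σ] {n : WithTop ℕ∞} (g : MvPolynomial σ ℝ) :
    ContDiff ℝ n fun x : σ → ℝ => aeval x g := by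
  induction g using MvPolynomial.induction_on with
  | C a => simpa using contDiff_const
  | add p q hp hq => simpa using hp.add hq
  | mul_X p i hp => simpa using hp.mul (contDiff_apply ℝ ℝ i)

theorem exists_isIntegralCurveAt_derivationField [Fintype σ]
    (θ : Derivation ℝ (MvPolynomial σ ℝ) (MvPolynomial σ ℝ)) (x : σ → ℝ) (t₀ : ℝ) :
    ∃ γ : ℝ → σ → ℝ, γ t₀ = x ∧ IsIntegralCurveAt γ (fun _ => derivationField θ) t₀ := by
  obtain ⟨γ, hγ₀, ε, hε, hγ⟩ :=
    ContDiffAt.exists_forall_mem_closedBall_exists_eq_forall_mem_Ioo_hasDerivAt₀ (x₀ := x)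
      (contDiff_pi.2 fun i => contDiff_aeval (θ (X i))).contDiffAt t₀
  exact ⟨γ, hγ₀, eventually_of_mem
    (Ioo_mem_nhds (sub_lt_self t₀ hε) (lt_add_of_pos_right t₀ hε)) hγ⟩

/-- Along the flow, generators of an invariant ideal solve a homogeneous linear system. -/
theorem eventually_mem_zeroLocus_of_isIntegralCurveAt [Fintype σ]
    (hγ : IsIntegralCurveAt γ (fun _ => derivationField θ) t₀) (hθ : ∀ g ∈ I, θ g ∈ I)
    (h₀ : γ t₀ ∈ zeroLocus ℝ I) : ∀ᶠ t in 𝓝 t₀, γ t ∈ zeroLocus ℝ I := by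
  obtain ⟨S, rfl⟩ : I.FG := IsNoetherian.noetherian I
  have hexpand (g : S) : ∃ m : S → MvPolynomial σ ℝ, ∑ h : S, m h • h.1 = θ g.1 := by
    have hmem := hθ g (Ideal.subset_span g.2)
    rwa [← Subtype.range_coe (s := (S : Set (MvPolynomial σ ℝ))),
      Submodule.mem_span_range_iff_exists_fun] at hmem
  choose m hm using hexpand
  have hcont : ContinuousAt (fun t => Matrix.of fun g h => aeval (γ t) (m g h)) t₀ :=
    continuousAt_pi.2 fun g => continuousAt_pi.2 fun h =>
      (continuous_eval (m g h)).continuousAt.comp hγ.continuousAt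
  have hlinear : ∀ᶠ t in 𝓝 t₀, HasDerivAt (fun t (g : S) => aeval (γ t) g.1)
      ((Matrix.of fun g h => aeval (γ t) (m g h)) *ᵥ fun g : S => aeval (γ t) g.1) t := by
    filter_upwards [hγ] with t ht
    refine hasDerivAt_pi.2 fun g => ?_
    convert! hasDerivAt_aeval_of_derivationField ht g.1 using 1
    simp [← hm, Matrix.mulVec, dotProduct]
  have hzero := eventuallyEq_zero_of_hasDerivAt_mulVec hcont hlinear
    (funext fun g => h₀ g.1 (Ideal.subset_span g.2))
  filter_upwards [hzero] with t ht
  rw [zeroLocus_span]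
  exact fun g hg => congrFun ht ⟨g, hg⟩

theorem mem_derivedSet_zeroLocus_of_derivation [Finite σ] {x : σ → ℝ} (hθ : ∀ g ∈ I, θ g ∈ I)
    (hx : x ∈ zeroLocus ℝ I) {i : σ} (hi : aeval x (θ (X i)) ≠ 0) :
    x ∈ derivedSet (zeroLocus ℝ I) := by
  have := Fintype.ofFinite σ
  obtain ⟨γ, rfl, hγ⟩ := exists_isIntegralCurveAt_derivationField θ x 0
  have hleaves : Tendsto γ (𝓝[≠] 0) (𝓝[≠] γ 0) :=
    hγ.hasDerivAt.tendsto_nhdsNE fun h => hi (congrFun h i)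
  have hstays := eventually_mem_zeroLocus_of_isIntegralCurveAt hγ hθ hx
  rw [mem_derivedSet, accPt_iff_frequently_nhdsNE]
  exact hleaves.frequently (hstays.filter_mono nhdsWithin_le_nhds).frequently

end Flow

section Algebra

theorem exists_derivation_ne_zero_of_not_isAlgebraic {K L : Type*} [Field K] [Field L]
    [CharZero K] [Algebra K L] [Algebra.EssFiniteType K L] (h : ¬ Algebra.IsAlgebraic K L) :
    ∃ D : Derivation K L L, D ≠ 0 := by
  by_contra! hD
  have hunramified : Algebra.FormallyUnramified K L := by
    refine ⟨⟨fun a b => ?_⟩⟩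
    rw [← sub_eq_zero, ← Module.forall_dual_apply_eq_zero_iff L]
    intro f
    have hf : f = 0 := (KaehlerDifferential.linearMapEquivDerivation K L).injective
      ((hD _).trans (hD _).symm)
    rw [hf, LinearMap.zero_apply]
  have hseparable := (Algebra.FormallyUnramified.iff_isSeparable K L).1 hunramified
  exact h inferInstance

attribute [local instance] FractionRing.liftAlgebra in
theorem exists_derivation_ne_zero_of_not_isAlgebraic_of_isDomain
    {R L : Type*} [CommRing R] [IsDomain R] [Field L]
    [CharZero L] [Algebra R L] [FaithfulSMul R L] [Algebra.EssFiniteType R L]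
    (h : ¬ Algebra.IsAlgebraic R L) : ∃ D : Derivation R L L, D ≠ 0 := by
  have : CharZero (FractionRing R) := (algebraMap (FractionRing R) L).charZero
  have : Algebra.EssFiniteType (FractionRing R) L := .of_comp R _ L
  obtain ⟨D, hD⟩ := exists_derivation_ne_zero_of_not_isAlgebraic (K := FractionRing R)
    (mt (IsFractionRing.comap_isAlgebraic_iff (A := R)).2 h)
  exact ⟨D.restrictScalars R, fun h0 => hD <| Derivation.ext fun y => DFunLike.congr_fun h0 y⟩

theorem exists_aeval_eq_zero_or_exists_derivation_ne_zero (C L : Type*) [CommRing C] [Field L]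
    [CharZero L] [Algebra C L] [Algebra.EssFiniteType C L] :
    (∀ y : L, ∃ p : Polynomial C, p.map (algebraMap C L) ≠ 0 ∧ Polynomial.aeval y p = 0) ∨
      ∃ D : Derivation C L L, D ≠ 0 := by
  -- `C → L` need not be injective, so we argue over its image.
  let C' := (⊥ : Subalgebra C L)
  have : Algebra.EssFiniteType C' L := .of_comp C C' L
  refine or_iff_not_imp_right.2 fun hD y => ?_
  have halg : Algebra.IsAlgebraic C' L := by
    by_contra h
    obtain ⟨D, hD'⟩ := exists_derivation_ne_zero_of_not_isAlgebraic_of_isDomain h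
    exact hD ⟨D.restrictScalars C, fun h0 => hD' <|
      Derivation.ext fun y => DFunLike.congr_fun h0 y⟩
  obtain ⟨p', hp'0, hp'⟩ := halg.isAlgebraic y
  have hsurj : Function.Surjective (algebraMap C C') := fun z =>
    (Algebra.mem_bot.1 z.2).imp fun _ h => Subtype.ext h
  obtain ⟨p, rfl⟩ := Polynomial.map_surjective _ hsurj p'
  refine ⟨p, fun h0 => hp'0 ?_, by rwa [Polynomial.aeval_map_algebraMap] at hp'⟩
  rw [IsScalarTower.algebraMap_eq C C' L, ← Polynomial.map_map] at h0
  exact (Polynomial.map_eq_zero_iff (FaithfulSMul.algebraMap_injective C' L)).1 h0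

variable {σ C : Type*} [CommRing C]

/-- Clearing the denominators of the `D Xᵢ`. -/
theorem exists_derivation_algebraMap_residueField_eq_mul [Finite σ]
    (I : Ideal (MvPolynomial σ C)) [I.IsPrime] (D : Derivation C I.ResidueField I.ResidueField) :
    ∃ (θ : Derivation C (MvPolynomial σ C) (MvPolynomial σ C)) (s : I.ResidueField), s ≠ 0 ∧
      ∀ g, algebraMap _ I.ResidueField (θ g) = s * D (algebraMap _ I.ResidueField g) := by
  obtain ⟨s, hs⟩ := IsLocalization.exist_integer_multiples_of_finite
    (nonZeroDivisors (MvPolynomial σ C ⧸ I))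
    fun i : σ => D (algebraMap (MvPolynomial σ C) I.ResidueField (X i))
  choose h hh using hs
  choose r hr using fun i => Ideal.Quotient.mk_surjective (h i)
  set s' := algebraMap _ I.ResidueField s.1
  refine ⟨mkDerivation C r, s', by simp [s'], fun g => ?_⟩
  refine DFunLike.congr_fun (derivation_ext (D₁ :=
    (Algebra.linearMap (MvPolynomial σ C) I.ResidueField).compDer (mkDerivation C r))
    (D₂ := s' • D.compAlgebraMap (MvPolynomial σ C)) fun i => ?_) g
  simp [← Ideal.algebraMap_quotient_residueField_mk, hr, hh, s', Algebra.smul_def]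

theorem derivation_residueField_eq_zero (I : Ideal (MvPolynomial σ C)) [I.IsPrime]
    {D : Derivation C I.ResidueField I.ResidueField}
    (hD : ∀ i, D (algebraMap (MvPolynomial σ C) I.ResidueField (X i)) = 0) : D = 0 := by
  have hpoly (g) : D (algebraMap (MvPolynomial σ C) I.ResidueField g) = 0 :=
    DFunLike.congr_fun (derivation_ext (D₁ := D.compAlgebraMap (MvPolynomial σ C)) (D₂ := 0) hD) g
  ext y
  obtain ⟨a, b, -, rfl⟩ := IsFractionRing.div_surjective (A := MvPolynomial σ C ⧸ I) y
  obtain ⟨a, rfl⟩ := Ideal.Quotient.mk_surjective a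
  obtain ⟨b, rfl⟩ := Ideal.Quotient.mk_surjective b
  simp [Derivation.leibniz_div, hpoly]

theorem exists_aeval_X_mem_or_exists_derivation [Finite σ] [Algebra ℚ C]
    (I : Ideal (MvPolynomial σ C)) [I.IsPrime] :
    (∀ i, ∃ p : Polynomial C, (∃ n, MvPolynomial.C (p.coeff n) ∉ I) ∧
      Polynomial.aeval (X i : MvPolynomial σ C) p ∈ I) ∨
    ∃ θ : Derivation C (MvPolynomial σ C) (MvPolynomial σ C),
      (∀ g ∈ I, θ g ∈ I) ∧ ∃ i, θ (X i) ∉ I := by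
  have : Algebra.EssFiniteType C I.ResidueField := .comp _ (MvPolynomial σ C) _
  have : CharZero I.ResidueField := charZero_of_injective_ringHom
    ((algebraMap C I.ResidueField).comp (algebraMap ℚ C)).injective
  have hker (g) := Ideal.algebraMap_residueField_eq_zero (I := I) (x := g)
  refine (exists_aeval_eq_zero_or_exists_derivation_ne_zero C I.ResidueField).imp
    (fun halg i => ?_) fun ⟨D, hD⟩ => ?_
  · obtain ⟨p, hp0, hp⟩ := halg (algebraMap (MvPolynomial σ C) _ (X i))
    obtain ⟨n, hn⟩ := not_forall.1 (mt Polynomial.ext hp0)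
    refine ⟨p, ⟨n, fun h => hn ?_⟩, ?_⟩
    · rwa [Polynomial.coeff_map, Polynomial.coeff_zero,
        IsScalarTower.algebraMap_apply C (MvPolynomial σ C), hker]
    · rwa [Polynomial.aeval_algebraMap_apply, hker] at hp
  · obtain ⟨θ, s, hs, hθ⟩ := exists_derivation_algebraMap_residueField_eq_mul I D
    refine ⟨θ, fun g hg => ?_, ?_⟩
    · rw [← hker] at hg ⊢
      rw [hθ, hg, map_zero, mul_zero]
    · by_contra! hX
      refine hD (derivation_residueField_eq_zero I fun i => ?_)
      exact (mul_eq_zero.1 ((hθ _).symm.trans ((hker _).2 (hX i)))).resolve_left hs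

end Algebra

section IsolatedPoints

variable {X : Type*} [TopologicalSpace X] {S T : Set X}

/-- The isolated points of a set, with respect to its subspace topology. -/
def isolatedPoints (S : Set X) : Set X :=
  S \ derivedSet S

theorem isolatedPoints_inter_subset (h : S ⊆ T) : isolatedPoints T ∩ S ⊆ isolatedPoints S :=
  fun _ hx => ⟨hx.2, fun hacc => hx.1.2 (derivedSet_mono _ _ h hacc)⟩

theorem inter_derivedSet_nonempty_of_lt_encard {N : ℕ∞} (hST : S ⊆ T)
    (hT : (isolatedPoints T).encard ≤ N) (hS : N < S.encard) : (S ∩ derivedSet T).Nonempty := by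
  by_contra h
  have hdisj : ∀ x ∈ S, x ∉ derivedSet T := fun x hxS hxT => h ⟨x, hxS, hxT⟩
  have hisolated : S ⊆ isolatedPoints T := fun x hx => ⟨hST hx, hdisj x hx⟩
  exact ((Set.encard_le_encard hisolated).trans hT).not_gt hS

end IsolatedPoints

section Specialization

variable {σ C S : Type*} [CommRing C] [CommRing S] (c : C →+* S)

/-- The base change along `c` of a derivation over `C`, obtained by applying `c` to the
coefficients of the polynomials `θ (X i)`. -/
noncomputable def mapDerivation (θ : Derivation C (MvPolynomial σ C) (MvPolynomial σ C)) :
    Derivation S (MvPolynomial σ S) (MvPolynomial σ S) :=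
  mkDerivation S fun i => map c (θ (X i))

variable {θ : Derivation C (MvPolynomial σ C) (MvPolynomial σ C)}

theorem mapDerivation_map (g : MvPolynomial σ C) : mapDerivation c θ (map c g) = map c (θ g) := by
  induction g using MvPolynomial.induction_on with
  | C a => simp
  | add p q hp hq => simp only [map_add, hp, hq]
  | mul_X p i hp =>
    simp only [map_mul, map_X, Derivation.leibniz, hp, smul_eq_mul, map_add]
    simp [mapDerivation]

theorem mapDerivation_mem_map {I : Ideal (MvPolynomial σ C)} (hθ : ∀ g ∈ I, θ g ∈ I) :
    ∀ g ∈ I.map (map c), mapDerivation c θ g ∈ I.map (map c) := by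
  intro g hg
  induction hg using Submodule.span_induction with
  | mem g hg =>
    obtain ⟨g, hg, rfl⟩ := hg
    rw [mapDerivation_map]
    exact Ideal.mem_map_of_mem _ (hθ g hg)
  | zero => simp
  | add p q _ _ hp hq => simpa using add_mem hp hq
  | smul p q hq hθq =>
    rw [smul_eq_mul, Derivation.leibniz, smul_eq_mul, smul_eq_mul]
    exact add_mem (Ideal.mul_mem_left _ _ hθq) (Ideal.mul_mem_right _ _ hq)

end Specialization

section Fiber

variable {σ C : Type*} [CommRing C] {I : Ideal (MvPolynomial σ C)}

/-- The real fiber at `c` of the family of varieties cut out by `I` over `Spec C`: a ring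
homomorphism `c : C →+* ℝ` is a real point of the parameter space. -/
noncomputable def realFiber (c : C →+* ℝ) (I : Ideal (MvPolynomial σ C)) : Set (σ → ℝ) :=
  zeroLocus ℝ (I.map (map c))

theorem mem_realFiber_iff {c : C →+* ℝ} {x : σ → ℝ} :
    x ∈ realFiber c I ↔ ∀ g ∈ I, aeval x (map c g) = 0 := by
  rw [realFiber, Ideal.map, zeroLocus_span, Set.mem_ofPred_eq, Set.forall_mem_image]
  rfl

theorem realFiber_span (c : C →+* ℝ) (T : Set (MvPolynomial σ C)) :
    realFiber c (Ideal.span T) = {x | ∀ g ∈ T, aeval x (map c g) = 0} := by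
  rw [realFiber, Ideal.map_span, zeroLocus_span]
  simp only [Set.forall_mem_image]

theorem mem_realFiber_sup_span_singleton {c : C →+* ℝ} {a : MvPolynomial σ C} {x : σ → ℝ} :
    x ∈ realFiber c (I ⊔ Ideal.span {a}) ↔ x ∈ realFiber c I ∧ aeval x (map c a) = 0 := by
  rw [← Ideal.span_eq I, ← Ideal.span_union, realFiber_span, realFiber_span]
  simp [or_imp, forall_and, and_comm]

theorem mem_derivedSet_realFiber_of_derivation [Finite σ] {c : C →+* ℝ}
    {θ : Derivation C (MvPolynomial σ C) (MvPolynomial σ C)} (hθ : ∀ g ∈ I, θ g ∈ I)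
    {x : σ → ℝ} (hx : x ∈ realFiber c I) {i : σ} (hi : aeval x (map c (θ (X i))) ≠ 0) :
    x ∈ derivedSet (realFiber c I) := by
  rw [← mapDerivation_map, map_X] at hi
  exact mem_derivedSet_zeroLocus_of_derivation (mapDerivation_mem_map c hθ) hx hi

end Fiber

theorem encard_zeroLocus_le_prod_natDegree {σ k K : Type*} [Fintype σ] [Field k] [Field K]
    [Algebra k K] {J : Ideal (MvPolynomial σ k)} {p : σ → Polynomial k} (hp₀ : ∀ i, p i ≠ 0)
    (hp : ∀ i, Polynomial.aeval (X i : MvPolynomial σ k) (p i) ∈ J) :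
    (zeroLocus K J).encard ≤ (∏ i, (p i).natDegree : ℕ) := by
  classical
  have hroots : zeroLocus K J ⊆ Set.univ.pi fun i => (p i).rootSet K := by
    intro x hx i _
    have hpx := hx _ (hp i)
    rw [← Polynomial.aeval_algHom_apply, aeval_X] at hpx
    exact Polynomial.mem_rootSet.2 ⟨hp₀ i, hpx⟩
  calc (zeroLocus K J).encard
    _ ≤ ∏ i, ((p i).rootSet K).encard :=
        (Set.encard_le_encard hroots).trans Set.encard_pi_eq_prod_encard.le
    _ ≤ ∏ i, ((p i).natDegree : ℕ∞) := Finset.prod_le_prod' fun i _ => by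
        rw [Polynomial.rootSet, Set.encard_coe_eq_coe_finsetCard, Nat.cast_le]
        exact (Multiset.toFinset_card_le _).trans
          ((Polynomial.card_roots' _).trans Polynomial.natDegree_map_le)
    _ = (∏ i, (p i).natDegree : ℕ) := by push_cast; rfl

section BoundedIsolatedFibers

variable {σ C : Type*} [CommRing C] {I : Ideal (MvPolynomial σ C)}

/-- The number of isolated points of the real fibers of the family cut out by `I` is bounded
uniformly in the fiber. -/
def BoundedIsolatedFibers (I : Ideal (MvPolynomial σ C)) : Prop :=
  ∃ N : ℕ, ∀ c : C →+* ℝ, (isolatedPoints (realFiber c I)).encard ≤ N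

namespace BoundedIsolatedFibers

theorem of_sup_span_singleton {ι : Type*} [Finite ι] (a : ι → MvPolynomial σ C) (M : ℕ)
    (hM : ∀ c : C →+* ℝ,
      (isolatedPoints (realFiber c I) ∩ {x | ∀ j, aeval x (map c (a j)) ≠ 0}).encard ≤ M)
    (ha : ∀ j, BoundedIsolatedFibers (I ⊔ Ideal.span {a j})) : BoundedIsolatedFibers I := by
  have := Fintype.ofFinite ι
  choose N hN using ha
  refine ⟨M + ∑ j, N j, fun c => ?_⟩
  set G := isolatedPoints (realFiber c I) ∩ {x | ∀ j, aeval x (map c (a j)) ≠ 0}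
  have hcover : isolatedPoints (realFiber c I) ⊆
      G ∪ ⋃ j, isolatedPoints (realFiber c (I ⊔ Ideal.span {a j})) := by
    intro x hx
    by_cases hxa : ∀ j, aeval x (map c (a j)) ≠ 0
    · exact .inl ⟨hx, hxa⟩
    · push Not at hxa
      obtain ⟨j, hj⟩ := hxa
      have hsub : realFiber c (I ⊔ Ideal.span {a j}) ⊆ realFiber c I := fun y hy =>
        (mem_realFiber_sup_span_singleton.1 hy).1
      exact .inr <| Set.mem_iUnion_of_mem j <|
        isolatedPoints_inter_subset hsub ⟨hx, mem_realFiber_sup_span_singleton.2 ⟨hx.1, hj⟩⟩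
  calc (isolatedPoints (realFiber c I)).encard
    _ ≤ G.encard + (⋃ j, isolatedPoints (realFiber c (I ⊔ Ideal.span {a j}))).encard :=
        (Set.encard_le_encard hcover).trans (Set.encard_union_le _ _)
    _ ≤ M + ∑ j, (N j : ℕ∞) := add_le_add (hM c) <|
        (Set.encard_iUnion_le_of_fintype _).trans <| Finset.sum_le_sum fun j _ => hN j c
    _ = (M + ∑ j, N j : ℕ) := by push_cast; rfl

theorem of_mul_mem {a b : MvPolynomial σ C} (hab : a * b ∈ I)
    (ha : BoundedIsolatedFibers (I ⊔ Ideal.span {a}))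
    (hb : BoundedIsolatedFibers (I ⊔ Ideal.span {b})) : BoundedIsolatedFibers I := by
  refine of_sup_span_singleton ![a, b] 0 (fun c => ?_) (Fin.forall_fin_two.2 ⟨ha, hb⟩)
  rw [Nat.cast_zero, nonpos_iff_eq_zero, Set.encard_eq_zero, Set.eq_empty_iff_forall_notMem]
  rintro x ⟨hx, hne⟩
  have hmul := mem_realFiber_iff.1 hx.1 _ hab
  rw [map_mul, map_mul] at hmul
  exact mul_ne_zero (hne 0) (hne 1) hmul

theorem of_derivation [Finite σ] {θ : Derivation C (MvPolynomial σ C) (MvPolynomial σ C)}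
    (hθ : ∀ g ∈ I, θ g ∈ I) (i : σ)
    (hi : BoundedIsolatedFibers (I ⊔ Ideal.span {θ (X i)})) : BoundedIsolatedFibers I := by
  refine of_sup_span_singleton (fun _ : Unit => θ (X i)) 0 (fun c => ?_) fun _ => hi
  rw [Nat.cast_zero, nonpos_iff_eq_zero, Set.encard_eq_zero, Set.eq_empty_iff_forall_notMem]
  rintro x ⟨hx, hne⟩
  exact hx.2 (mem_derivedSet_realFiber_of_derivation hθ hx.1 (hne ()))

theorem of_algebraic [Finite σ] (p : σ → Polynomial C)
    (hp : ∀ i, Polynomial.aeval (X i : MvPolynomial σ C) (p i) ∈ I) (n : σ → ℕ)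
    (hn : ∀ i, BoundedIsolatedFibers (I ⊔ Ideal.span {MvPolynomial.C ((p i).coeff (n i))})) :
    BoundedIsolatedFibers I := by
  have := Fintype.ofFinite σ
  refine of_sup_span_singleton _ (∏ i, (p i).natDegree) (fun c => ?_) hn
  obtain hempty | ⟨x, -, hx⟩ := (isolatedPoints (realFiber c I) ∩
    {x | ∀ i, aeval x (map c (MvPolynomial.C ((p i).coeff (n i)))) ≠ 0}).eq_empty_or_nonempty
  · exact hempty ▸ Set.encard_empty.trans_le zero_le
  have hp₀ (i) : (p i).map c ≠ 0 := fun h => hx i <| by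
    rw [map_C, ← Polynomial.coeff_map, h, Polynomial.coeff_zero, C_0, map_zero]
  have hpc (i) : Polynomial.aeval (X i : MvPolynomial σ ℝ) ((p i).map c) ∈ I.map (map c) := by
    have hcomp : (algebraMap ℝ (MvPolynomial σ ℝ)).comp c =
        (map c).comp (algebraMap C (MvPolynomial σ C)) := by ext; simp
    rw [← map_X c, ← Polynomial.map_aeval_eq_aeval_map hcomp]
    exact Ideal.mem_map_of_mem _ (hp i)
  calc _ ≤ (realFiber c I).encard := Set.encard_le_encard fun y hy => hy.1.1
    _ ≤ (∏ i, ((p i).map c).natDegree : ℕ) := encard_zeroLocus_le_prod_natDegree hp₀ hpc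
    _ ≤ (∏ i, (p i).natDegree : ℕ) :=
        Nat.cast_le.2 (Finset.prod_le_prod' fun i _ => Polynomial.natDegree_map_le)

end BoundedIsolatedFibers

theorem boundedIsolatedFibers [Finite σ] [IsNoetherianRing C] [Algebra ℚ C]
    (I : Ideal (MvPolynomial σ C)) : BoundedIsolatedFibers I := by
  induction I using WellFoundedGT.induction with
  | ind I ih =>
  have ih' {a} (ha : a ∉ I) : BoundedIsolatedFibers (I ⊔ Ideal.span {a}) :=
    ih _ (Submodule.lt_sup_iff_notMem.2 ha)
  by_cases hprime : I.IsPrime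
  · obtain halg | ⟨θ, hθ, i, hi⟩ := exists_aeval_X_mem_or_exists_derivation I
    · choose p hcoeff hp using halg
      choose n hn using hcoeff
      exact .of_algebraic p hp n fun i => ih' (hn i)
    · exact .of_derivation hθ i (ih' hi)
  · rw [Ideal.not_isPrime_iff] at hprime
    obtain rfl | ⟨a, ha, b, hb, hab⟩ := hprime
    · exact ⟨0, fun c => by simp [isolatedPoints, realFiber, Ideal.map_top]⟩
    · exact .of_mul_mem hab (ih' ha) (ih' hb)

end BoundedIsolatedFibers

section BoundedDegree

/-- The polynomial with exponents in `E` whose coefficients are independent indeterminates. -/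
noncomputable def genericPolynomial {σ : Type*} (R : Type*) [CommSemiring R]
    (E : Finset (σ →₀ ℕ)) : MvPolynomial σ (MvPolynomial E R) :=
  ∑ e : E, monomial e.1 (X e)

theorem map_genericPolynomial {σ R : Type*} [CommSemiring R] {E : Finset (σ →₀ ℕ)}
    {f : MvPolynomial σ R} (hf : f.support ⊆ E) :
    map (eval fun e => coeff e.1 f) (genericPolynomial R E) = f := by
  calc map (eval fun e => coeff e.1 f) (genericPolynomial R E)
    _ = ∑ e ∈ E, monomial e (coeff e f) := by
        simp only [genericPolynomial, map_sum, map_monomial, eval_X]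
        exact Finset.sum_coe_sort E fun e => monomial e (coeff e f)
    _ = ∑ e ∈ f.support, monomial e (coeff e f) := (Finset.sum_subset hf fun e _ he => by
        rw [notMem_support_iff.1 he, monomial_zero]).symm
    _ = f := f.support_sum_monomial_coeff

theorem exists_totalDegree_le_eval_eq_zero_iff {σ K : Type*} [Finite σ] [Field K]
    [LinearOrder K] [IsStrictOrderedRing K] {D : ℕ} (P : Set (MvPolynomial σ K))
    (hP : ∀ p ∈ P, p.totalDegree ≤ D) : ∃ f : MvPolynomial σ K, f.totalDegree ≤ 2 * D ∧
      ∀ x, eval x f = 0 ↔ ∀ p ∈ P, eval x p = 0 := by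
  obtain ⟨T, hTP, hT⟩ := (Submodule.fg_span_iff_fg_span_finset_subset P).1
    (IsNoetherian.noetherian (Ideal.span P))
  refine ⟨∑ p ∈ T, p ^ 2, totalDegree_finsetSum_le fun p hp =>
    (totalDegree_pow _ _).trans (Nat.mul_le_mul_left 2 (hP p (hTP hp))), fun x => ?_⟩
  have hsum : eval x (∑ p ∈ T, p ^ 2) = 0 ↔ ∀ p ∈ T, eval x p = 0 := by
    simp only [map_sum, map_pow]
    rw [Finset.sum_eq_zero_iff_of_nonneg fun _ _ => sq_nonneg _]
    simp only [sq_eq_zero_iff]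
  have hzero := congrArg (x ∈ zeroLocus K ·) hT
  simpa only [zeroLocus_span, Set.mem_ofPred_eq, aeval_eq_eval, RingHom.coe_coe, hsum, eq_iff_iff,
    Finset.mem_coe] using hzero.symm

theorem exists_encard_isolatedPoints_zeros_le (σ : Type*) [Finite σ] (D : ℕ) :
    ∃ N : ℕ, ∀ P : Set (MvPolynomial σ ℝ), (∀ p ∈ P, p.totalDegree ≤ D) →
      (isolatedPoints {x | ∀ p ∈ P, eval x p = 0}).encard ≤ N := by
  set E := (Finsupp.finite_of_degree_le (σ := σ) (2 * D)).toFinset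
  obtain ⟨N, hN⟩ := boundedIsolatedFibers (Ideal.span {genericPolynomial ℝ E})
  refine ⟨N, fun P hP => ?_⟩
  obtain ⟨f, hfdeg, hf⟩ := exists_totalDegree_le_eval_eq_zero_iff P hP
  have hsupp : f.support ⊆ E := fun e he =>
    (Set.Finite.mem_toFinset _).2 ((le_totalDegree he).trans hfdeg)
  have hfiber : realFiber (eval fun e => coeff e.1 f) (Ideal.span {genericPolynomial ℝ E}) =
      {x | ∀ p ∈ P, eval x p = 0} := by
    ext x
    simp only [realFiber_span, Set.mem_singleton_iff, forall_eq, Set.mem_ofPred_eq,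
      map_genericPolynomial hsupp, ← hf, aeval_eq_eval]
  exact hfiber ▸ hN _

end BoundedDegree

section Boxes

variable {ι X : Type*} [DecidableEq ι]

/-- The points `x` such that replacing by `x` the `i`-th entry of any tuple from `T` yields a
tuple in `V`. -/
def slice (V : Set (ι → X)) (i : ι) (T : Set (ι → X)) : Set X :=
  {x | ∀ y ∈ T, Function.update y i x ∈ V}

theorem subset_slice_pi {V : Set (ι → X)} {Y : ι → Set X} (hY : Set.univ.pi Y ⊆ V) (i : ι) :
    Y i ⊆ slice V i (Set.univ.pi Y) :=
  fun _ hx _ hy => hY <| (Set.update_mem_pi_iff_of_mem hy).2 fun _ => hx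

theorem pi_update_slice_subset {V : Set (ι → X)} {Y : ι → Set X} {i : ι} (hY : (Y i).Nonempty) :
    Set.univ.pi (Function.update Y i (slice V i (Set.univ.pi Y))) ⊆ V := by
  obtain ⟨b, hb⟩ := hY
  intro y hy
  have hyb : Function.update y i b ∈ Set.univ.pi Y := Set.update_mem_pi_iff.2
    ⟨fun j hj => by simpa [show j ≠ i from hj.2] using hy j trivial, fun _ => hb⟩
  have hyi : y i ∈ slice V i (Set.univ.pi Y) := by simpa using hy i trivial
  simpa using hyi _ hyb

variable [TopologicalSpace X] {V : Set (ι → X)} {A : ι → Set X} {N : ℕ∞}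

theorem exists_box_inter_derivedSet_nonempty
    (hV : ∀ i T, (isolatedPoints (slice V i T)).encard ≤ N)
    (hA : ∀ i, N < (A i).encard) (hAV : Set.univ.pi A ⊆ V) (s : Finset ι) :
    ∃ Y : ι → Set X, A ≤ Y ∧ Set.univ.pi Y ⊆ V ∧ ∀ i ∈ s, (A i ∩ derivedSet (Y i)).Nonempty := by
  induction s using Finset.induction_on with
  | empty => exact ⟨A, le_rfl, hAV, by simp⟩
  | insert i s _ ih =>
    obtain ⟨Y, hAY, hYV, hacc⟩ := ih
    set Z := slice V i (Set.univ.pi Y)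
    have hYZ : Y i ⊆ Z := subset_slice_pi hYV i
    have hAZ : (A i ∩ derivedSet Z).Nonempty :=
      inter_derivedSet_nonempty_of_lt_encard ((hAY i).trans hYZ) (hV i _) (hA i)
    refine ⟨Function.update Y i Z, hAY.trans (le_update_self_iff.2 hYZ),
      pi_update_slice_subset (hAZ.left.mono (hAY i)), fun j hj => ?_⟩
    obtain rfl | hji := eq_or_ne j i
    · rwa [Function.update_self]
    · rw [Function.update_of_ne hji]
      exact hacc j (Finset.mem_of_mem_insert_of_ne hj hji)

theorem exists_infinite_box_subset_inter [Finite ι] [T1Space X]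
    (hV : ∀ i T, (isolatedPoints (slice V i T)).encard ≤ N) {U : Set (ι → X)} (hU : IsOpen U)
    (hA : ∀ i, N < (A i).encard) (hAV : Set.univ.pi A ⊆ V ∩ U) :
    ∃ Y : ι → Set X, (∀ i, (Y i).Infinite) ∧ Set.univ.pi Y ⊆ V ∩ U := by
  have := Fintype.ofFinite ι
  obtain ⟨Y, -, hYV, hacc⟩ := exists_box_inter_derivedSet_nonempty hV hA
    (hAV.trans Set.inter_subset_left) Finset.univ
  choose a ha using fun i => hacc i (Finset.mem_univ i)
  have haU : U ∈ 𝓝 a := hU.mem_nhds (hAV fun i _ => (ha i).1).2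
  rw [nhds_pi, mem_pi'] at haU
  obtain ⟨I, W, hW, hWU⟩ := haU
  refine ⟨fun i => Y i ∩ W i, fun i => ?_, fun y hy => ⟨?_, ?_⟩⟩
  · have haccPt : AccPt (a i) (𝓟 (Y i ∩ W i)) := by
      rw [accPt_iff_frequently_nhdsNE]
      exact (accPt_iff_frequently_nhdsNE.1 (ha i).2).and_eventually
        (mem_nhdsWithin_of_mem_nhds (hW i))
    exact .of_accPt haccPt
  · exact hYV fun i _ => (hy i trivial).1
  · exact hWU fun i _ => (hy i trivial).2

end Boxes

section Freeze

theorem totalDegree_aeval_le {σ τ R : Type*} [CommSemiring R] {f : σ → MvPolynomial τ R} {n : ℕ}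
    (hf : ∀ i, (f i).totalDegree ≤ n) (p : MvPolynomial σ R) :
    (aeval f p).totalDegree ≤ p.totalDegree * n := by
  rw [aeval_def, eval₂_eq]
  refine totalDegree_finsetSum_le fun m hm => ?_
  calc (C (coeff m p) * ∏ i ∈ m.support, f i ^ m i).totalDegree
    _ ≤ ∑ i ∈ m.support, (f i ^ m i).totalDegree := by
        refine (totalDegree_mul _ _).trans ?_
        rw [totalDegree_C, zero_add]
        exact totalDegree_finsetProd _ _
    _ ≤ ∑ i ∈ m.support, m i * n := Finset.sum_le_sum fun i _ =>
        (totalDegree_pow _ _).trans (Nat.mul_le_mul_left _ (hf i))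
    _ = (m.sum fun _ => id) * n := (Finset.sum_mul _ _ _).symm
    _ ≤ p.totalDegree * n := Nat.mul_le_mul_right _ (le_totalDegree hm)

variable {ι : Type u} {κ R : Type*} [CommSemiring R] [DecidableEq ι]

/-- Freezing all points but the `i`-th one to their positions in `y`, in a polynomial in the
coordinates of an `ι`-tuple of points of `R^κ`. -/
noncomputable def freeze (i : ι) (y : ι → κ → R) :
    MvPolynomial (ι × κ) R →ₐ[R] MvPolynomial κ R :=
  aeval fun v => if v.1 = i then X v.2 else C (y v.1 v.2)

theorem eval_freeze (i : ι) (y : ι → κ → R) (x : κ → R) (p : MvPolynomial (ι × κ) R) :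
    eval x (freeze i y p) = eval (fun v => Function.update y i x v.1 v.2) p := by
  rw [freeze, ← aeval_eq_eval, ← aeval_eq_eval, comp_aeval_apply]
  congr 2 with v
  by_cases h : v.1 = i <;> simp [h]

theorem totalDegree_freeze_le (i : ι) (y : ι → κ → R) (p : MvPolynomial (ι × κ) R) :
    (freeze i y p).totalDegree ≤ p.totalDegree := by
  refine (totalDegree_aeval_le (n := 1) (fun v => ?_) p).trans (mul_one _).le
  split_ifs
  · exact (totalDegree_monomial_le _ _).trans (by simp)
  · simp

/-- The common zeros of a set of polynomials in the coordinates of an `ι`-tuple of points of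
`R^κ`, as a set of such tuples. -/
def jointZeros (P : Set (MvPolynomial (ι × κ) R)) : Set (ι → κ → R) :=
  {x | ∀ p ∈ P, eval (fun v => x v.1 v.2) p = 0}

theorem slice_jointZeros (P : Set (MvPolynomial (ι × κ) R)) (i : ι) (T : Set (ι → κ → R)) :
    slice (jointZeros P) i T =
      {x | ∀ r ∈ Set.image2 (fun y p => freeze i y p) T P, eval x r = 0} := by
  simp only [slice, jointZeros, Set.forall_mem_image2, eval_freeze, Set.mem_ofPred_eq]

theorem exists_encard_isolatedPoints_slice_jointZeros_le (κ : Type*) [Finite κ] (D : ℕ) :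
    ∃ N : ℕ, ∀ (ι : Type u) [DecidableEq ι] (P : Set (MvPolynomial (ι × κ) ℝ)),
      (∀ p ∈ P, p.totalDegree ≤ D) → ∀ (i : ι) (T : Set (ι → κ → ℝ)),
        (isolatedPoints (slice (jointZeros P) i T)).encard ≤ N := by
  obtain ⟨N, hN⟩ := exists_encard_isolatedPoints_zeros_le κ D
  refine ⟨N, fun ι _ P hP i T => ?_⟩
  rw [slice_jointZeros]
  refine hN _ (Set.forall_mem_image2.2 fun y _ p hp => ?_)
  exact (totalDegree_freeze_le i y p).trans (hP p hp)

end Freeze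

theorem stmt5_general (κ : Type*) [Finite κ] (D : ℕ) :
    ∃ N : ℕ, ∀ (ι : Type u) [Finite ι] (P : Set (MvPolynomial (ι × κ) ℝ)) (U : Set (ι → κ → ℝ)),
      (∀ p ∈ P, p.totalDegree ≤ D) → IsOpen U →
      ((∃ A : ι → Finset (κ → ℝ), (∀ i, (A i).card = N) ∧
          ∀ a : ι → κ → ℝ, (∀ i, a i ∈ A i) →
            (∀ p ∈ P, eval (fun v : ι × κ => a v.1 v.2) p = 0) ∧ a ∈ U) ↔
       (∃ X : ι → Set (κ → ℝ), (∀ i, (X i).Infinite) ∧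
          ∀ x : ι → κ → ℝ, (∀ i, x i ∈ X i) →
            (∀ p ∈ P, eval (fun v : ι × κ => x v.1 v.2) p = 0) ∧ x ∈ U)) := by
  classical
  obtain ⟨N, hN⟩ := exists_encard_isolatedPoints_slice_jointZeros_le.{u} κ D
  refine ⟨N + 1, fun ι _ P U hP hU => ⟨fun ⟨A, hcard, hA⟩ => ?_, fun ⟨X, hX, hXU⟩ => ?_⟩⟩
  · have hlarge (i) : (N : ℕ∞) < (A i : Set (κ → ℝ)).encard := by
      rw [Set.encard_coe_eq_coe_finsetCard, hcard i]
      exact Nat.cast_lt.2 N.lt_succ_self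
    obtain ⟨Y, hY, hYU⟩ := exists_infinite_box_subset_inter (hN ι P hP) hU hlarge
      fun a ha => hA a fun i => ha i trivial
    exact ⟨Y, hY, fun x hx => hYU fun i _ => hx i⟩
  · choose A hAX hcard using fun i => (hX i).exists_subset_card_eq (N + 1)
    exact ⟨A, hcard, fun a ha => hXU a fun i => hAX i (ha i)⟩

theorem isOpen_setOf_forall_eval_pos {ι κ : Type*} (Q : Finset (MvPolynomial (ι × κ) ℝ)) :
    IsOpen {x : ι → κ → ℝ | ∀ q ∈ Q, 0 < eval (fun v => x v.1 v.2) q} := by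
  simp only [Set.ofPred_forall]
  exact isOpen_biInter_finset fun q _ =>
    isOpen_lt continuous_const ((continuous_eval q).comp (by fun_prop))

/-- effective compactness for the multipartite setting: for all positive
`d, D, k` there is `N` such that for all finite sets `P`, `Q` of polynomials in the
`d·k` coordinates of `k` points of `ℝ^d`, all of total degree at most `D`, the
predicate `Φ(x₁,…,x_k) := (∀ p ∈ P, p = 0) ∧ (∀ q ∈ Q, q > 0)` holds everywhere on a
product of `k` sets of cardinality `N` iff it holds everywhere on a product of `k`
infinite sets. -/
theorem stmt5 (d D k : ℕ) (hd : 0 < d) (hD : 0 < D) (hk : 0 < k) :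
    ∃ N : ℕ, ∀ P Q : Finset (MvPolynomial (Fin k × Fin d) ℝ),
      (∀ p ∈ P, p.totalDegree ≤ D) → (∀ q ∈ Q, q.totalDegree ≤ D) →
      ((∃ A : Fin k → Finset (Fin d → ℝ), (∀ i, (A i).card = N) ∧
          ∀ a : Fin k → Fin d → ℝ, (∀ i, a i ∈ A i) →
            (∀ p ∈ P, MvPolynomial.eval (fun v => a v.1 v.2) p = 0) ∧
            (∀ q ∈ Q, 0 < MvPolynomial.eval (fun v => a v.1 v.2) q)) ↔
       (∃ X : Fin k → Set (Fin d → ℝ), (∀ i, (X i).Infinite) ∧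
          ∀ x : Fin k → Fin d → ℝ, (∀ i, x i ∈ X i) →
            (∀ p ∈ P, MvPolynomial.eval (fun v => x v.1 v.2) p = 0) ∧
            (∀ q ∈ Q, 0 < MvPolynomial.eval (fun v => x v.1 v.2) q))) := by
  obtain ⟨N, hN⟩ := stmt5_general (Fin d) D
  exact ⟨N, fun P Q hP _ => hN (Fin k) P _ hP (isOpen_setOf_forall_eval_pos Q)⟩
end

section
/- There exists a constant R₀ such that for every real R ≥ R₀ and every n ≥ 1, setting N := 2^(R^(2n)) (rounded up to an integer), every sequence (a₁,…,a_N) of real numbers admits an R-growing sequence b = (b₁,…,bₙ) of length n, real numbers A and B, and a transformation f ∈ {f₁, f₂} with f₁(x,X,Y) := X + Y·x and f₂(x,X,Y) := X + Y/x, such that either (f(b₁,A,B), f(b₂,A,B), …, f(bₙ,A,B)) or (f(bₙ,A,B), f(b_{n−1},A,B), …, f(b₁,A,B)) is a subsequence of (a₁,…,a_N). -/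
/-!
Fix a ratio `r` and a large finite set `S` of reals with minimum `a`, maximum `b` and diameter `D`.
The points at distance between `δ * D` and `D` from `a` fall into about `r * log δ⁻¹` cells in each
of which the distance to `a` varies by a factor of at most `exp r⁻¹`, so a cell is `r` times
shorter than its distance to `a`. Likewise about `r * log (1 - δ)⁻¹` cells around `b` contain all
other points. Passing to a crowded cell and iterating yields points of `S` whose distances to a
common `c ∈ S` grow geometrically with ratio `r`, to the left of `c` or to its right.

This is used twice. With `r = exp 1` it gives points `c ± exp (y i)` with `y (i + 1) ≥ y i + 1`.
With `r = R`, applied to the exponents `y i`, it gives `C` and `±(C - y i)` growing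
geometrically with ratio `R`, so `b i = exp (±(C - y i))` is `R`-growing, and
`exp (y i) = exp C / b i` or `exp C * b i`, which are the transformations `f₂` and `f₁`.
The order in which these values occur in `a` is controlled by first passing to a monotone
subsequence.
-/

/-- A sequence `b` is `R`-growing if `b₁ ≥ R` and `b_{i+1} ≥ b_i ^ R`
(real exponentiation). -/
def RGrowing (R : ℝ) {n : ℕ} (b : Fin n → ℝ) : Prop :=
  (∀ h : 0 < n, R ≤ b ⟨0, h⟩) ∧
  ∀ i : ℕ, ∀ h : i + 1 < n, b ⟨i, Nat.lt_of_succ_lt h⟩ ^ R ≤ b ⟨i + 1, h⟩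

/-- The two-parametric transformation `f₁(x, X, Y) = X + Y·x`. -/
noncomputable def f₁ (x X Y : ℝ) : ℝ := X + Y * x

/-- The two-parametric transformation `f₂(x, X, Y) = X + Y/x`. -/
noncomputable def f₂ (x X Y : ℝ) : ℝ := X + Y / x

open Finset Real
open scoped Pointwise

section Pigeonhole

variable {α : Type*} {S : Finset α} {g : α → ℝ} {m : ℝ}

theorem exists_subset_forall_sub_lt {a b ℓ : ℝ} (hℓ : 0 < ℓ) (hab : a ≤ b)
    (hg : ∀ z ∈ S, g z ∈ Set.Icc a b) (hm : 0 ≤ m) (hS : ((b - a) / ℓ + 1) * m ≤ #S) :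
    ∃ S' ⊆ S, m ≤ #S' ∧ ∀ u ∈ S', ∀ v ∈ S', g u - g v < ℓ := by
  classical
  have hcell : ∀ z ∈ S, ⌊(g z - a) / ℓ⌋₊ ∈ range (⌊(b - a) / ℓ⌋₊ + 1) := fun z hz => by
    rw [Finset.mem_range, Nat.lt_succ_iff]
    gcongr
    exact (hg z hz).2
  have hcells : ((⌊(b - a) / ℓ⌋₊ + 1 : ℕ) : ℝ) * m ≤ #S := by
    refine le_trans ?_ hS
    push_cast
    gcongr
    exact Nat.floor_le (div_nonneg (sub_nonneg.2 hab) hℓ.le)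
  obtain ⟨i, -, hi⟩ := exists_le_card_fiber_of_nsmul_le_card_of_maps_to (b := m) hcell
    ⟨0, by simp⟩ (by rwa [card_range, nsmul_eq_mul])
  refine ⟨_, filter_subset _ _, hi, fun u hu v hv => ?_⟩
  obtain ⟨-, hu⟩ := mem_filter.1 hu
  obtain ⟨hvS, hv⟩ := mem_filter.1 hv
  have hupper : (g u - a) / ℓ < i + 1 := hu ▸ Nat.lt_floor_add_one _
  have hlower : i ≤ (g v - a) / ℓ :=
    hv ▸ Nat.floor_le (div_nonneg (sub_nonneg.2 (hg v hvS).1) hℓ.le)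
  rw [div_lt_iff₀ hℓ] at hupper
  rw [le_div_iff₀ hℓ] at hlower
  linarith

theorem exists_subset_mul_sub_le {r δ D : ℝ} (hr : 0 < r) (hδ : 0 < δ) (hδ1 : δ ≤ 1) (hD : 0 < D)
    (hlo : ∀ z ∈ S, δ * D ≤ g z) (hhi : ∀ z ∈ S, g z ≤ D) (hm : 0 ≤ m)
    (hS : (r * log δ⁻¹ + 1) * m ≤ #S) :
    ∃ S' ⊆ S, m ≤ #S' ∧ ∀ c ∈ S', ∀ s ∈ S', r * (g c - g s) ≤ g c := by
  have hpos : ∀ z ∈ S, 0 < g z := fun z hz => (mul_pos hδ hD).trans_le (hlo z hz)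
  have hwidth : (log D - log (δ * D)) / r⁻¹ = r * log δ⁻¹ := by
    rw [log_mul hδ.ne' hD.ne', log_inv, div_inv_eq_mul]
    ring
  obtain ⟨S', hS', hcard, hlog⟩ := exists_subset_forall_sub_lt (g := fun z => log (g z))
    (inv_pos.2 hr) (log_le_log (by positivity) (mul_le_of_le_one_left hD.le hδ1))
    (fun z hz => ⟨log_le_log (by positivity) (hlo z hz), log_le_log (hpos z hz) (hhi z hz)⟩)
    hm (by rwa [hwidth])
  refine ⟨S', hS', hcard, fun c hc s hs => ?_⟩
  have hratio : 1 - r⁻¹ ≤ g s / g c := calc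
    1 - r⁻¹ ≤ exp (-r⁻¹) := one_sub_le_exp_neg _
    _ ≤ exp (log (g s) - log (g c)) := exp_le_exp.2 (by linarith [hlog c hc s hs])
    _ = g s / g c := by rw [exp_sub, exp_log (hpos s (hS' hs)), exp_log (hpos c (hS' hc))]
  rw [le_div_iff₀ (hpos c (hS' hc))] at hratio
  calc r * (g c - g s) ≤ r * (g c - (1 - r⁻¹) * g c) := by gcongr
    _ = g c := by field_simp; ring

end Pigeonhole

theorem exists_subset_mul_sub_le_sub_or {S : Finset ℝ} {r δ a b m₁ m₂ : ℝ} (hr : 0 < r)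
    (hδ : 0 < δ) (hδ1 : δ < 1) (hab : a < b) (hS : ∀ z ∈ S, z ∈ Set.Icc a b)
    (hm₁ : 0 ≤ m₁) (hm₂ : 0 ≤ m₂)
    (hcard : (r * log δ⁻¹ + 1) * m₁ + (r * log (1 - δ)⁻¹ + 1) * m₂ ≤ #S) :
    (∃ S' ⊆ S, m₁ ≤ #S' ∧ ∀ c ∈ S', ∀ s ∈ S', r * (c - s) ≤ c - a) ∨
      ∃ S' ⊆ S, m₂ ≤ #S' ∧ ∀ c ∈ S', ∀ s ∈ S', r * (s - c) ≤ b - c := by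
  set P := S.filter fun z => δ * (b - a) ≤ z - a
  set Q := S.filter fun z => ¬ δ * (b - a) ≤ z - a
  have hPQ : (#P : ℝ) + #Q = #S := by
    exact_mod_cast card_filter_add_card_filter_not (s := S) _
  rcases le_or_gt ((r * log δ⁻¹ + 1) * m₁) #P with hP | hP
  · obtain ⟨S', hS', hm, hfar⟩ := exists_subset_mul_sub_le (g := fun z => z - a) hr hδ hδ1.le
      (sub_pos.2 hab) (fun z hz => (mem_filter.1 hz).2)
      (fun z hz => sub_le_sub_right (hS z (filter_subset _ _ hz)).2 a) hm₁ hP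
    exact Or.inl ⟨S', hS'.trans (filter_subset _ _), hm, fun c hc s hs => by
      simpa using hfar c hc s hs⟩
  · obtain ⟨S', hS', hm, hfar⟩ := exists_subset_mul_sub_le (S := Q) (g := fun z => b - z) hr
      (sub_pos.2 hδ1) (by linarith) (sub_pos.2 hab)
      (fun z hz => by linarith [(mem_filter.1 hz).2])
      (fun z hz => sub_le_sub_left (hS z (filter_subset _ _ hz)).1 b) hm₂ (by linarith)
    exact Or.inr ⟨S', hS'.trans (filter_subset _ _), hm, fun c hc s hs => by
      simpa using hfar c hc s hs⟩

/-- `Spreads r t S p`: going left from some `c ∈ S` one meets `p + 1` points `s 0, …, s p` of `S`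
whose distances to `c` exceed `t` and grow by a factor of at least `r` at each step. The mirror
image, with the points to the right of `c`, is `Spreads r t (-S) p`. -/
def Spreads (r t : ℝ) (S : Finset ℝ) (p : ℕ) : Prop :=
  ∃ c ∈ S, ∃ s : ℕ → ℝ, (∀ i ≤ p, s i ∈ S) ∧ t < c - s 0 ∧
    ∀ i < p, r * (c - s i) ≤ c - s (i + 1)

namespace Spreads

variable {r t : ℝ} {S S' : Finset ℝ} {p : ℕ}

theorem zero {u v : ℝ} (hu : u ∈ S) (hv : v ∈ S) (h : t < v - u) : Spreads r t S 0 :=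
  ⟨v, hv, fun _ => u, fun _ _ => hu, h, by simp⟩

theorem mono (hS : S' ⊆ S) (h : Spreads r t S' p) : Spreads r t S p := by
  obtain ⟨c, hc, s, hs, ht, hgrow⟩ := h
  exact ⟨c, hS hc, s, fun i hi => hS (hs i hi), ht, hgrow⟩

theorem succ {e : ℝ} (hS : S' ⊆ S) (he : e ∈ S)
    (hfar : ∀ c ∈ S', ∀ s ∈ S', r * (c - s) ≤ c - e) (h : Spreads r t S' p) :
    Spreads r t S (p + 1) := by
  obtain ⟨c, hc, s, hs, ht, hgrow⟩ := h
  refine ⟨c, hS hc, fun i => if i ≤ p then s i else e, fun i _ => ?_, by simpa using ht,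
    fun i hi => ?_⟩
  · dsimp only
    split_ifs with hi
    exacts [hS (hs i hi), he]
  · rcases (Nat.lt_succ_iff.1 hi).lt_or_eq with hi | rfl
    · simpa [hi.le, Nat.succ_le_of_lt hi] using hgrow i hi
    · simpa using hfar c hc _ (hs i le_rfl)

end Spreads

theorem exists_subset_spreads_succ_or {S : Finset ℝ} {r δ m₁ m₂ : ℝ} (hr : 0 < r) (hδ : 0 < δ)
    (hδ1 : δ < 1) (hS : 1 < #S) (hm₁ : 0 ≤ m₁) (hm₂ : 0 ≤ m₂)
    (hcard : (r * log δ⁻¹ + 1) * m₁ + (r * log (1 - δ)⁻¹ + 1) * m₂ ≤ #S) :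
    (∃ S' ⊆ S, m₁ ≤ #S' ∧ ∀ t p, Spreads r t S' p → Spreads r t S (p + 1)) ∨
      ∃ S' ⊆ S, m₂ ≤ #S' ∧ ∀ t q, Spreads r t (-S') q → Spreads r t (-S) (q + 1) := by
  have hne : S.Nonempty := card_pos.1 (zero_lt_one.trans hS)
  rcases exists_subset_mul_sub_le_sub_or hr hδ hδ1 (min'_lt_max'_of_card S hS)
    (fun z hz => ⟨S.min'_le z hz, S.le_max' z hz⟩) hm₁ hm₂ hcard with
    ⟨S', hS', hm, hfar⟩ | ⟨S', hS', hm, hfar⟩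
  · exact Or.inl ⟨S', hS', hm, fun t p => Spreads.succ hS' (S.min'_mem hne) hfar⟩
  · refine Or.inr ⟨S', hS', hm, fun t q => Spreads.succ (e := -S.max' hne)
      (neg_subset_neg hS') (neg_mem_neg (S.max'_mem hne)) fun c hc s hs => ?_⟩
    linarith [hfar _ (mem_neg'.1 hc) _ (mem_neg'.1 hs)]

theorem spreads_or_spreads_neg {r t h δ x y : ℝ} (hr : 0 < r) (ht : 0 ≤ t) (hh : 0 ≤ h)
    (hδ : 0 < δ) (hδ1 : δ < 1) (hx : 1 ≤ x) (hy : 1 ≤ y)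
    (hxy : (r * log δ⁻¹ + 1) * y + (r * log (1 - δ)⁻¹ + 1) * x ≤ x * y)
    (p q : ℕ) {S : Finset ℝ} (hsep : ∀ S' ⊆ S, h ≤ #S' → ∃ u ∈ S', ∃ v ∈ S', t < v - u)
    (hcard : h * x ^ p * y ^ q ≤ #S) :
    Spreads r t S p ∨ Spreads r t (-S) q := by
  have hle : ∀ i j : ℕ, h ≤ h * x ^ i * y ^ j := fun i j => by
    rw [mul_assoc]
    exact le_mul_of_one_le_right hh
      (one_le_mul_of_one_le_of_one_le (one_le_pow₀ hx) (one_le_pow₀ hy))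
  induction p generalizing q S with
  | zero =>
    obtain ⟨u, hu, v, hv, huv⟩ := hsep S subset_rfl ((hle _ _).trans hcard)
    exact Or.inl (.zero hu hv huv)
  | succ p ihp =>
    induction q generalizing S with
    | zero =>
      obtain ⟨u, hu, v, hv, huv⟩ := hsep S subset_rfl ((hle _ _).trans hcard)
      exact Or.inr (.zero (neg_mem_neg hv) (neg_mem_neg hu) (by linarith))
    | succ q ihq =>
      obtain ⟨u, hu, v, hv, huv⟩ := hsep S subset_rfl ((hle _ _).trans hcard)
      have hone : 1 < #S := one_lt_card.2 ⟨u, hu, v, hv, by rintro rfl; linarith⟩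
      have hsum : (r * log δ⁻¹ + 1) * (h * x ^ p * y ^ (q + 1)) +
          (r * log (1 - δ)⁻¹ + 1) * (h * x ^ (p + 1) * y ^ q) ≤ #S := calc
        _ = h * x ^ p * y ^ q * ((r * log δ⁻¹ + 1) * y + (r * log (1 - δ)⁻¹ + 1) * x) := by ring
        _ ≤ h * x ^ p * y ^ q * (x * y) := by gcongr
        _ = h * x ^ (p + 1) * y ^ (q + 1) := by ring
        _ ≤ #S := hcard
      rcases exists_subset_spreads_succ_or hr hδ hδ1 hone (by positivity) (by positivity) hsum with
        ⟨S', hS', hm, hsucc⟩ | ⟨S', hS', hm, hsucc⟩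
      · exact (ihp (q + 1) (fun U hU => hsep U (hU.trans hS')) hm).imp (hsucc t p)
          (.mono (neg_subset_neg hS'))
      · exact (ihq (fun U hU => hsep U (hU.trans hS')) hm).imp (.mono hS') (hsucc t q)

section LogScale

theorem Spreads.exists_sub_exp_mem {M : ℕ} {S : Finset ℝ} (h : Spreads (exp 1) 0 S M) :
    ∃ (c : ℝ) (y : ℕ → ℝ), (∀ i ≤ M, c - exp (y i) ∈ S) ∧ ∀ i < M, y i + 1 ≤ y (i + 1) := by
  obtain ⟨c, -, s, hs, h0, hgrow⟩ := h
  have hpos : ∀ i ≤ M, 0 < c - s i := fun i => by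
    induction i with
    | zero => exact fun _ => h0
    | succ i ih => exact fun hi => (mul_pos (exp_pos 1) (ih (by omega))).trans_le (hgrow i hi)
  refine ⟨c, fun i => log (c - s i), fun i hi => ?_, fun i hi => ?_⟩
  · simpa [exp_log (hpos i hi)] using hs i hi
  · rw [le_log_iff_exp_le (hpos (i + 1) hi), exp_add, exp_log (hpos i hi.le), mul_comm]
    exact hgrow i hi

variable {y : ℕ → ℝ} {M : ℕ}

theorem monotoneOn_sub_natCast_of_add_one_le (hy : ∀ i < M, y i + 1 ≤ y (i + 1)) :
    MonotoneOn (fun i => y i - i) (Set.Iic M) :=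
  monotoneOn_of_le_add_one Set.ordConnected_Iic fun i _ _ hi => by
    push_cast
    linarith [hy i hi]

theorem strictMonoOn_of_add_one_le (hy : ∀ i < M, y i + 1 ≤ y (i + 1)) :
    StrictMonoOn y (Set.Iic M) := fun i hi j hj hij => by
  have hsub : y i - i ≤ y j - j := monotoneOn_sub_natCast_of_add_one_le hy hi hj hij.le
  have hcast : (i : ℝ) < j := Nat.cast_lt.2 hij
  linarith

theorem exists_card_sub_one_le_sub (hy : ∀ i < M, y i + 1 ≤ y (i + 1)) {Y : Finset ℝ}
    (hY : Y ⊆ (Iic M).image y) (hne : Y.Nonempty) :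
    ∃ u ∈ Y, ∃ v ∈ Y, (#Y : ℝ) - 1 ≤ v - u := by
  obtain ⟨I, hI, rfl⟩ := subset_image_iff.1 hY
  have hne : I.Nonempty := image_nonempty.1 hne
  have hwidth : #(I.image y) ≤ I.max' hne + 1 - I.min' hne := calc
    #(I.image y) ≤ #I := card_image_le
    _ ≤ #(Icc (I.min' hne) (I.max' hne)) :=
      card_le_card fun i hi => mem_Icc.2 ⟨I.min'_le i hi, I.le_max' i hi⟩
    _ = I.max' hne + 1 - I.min' hne := Nat.card_Icc _ _
  have hle : I.min' hne ≤ I.max' hne := I.min'_le_max' hne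
  have hsub : y (I.min' hne) - I.min' hne ≤ y (I.max' hne) - I.max' hne :=
    monotoneOn_sub_natCast_of_add_one_le hy (by simpa using hI (I.min'_mem hne))
      (by simpa using hI (I.max'_mem hne)) hle
  refine ⟨_, mem_image_of_mem y (I.min'_mem hne), _, mem_image_of_mem y (I.max'_mem hne), ?_⟩
  have hcast : (#(I.image y) : ℝ) + I.min' hne ≤ I.max' hne + 1 := by
    exact_mod_cast show #(I.image y) + I.min' hne ≤ I.max' hne + 1 by omega
  linarith

end LogScale

section Growing

variable {R : ℝ} {n : ℕ}

theorem rGrowing_exp {L : ℕ → ℝ} (h0 : R ≤ exp (L 0))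
    (h : ∀ i, i + 1 < n → R * L i ≤ L (i + 1)) : RGrowing R fun j : Fin n => exp (L j) := by
  refine ⟨fun _ => h0, fun i hi => ?_⟩
  rw [← exp_mul, mul_comm]
  exact exp_le_exp.2 (h i hi)

theorem exists_rGrowing (R : ℝ) (n : ℕ) : ∃ b : Fin n → ℝ, RGrowing R b :=
  ⟨_, rGrowing_exp (L := fun i => R ^ (i + 1))
    (by simpa using (le_add_of_nonneg_right zero_le_one).trans (add_one_le_exp R))
    fun i _ => (pow_succ' R (i + 1)).ge⟩

theorem RGrowing.one_lt {b : Fin n → ℝ} (hb : RGrowing R b) (hR : 1 < R) (j : Fin n) :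
    1 < b j := by
  obtain ⟨i, hi⟩ := j
  induction i with
  | zero => exact hR.trans_le (hb.1 hi)
  | succ i ih => exact (one_lt_rpow (ih (by omega)) (by linarith)).trans_le (hb.2 i hi)

theorem RGrowing.strictMono {b : Fin n → ℝ} (hb : RGrowing R b) (hR : 1 < R) : StrictMono b := by
  rcases n with _ | n
  · exact Subsingleton.strictMono b
  refine Fin.strictMono_iff_lt_succ.2 fun i => ?_
  exact (self_lt_rpow_of_one_lt (hb.one_lt hR i.castSucc) hR).trans_le (hb.2 i (by omega))

theorem Spreads.exists_rGrowing {Y : Finset ℝ} (hR : 0 < R) (h : Spreads R (log R) Y n) :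
    ∃ (C : ℝ) (b : Fin (n + 1) → ℝ), RGrowing R b ∧ ∀ j, 0 < b j ∧ C - log (b j) ∈ Y := by
  obtain ⟨C, -, s, hs, h0, hgrow⟩ := h
  refine ⟨C, _, rGrowing_exp (L := fun i => C - s i) ((log_lt_iff_lt_exp hR).1 h0).le
    fun i hi => hgrow i (by omega), fun j => ⟨exp_pos _, ?_⟩⟩
  simpa using hs j (by omega)

/-- `HasGrowingImage R n S`: the set `S` contains the image of an `R`-growing sequence of length
`n` under some `f₁(·, A, B)` or `f₂(·, A, B)`; requiring `B ≠ 0` makes this image injective. -/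
def HasGrowingImage (R : ℝ) (n : ℕ) (S : Finset ℝ) : Prop :=
  ∃ b : Fin n → ℝ, RGrowing R b ∧ ∃ A B : ℝ, B ≠ 0 ∧ ∃ f : ℝ → ℝ → ℝ → ℝ,
    (f = f₁ ∨ f = f₂) ∧ ∀ j, f (b j) A B ∈ S

theorem HasGrowingImage.of_neg {S : Finset ℝ} (h : HasGrowingImage R n (-S)) :
    HasGrowingImage R n S := by
  obtain ⟨b, hb, A, B, hB, f, hf, hmem⟩ := h
  refine ⟨b, hb, -A, -B, neg_ne_zero.2 hB, f, hf, fun j => ?_⟩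
  convert mem_neg'.1 (hmem j) using 1
  rcases hf with rfl | rfl <;> simp only [f₁, f₂] <;> ring

theorem hasGrowingImage_of_sub_exp_mem {S Y : Finset ℝ} {c : ℝ} (hR : 0 < R)
    (hY : Spreads R (log R) Y n ∨ Spreads R (log R) (-Y) n) (hS : ∀ z ∈ Y, c - exp z ∈ S) :
    HasGrowingImage R (n + 1) S := by
  rcases hY with h | h <;> obtain ⟨C, b, hb, hmem⟩ := h.exists_rGrowing hR
  · refine ⟨b, hb, c, -exp C, by simp, f₂, Or.inr rfl, fun j => ?_⟩
    obtain ⟨hpos, hj⟩ := hmem j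
    simpa [f₂, exp_sub, exp_log hpos, neg_div, ← sub_eq_add_neg] using hS _ hj
  · refine ⟨b, hb, c, -exp (-C), by simp, f₁, Or.inl rfl, fun j => ?_⟩
    obtain ⟨hpos, hj⟩ := hmem j
    simpa [f₁, neg_add_eq_sub, sub_eq_add_neg, exp_add, exp_log hpos, mul_comm]
      using hS _ (mem_neg'.1 hj)

theorem spreads_or_spreads_neg_of_card_sub_one_le {Y : Finset ℝ} (hR : 100 ≤ R)
    (hsep : ∀ Y' ⊆ Y, Y'.Nonempty → ∃ u ∈ Y', ∃ v ∈ Y', (#Y' : ℝ) - 1 ≤ v - u)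
    (hcard : R ^ (2 * n + 1) ≤ #Y) :
    Spreads R (log R) Y n ∨ Spreads R (log R) (-Y) n := by
  -- The counts at the two ends multiply to `4 * log δ⁻¹ * log (1 - δ)⁻¹ * R ^ 2` to leading order.
  -- This exceeds `R ^ 2` at `δ = 1 / 2`, but not at `δ = 1 / 16`.
  have hlog16 : log (1 / 16 : ℝ)⁻¹ ≤ 3 := by
    rw [show (1 / 16 : ℝ)⁻¹ = 2 ^ 4 by norm_num, log_pow]
    push_cast
    linarith [log_two_lt_d9]
  have hlog15 : log (1 - 1 / 16 : ℝ)⁻¹ ≤ 1 / 15 :=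
    (log_le_sub_one_of_pos (by norm_num)).trans (by norm_num)
  refine spreads_or_spreads_neg (h := R) (δ := 1 / 16) (x := 2 * (R * 3 + 1))
    (y := 2 * (R * (1 / 15) + 1)) (by linarith) (log_nonneg (by linarith)) (by linarith)
    (by norm_num) (by norm_num) (by linarith) (by linarith) ?_ n n (fun Y' hY' hRY' => ?_) ?_
  · calc _ ≤ (R * 3 + 1) * (2 * (R * (1 / 15) + 1)) + (R * (1 / 15) + 1) * (2 * (R * 3 + 1)) := by
          gcongr
      _ = _ := by ring
  · have hpos : (0 : ℝ) < #Y' := by linarith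
    obtain ⟨u, hu, v, hv, huv⟩ := hsep Y' hY' (card_pos.1 (Nat.cast_pos.1 hpos))
    have hlogR : log R < R - 1 := log_lt_sub_one_of_pos (by linarith) (by linarith)
    exact ⟨u, hu, v, hv, by linarith⟩
  · calc _ = R * (2 * (R * 3 + 1) * (2 * (R * (1 / 15) + 1))) ^ n := by rw [mul_assoc, ← mul_pow]
      _ ≤ R * (R ^ 2) ^ n := by gcongr; nlinarith
      _ = R ^ (2 * n + 1) := by rw [pow_succ' R (2 * n), pow_mul]
      _ ≤ #Y := hcard

theorem hasGrowingImage_of_spreads {M : ℕ} {S : Finset ℝ} (hR : 100 ≤ R)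
    (hM : R ^ (2 * n + 1) ≤ M + 1) (h : Spreads (exp 1) 0 S M) :
    HasGrowingImage R (n + 1) S := by
  obtain ⟨c, y, hS, hy⟩ := h.exists_sub_exp_mem
  have hcard : #((Iic M).image y) = M + 1 := by
    rw [card_image_of_injOn (by simpa using (strictMonoOn_of_add_one_le hy).injOn), Nat.card_Iic]
  refine hasGrowingImage_of_sub_exp_mem (Y := (Iic M).image y) (c := c) (by linarith) ?_
    fun z hz => ?_
  · refine spreads_or_spreads_neg_of_card_sub_one_le hR
      (fun Y' hY' hne => exists_card_sub_one_le_sub hy hY' hne) ?_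
    rw [hcard]
    exact_mod_cast hM
  · obtain ⟨i, hi, rfl⟩ := mem_image.1 hz
    exact hS i (mem_Iic.1 hi)

theorem spreads_or_spreads_neg_exp_one {M : ℕ} {S : Finset ℝ} (hS : 2 ^ (6 * M + 1) ≤ #S) :
    Spreads (exp 1) 0 S M ∨ Spreads (exp 1) 0 (-S) M := by
  have hlog : exp 1 * log 2 ≤ 2 := by
    nlinarith [exp_one_lt_d9, log_two_lt_d9, log_two_gt_d9, exp_pos 1]
  refine spreads_or_spreads_neg (h := 2) (δ := 1 / 2) (x := 6) (y := 6) (exp_pos 1) le_rfl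
    zero_le_two (by norm_num) (by norm_num) (by norm_num) (by norm_num) ?_ M M
    (fun S' _ hS' => ?_) ?_
  · norm_num
    linarith
  · have hone : 1 < #S' := by exact_mod_cast hS'
    exact ⟨_, S'.min'_mem _, _, S'.max'_mem _, sub_pos.2 (min'_lt_max'_of_card S' hone)⟩
  · calc (2 : ℝ) * 6 ^ M * 6 ^ M = 2 * 36 ^ M := by rw [mul_assoc, ← mul_pow]; norm_num
      _ ≤ 2 * 64 ^ M := by gcongr; norm_num
      _ = 2 ^ (6 * M + 1) := by rw [pow_succ', pow_mul]; norm_num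
      _ ≤ #S := by exact_mod_cast hS

theorem hasGrowingImage_of_two_pow_le_card {M : ℕ} {S : Finset ℝ} (hR : 100 ≤ R)
    (hM : R ^ (2 * n + 1) ≤ M + 1) (hS : 2 ^ (6 * M + 1) ≤ #S) : HasGrowingImage R (n + 1) S :=
  (spreads_or_spreads_neg_exp_one hS).elim (hasGrowingImage_of_spreads hR hM)
    fun h => (hasGrowingImage_of_spreads hR hM h).of_neg

end Growing

theorem exists_le_card_fiber_or_exists_injOn {α β : Type*} [DecidableEq β] (n k : ℕ)
    (s : Finset α) (f : α → β) (hs : n * k < #s) :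
    (∃ c, n ≤ #{i ∈ s | f i = c}) ∨ ∃ t ⊆ s, Set.InjOn f t ∧ k < #t := by
  by_contra! ⟨hfiber, hinj⟩
  obtain ⟨t, hts, ht, himage⟩ := exists_subset_injOn_image_eq_of_surjOn (s := (s : Set α))
    (s.image f) (f := f) (by simp [Set.SurjOn])
  have hle := card_le_mul_card_image s n fun c _ => (hfiber c).le
  rw [← himage, card_image_of_injOn ht] at hle
  exact (hs.trans_le (hle.trans (Nat.mul_le_mul_left n (hinj t (by simpa using hts) ht)))).false

section MonotoneSubsequence

variable {α β : Type*} [LinearOrder α] [LinearOrder β] {f : α → β}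

theorem exists_monotoneOn_or_strictAntiOn (k m : ℕ) (s : Finset α) (hs : k * m < #s) :
    ∃ t ⊆ s, (k < #t ∧ MonotoneOn f t) ∨ (m < #t ∧ StrictAntiOn f t) := by
  induction k generalizing s with
  | zero =>
    obtain ⟨x, hx⟩ := card_pos.1 (show 0 < #s by omega)
    exact ⟨{x}, by simpa using hx, Or.inl (by simp)⟩
  | succ k ih =>
    -- The strict left-to-right minima: every other point of `s` may be preceded by a `j ∈ s` with
    -- `f j` no larger.
    set J := s.filter fun i => ∀ j ∈ s, j < i → f i < f j
    have hJs : J ⊆ s := filter_subset _ _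
    rcases lt_or_ge m #J with hJ | hJ
    · exact ⟨J, hJs, Or.inr ⟨hJ, fun i hi j hj hij => (mem_filter.1 hj).2 i (hJs hi) hij⟩⟩
    have hcard : k * m < #(s \ J) := by
      rw [card_sdiff_of_subset hJs]
      rw [Nat.succ_mul] at hs
      omega
    obtain ⟨t, ht, ⟨hk, hmono⟩ | h⟩ := ih (s \ J) hcard
    · have hne : t.Nonempty := card_pos.1 (by omega)
      have hmin := t.min'_mem hne
      obtain ⟨j, hj, hjt, hfj⟩ : ∃ j ∈ s, j < t.min' hne ∧ f j ≤ f (t.min' hne) := by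
        simpa [J, (mem_sdiff.1 (ht hmin)).1] using (mem_sdiff.1 (ht hmin)).2
      have hlt : ∀ i ∈ t, j < i := fun i hi => hjt.trans_le (t.min'_le i hi)
      refine ⟨insert j t, insert_subset hj (ht.trans sdiff_subset), Or.inl ⟨?_, ?_⟩⟩
      · rw [card_insert_of_notMem fun h => (hlt j h).false]
        omega
      · rw [coe_insert, Set.monotoneOn_insert_iff]
        exact ⟨fun i hi hij => absurd hij (hlt i hi).not_ge,
          fun i hi _ => hfj.trans (hmono hmin hi (t.min'_le i hi)), hmono⟩
    · exact ⟨t, ht.trans sdiff_subset, Or.inr h⟩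

theorem exists_strictMono_apply_eq_or_apply_eq_rev {s : Finset α} {n : ℕ} {v : Fin n → β}
    (hf : MonotoneOn f s ∨ AntitoneOn f s) (hv : StrictMono v ∨ StrictAnti v)
    (hmem : ∀ j, v j ∈ s.image f) :
    ∃ φ : Fin n → α, StrictMono φ ∧ ((∀ j, f (φ j) = v j) ∨ ∀ j, f (φ j) = v j.rev) := by
  choose t ht hft using fun j => mem_image.1 (hmem j)
  have htv : StrictMono t ∨ StrictAnti t := by
    obtain rfl : f ∘ t = v := funext hft
    rcases hf with hf | hf <;> rcases hv with hv | hv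
    · exact Or.inl fun i j hij => hf.reflect_lt (ht i) (ht j) (hv hij)
    · exact Or.inr fun i j hij => hf.reflect_lt (ht j) (ht i) (hv hij)
    · exact Or.inr fun i j hij => hf.reflect_lt (ht i) (ht j) (hv hij)
    · exact Or.inl fun i j hij => hf.reflect_lt (ht j) (ht i) (hv hij)
  rcases htv with h | h
  · exact ⟨t, h, Or.inl hft⟩
  · exact ⟨t ∘ Fin.rev, h.comp Fin.rev_strictAnti, Or.inr fun j => hft j.rev⟩

end MonotoneSubsequence

theorem strictMono_or_strictAnti_f₁ {ι : Type*} [Preorder ι] {g : ι → ℝ}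
    (hg : StrictMono g ∨ StrictAnti g) (A : ℝ) {B : ℝ} (hB : B ≠ 0) :
    StrictMono (fun j => f₁ (g j) A B) ∨ StrictAnti fun j => f₁ (g j) A B := by
  unfold f₁
  rcases hB.lt_or_gt with hB | hB <;> rcases hg with hg | hg
  · exact Or.inr ((hg.const_mul_of_neg hB).const_add A)
  · exact Or.inl ((hg.const_mul_of_neg hB).const_add A)
  · exact Or.inl ((hg.const_mul hB).const_add A)
  · exact Or.inr ((hg.const_mul hB).const_add A)

theorem strictMono_or_strictAnti_f₂ {ι : Type*} [Preorder ι] {g : ι → ℝ} (hpos : ∀ j, 0 < g j)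
    (hg : StrictMono g) (A : ℝ) {B : ℝ} (hB : B ≠ 0) :
    StrictMono (fun j => f₂ (g j) A B) ∨ StrictAnti fun j => f₂ (g j) A B :=
  strictMono_or_strictAnti_f₁ (g := fun j => (g j)⁻¹)
    (Or.inr fun i j hij => inv_strictAntiOn (hpos i) (hpos j) (hg hij)) A hB

theorem mul_two_pow_mul_two_pow_lt {X : ℝ} {n M : ℕ} (hn : n ≤ X) (hM : M ≤ X) (hX : 1 ≤ X) :
    ((n * (2 ^ (6 * M + 1) * 2 ^ (6 * M + 1)) : ℕ) : ℝ) < 2 ^ (15 * X) := by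
  have hexp : ((n + 12 * M + 2 : ℕ) : ℝ) ≤ 15 * X := by
    push_cast
    linarith
  calc ((n * (2 ^ (6 * M + 1) * 2 ^ (6 * M + 1)) : ℕ) : ℝ)
      < (2 ^ n * (2 ^ (6 * M + 1) * 2 ^ (6 * M + 1)) : ℕ) := by
        gcongr
        exact Nat.lt_two_pow_self
    _ = 2 ^ ((n + 12 * M + 2 : ℕ) : ℝ) := by
        rw [rpow_natCast]
        push_cast
        ring
    _ ≤ 2 ^ (15 * X) := rpow_le_rpow_of_exponent_le one_le_two hexp

theorem exists_mul_two_pow_mul_two_pow_lt_ceil {R : ℝ} (hR : 100 ≤ R) (n : ℕ) :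
    ∃ M : ℕ, R ^ (2 * n + 1) ≤ M + 1 ∧
      (n + 1) * (2 ^ (6 * M + 1) * 2 ^ (6 * M + 1)) <
        ⌈(2 : ℝ) ^ (R ^ (2 * ((n + 1 : ℕ) : ℝ)))⌉₊ := by
  have hbernoulli : 1 + ((2 * n + 1 : ℕ) : ℝ) * (R - 1) ≤ R ^ (2 * n + 1) := by
    simpa using one_add_mul_le_pow (a := R - 1) (by linarith) (2 * n + 1)
  have hn : ((n + 1 : ℕ) : ℝ) ≤ R ^ (2 * n + 1) := by
    refine le_trans ?_ hbernoulli
    push_cast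
    nlinarith [Nat.cast_nonneg (α := ℝ) n]
  have hexp : 15 * R ^ (2 * n + 1) ≤ R ^ (2 * ((n + 1 : ℕ) : ℝ)) := by
    rw [show 2 * ((n + 1 : ℕ) : ℝ) = ((2 * n + 1 + 1 : ℕ) : ℝ) by push_cast; ring, rpow_natCast,
      pow_succ' R (2 * n + 1)]
    gcongr
    linarith
  refine ⟨⌊R ^ (2 * n + 1)⌋₊, (Nat.lt_floor_add_one _).le, Nat.lt_ceil.2 ?_⟩
  exact (mul_two_pow_mul_two_pow_lt hn (Nat.floor_le (by positivity))
    (one_le_pow₀ (by linarith))).trans_le (rpow_le_rpow_of_exponent_le one_le_two hexp)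

/-- there is `R₀` such that for all `R ≥ R₀`, `n ≥ 1`, and
`N = ⌈2^(R^(2n))⌉`, every `N`-term real sequence admits an `R`-growing sequence `b` of
length `n`, parameters `A, B ∈ ℝ`, and `f ∈ {f₁, f₂}` such that the image of `b` or of
its reversal under `f(·, A, B)` is a subsequence of the given sequence. -/
theorem stmt7 :
    ∃ R₀ : ℝ, ∀ R : ℝ, R₀ ≤ R → ∀ n : ℕ, 1 ≤ n → ∀ N : ℕ,
      N = ⌈(2 : ℝ) ^ (R ^ (2 * (n : ℝ)))⌉₊ →
      ∀ a : Fin N → ℝ, ∃ b : Fin n → ℝ, RGrowing R b ∧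
        ∃ A B : ℝ, ∃ f : ℝ → ℝ → ℝ → ℝ, (f = f₁ ∨ f = f₂) ∧
          ∃ φ : Fin n → Fin N, StrictMono φ ∧
            ((∀ j : Fin n, a (φ j) = f (b j) A B) ∨
             (∀ j : Fin n, a (φ j) = f (b j.rev) A B)) := by
  refine ⟨100, fun R hR n hn N hN a => ?_⟩
  obtain ⟨n, rfl⟩ := Nat.exists_eq_add_of_le' hn
  obtain ⟨M, hM, hMN⟩ := exists_mul_two_pow_mul_two_pow_lt_ceil hR n
  rcases exists_le_card_fiber_or_exists_injOn (n + 1) _ univ a (by simpa [hN] using hMN) with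
    ⟨c, hc⟩ | ⟨I, -, hinj, hI⟩
  · obtain ⟨b, hb⟩ := exists_rGrowing R (n + 1)
    refine ⟨b, hb, c, 0, f₁, Or.inl rfl, orderEmbOfCardLe _ hc, OrderEmbedding.strictMono _,
      Or.inl fun j => ?_⟩
    simpa [f₁] using (mem_filter.1 (orderEmbOfCardLe_mem _ hc j)).2
  · obtain ⟨T, hTI, hT⟩ := exists_monotoneOn_or_strictAntiOn (f := a) _ _ I hI
    have hTcard : 2 ^ (6 * M + 1) ≤ #(T.image a) := by
      rw [card_image_of_injOn (hinj.mono hTI)]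
      exact (hT.elim And.left And.left).le
    obtain ⟨b, hb, A, B, hB, f, hf, hmem⟩ := hasGrowingImage_of_two_pow_le_card hR hM hTcard
    have hmono : StrictMono b := hb.strictMono (by linarith)
    have hpos : ∀ j, 0 < b j := fun j => zero_lt_one.trans (hb.one_lt (by linarith) j)
    refine ⟨b, hb, A, B, f, hf, exists_strictMono_apply_eq_or_apply_eq_rev
      (hT.imp And.right fun h => h.2.antitoneOn) ?_ hmem⟩
    rcases hf with rfl | rfl
    exacts [strictMono_or_strictAnti_f₁ (Or.inl hmono) A hB,
      strictMono_or_strictAnti_f₂ hpos hmono A hB]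
end
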